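/- Inhomogeneous boundary Harnack inequality in half-balls. For every integer n ≥ 2, reals 0 < λ ≤ Λ, exponents q > n and p with n ≤ p ≤ q, d₀ ∈ (0,1/4], and K > 0, there exists a constant C > 0 such that the following holds. Let b, f : B₂⁺ → ℝ be continuous with b ≥ 0 and ‖b‖_{L^q(B₂⁺)} ≤ K, and let u be continuous on B₂⁺ ∪ B₂⁰ and C² on B₂⁺, with L⁻[u] ≤ f⁺ and L⁺[u] ≥ −f⁻ in B₂⁺, u > 0 in B₂⁺, and u = 0 on B₂⁰. Then sup_{x ∈ B₁⁺} u(x)/x_n ≤ C·( inf_{x ∈ B_{3/2}⁺} u(x)/x_n + ‖f‖_{L^{p,q}(B₂⁺)} ). -/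

import Mathlib

open MeasureTheory
open scoped ENNReal

/-- The Pucci minimal extremal operator `𝓜⁻(M)` with ellipticity constants `lam ≤ Lam`:
the infimum of `tr(A*M)` over symmetric matrices `A` with `lam•I ≤ A ≤ Lam•I`. -/
noncomputable def pucciMinus (n : ℕ) (lam Lam : ℝ) (M : Matrix (Fin n) (Fin n) ℝ) : ℝ :=
  sInf { t : ℝ | ∃ A : Matrix (Fin n) (Fin n) ℝ, A.IsSymm ∧
    (A - lam • (1 : Matrix (Fin n) (Fin n) ℝ)).PosSemidef ∧
    (Lam • (1 : Matrix (Fin n) (Fin n) ℝ) - A).PosSemidef ∧ t = (A * M).trace }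

/-- The Pucci maximal extremal operator `𝓜⁺(M)`. -/
noncomputable def pucciPlus (n : ℕ) (lam Lam : ℝ) (M : Matrix (Fin n) (Fin n) ℝ) : ℝ :=
  sSup { t : ℝ | ∃ A : Matrix (Fin n) (Fin n) ℝ, A.IsSymm ∧
    (A - lam • (1 : Matrix (Fin n) (Fin n) ℝ)).PosSemidef ∧
    (Lam • (1 : Matrix (Fin n) (Fin n) ℝ) - A).PosSemidef ∧ t = (A * M).trace }

/-- The Hessian matrix `D²u(x)` of `u` at `x`. -/
noncomputable def hess (n : ℕ) (u : EuclideanSpace ℝ (Fin n) → ℝ)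
    (x : EuclideanSpace ℝ (Fin n)) : Matrix (Fin n) (Fin n) ℝ :=
  fun i j => fderiv ℝ (fun y => fderiv ℝ u y (EuclideanSpace.single j (1 : ℝ))) x
    (EuclideanSpace.single i (1 : ℝ))

/-- The euclidean norm `|Du(x)|` of the gradient of `u` at `x`. -/
noncomputable def gradNorm (n : ℕ) (u : EuclideanSpace ℝ (Fin n) → ℝ)
    (x : EuclideanSpace ℝ (Fin n)) : ℝ := ‖fderiv ℝ u x‖

/-- The `L^p` norm `(∫_E |g|^p)^(1/p)`, as a Lebesgue integral valued in `[0,∞]`. -/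
noncomputable def LpNormE (n : ℕ) (p : ℝ) (g : EuclideanSpace ℝ (Fin n) → ℝ)
    (E : Set (EuclideanSpace ℝ (Fin n))) : ℝ≥0∞ :=
  (∫⁻ x in E, ENNReal.ofReal (|g x| ^ p)) ^ (1 / p)

/-- The last (`n`-th) coordinate `x_n` of a point of `ℝⁿ`. -/
def lastC (n : ℕ) (hn : 1 ≤ n) (x : EuclideanSpace ℝ (Fin n)) : ℝ := x ⟨n - 1, by omega⟩

/-- The open half-ball `B_R⁺ = {|x| < R, x_n > 0}`. -/
def halfBall (n : ℕ) (hn : 1 ≤ n) (R : ℝ) : Set (EuclideanSpace ℝ (Fin n)) :=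
  {x | ‖x‖ < R ∧ 0 < lastC n hn x}

/-- The flat boundary part `B_R⁰ = {|x| ≤ R, x_n = 0}`. -/
def flatB (n : ℕ) (hn : 1 ≤ n) (R : ℝ) : Set (EuclideanSpace ℝ (Fin n)) :=
  {x | ‖x‖ ≤ R ∧ lastC n hn x = 0}

/-- The norm `‖g‖_{L^{p,q}(B_R⁺)} = ‖g‖_{L^p(B_R⁺)} + ‖g‖_{L^q(B_R⁺ ∩ {x_n < d0})}`. -/
noncomputable def LpqNormHB (n : ℕ) (hn : 1 ≤ n) (p q d0 R : ℝ)
    (g : EuclideanSpace ℝ (Fin n) → ℝ) : ℝ≥0∞ :=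
  LpNormE n p g (halfBall n hn R) +
    LpNormE n q g {x ∈ halfBall n hn R | lastC n hn x < d0}

/-- The open cube `Q_ρ` of side `ρ` centered at `(0,…,0,ρ/2)`. -/
def cubeQ (n : ℕ) (hn : 1 ≤ n) (ρ : ℝ) : Set (EuclideanSpace ℝ (Fin n)) :=
  {x | (∀ i : Fin n, i.1 ≠ n - 1 → |x i| < ρ / 2) ∧ 0 < lastC n hn x ∧ lastC n hn x < ρ}

/-- The norm `‖g‖_{L^{p,q}(Q₂)} = ‖g‖_{L^p(Q₂)} + ‖g‖_{L^q(Q₂ ∩ {x_n < d0})}`. -/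
noncomputable def LpqNormQ (n : ℕ) (hn : 1 ≤ n) (p q d0 : ℝ)
    (g : EuclideanSpace ℝ (Fin n) → ℝ) : ℝ≥0∞ :=
  LpNormE n p g (cubeQ n hn 2) +
    LpNormE n q g {x ∈ cubeQ n hn 2 | lastC n hn x < d0}

section
open MeasureTheory
open scoped ENNReal


namespace BH

abbrev E (n : ℕ) := EuclideanSpace ℝ (Fin n)

/-- second directional derivative -/
noncomputable def D2 {n : ℕ} (w : E n → ℝ) (x v : E n) : ℝ := fderiv ℝ (fderiv ℝ w) x v v

/-- `𝓜⁺(D²w(x)) ≥ -h`, expressed with orthonormal frames. -/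
def Ell {n : ℕ} (lam Lam : ℝ) (w : E n → ℝ) (x : E n) (h : ℝ) : Prop :=
  ∀ ε > 0, ∃ (ξ : OrthonormalBasis (Fin n) ℝ (E n)) (a : Fin n → ℝ),
    (∀ k, lam ≤ a k ∧ a k ≤ Lam) ∧ -h - ε ≤ ∑ k, a k * D2 w x (ξ k)

/-- The Hessian operator. -/
noncomputable def hop {n : ℕ} (w : E n → ℝ) (x : E n) : E n →L[ℝ] E n :=
  ((InnerProductSpace.toDual ℝ (E n)).symm.toContinuousLinearEquiv.toContinuousLinearMap).comp
    (fderiv ℝ (fderiv ℝ w) x)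

/-- Laplacian -/
noncomputable def lap {n : ℕ} (w : E n → ℝ) (x : E n) : ℝ :=
  LinearMap.trace ℝ (E n) (hop w x).toLinearMap

variable {n : ℕ}

lemma hop_inner (w : E n → ℝ) (x v z : E n) :
    inner ℝ (hop w x v) z = fderiv ℝ (fderiv ℝ w) x v z := by
  simp [hop]

lemma lap_eq (w : E n → ℝ) (x : E n) (ξ : OrthonormalBasis (Fin n) ℝ (E n)) :
    lap w x = ∑ k, D2 w x (ξ k) := by
  rw [lap, LinearMap.trace_eq_sum_inner _ ξ]
  refine Finset.sum_congr rfl fun k _ => ?_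
  rw [real_inner_comm]
  exact hop_inner w x (ξ k) (ξ k)

lemma diff_fderiv {w : E n → ℝ} {x : E n} (h : ContDiffAt ℝ 2 w x) :
    DifferentiableAt ℝ (fderiv ℝ w) x :=
  (h.fderiv_right (m := 1) (by norm_num)).differentiableAt (by norm_num)

lemma hop_symm {w : E n → ℝ} {x : E n} (h : ContDiffAt ℝ 2 w x) :
    (hop w x).toLinearMap.IsSymmetric := by
  intro v z
  have := h.isSymmSndFDerivAt (by simp)
  change inner ℝ (hop w x v) z = inner ℝ v (hop w x z)
  rw [hop_inner, real_inner_comm, hop_inner]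
  exact this v z

lemma det_hop_le {w : E n → ℝ} {x : E n} (h : ContDiffAt ℝ 2 w x) (hneg : ∀ v, D2 w x v ≤ 0) :
    |(hop w x).det| ≤ (-lap w x) ^ n := by
  have hs := hop_symm h
  have hf : Module.finrank ℝ (E n) = n := by simp
  have hd := hs.det_eq_prod_eigenvalues hf
  have e1 : (hop w x).det = ∏ i, hs.eigenvalues hf i := by
    rw [ContinuousLinearMap.det]; exact_mod_cast hd
  have hev : ∀ i, hs.eigenvalues hf i = D2 w x (hs.eigenvectorBasis hf i) := by
    intro i
    have h1 := hs.apply_eigenvectorBasis hf i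
    have h2 : inner ℝ (hop w x (hs.eigenvectorBasis hf i)) (hs.eigenvectorBasis hf i)
      = hs.eigenvalues hf i := by
      have h3 : hop w x (hs.eigenvectorBasis hf i) =
        (hs.eigenvalues hf i) • (hs.eigenvectorBasis hf i) := h1
      rw [h3, real_inner_smul_left, real_inner_self_eq_norm_sq]
      simp
    rw [← h2, hop_inner]; rfl
  have hl : lap w x = ∑ i, hs.eigenvalues hf i := by
    rw [lap_eq w x (hs.eigenvectorBasis hf)]
    exact Finset.sum_congr rfl fun i _ => (hev i).symm
  rw [e1, Finset.abs_prod]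
  calc ∏ i, |hs.eigenvalues hf i| ≤ ∏ _i : Fin n, (-lap w x) := by
        apply Finset.prod_le_prod
        · intros; positivity
        · intro i _
          rw [abs_of_nonpos (by rw [hev]; exact hneg _), hl, ← Finset.sum_neg_distrib]
          exact Finset.single_le_sum (f := fun i => - hs.eigenvalues hf i)
            (fun j _ => by rw [hev]; linarith [hneg (hs.eigenvectorBasis hf j)]) (Finset.mem_univ i)
    _ = _ := by simp

lemma second_deriv_nonpos_of_contact {w : E n → ℝ} {x : E n} (h : ContDiffAt ℝ 2 w x)
    (hc : ∀ᶠ y in nhds x, w y ≤ w x + fderiv ℝ w x (y - x)) (v : E n) : D2 w x v ≤ 0 := by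
  -- one dimensional function
  set L := fderiv ℝ w x with hL
  by_contra hpos
  push Not at hpos
  -- g(t) = w(x+tv) - w x - t L v
  have hline : Filter.Tendsto (fun t : ℝ => x + t • v) (nhds 0) (nhds x) := by
    have : Continuous (fun t : ℝ => x + t • v) := by fun_prop
    simpa using this.tendsto 0
  have hd1 : ∀ᶠ y in nhds x, DifferentiableAt ℝ w y := by
    have := h.eventually (by simp)
    filter_upwards [this] with y hy using hy.differentiableAt (by norm_num)
  let g : ℝ → ℝ := fun t => w (x + t • v) - w x - t * L v
  have hg1 : ∀ᶠ t in nhds (0:ℝ), HasDerivAt g (fderiv ℝ w (x + t • v) v - L v) t := by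
    filter_upwards [hline.eventually hd1] with t ht
    have h2 : HasDerivAt (fun t : ℝ => x + t • v) v t := by
      simpa using ((hasDerivAt_id t).smul_const v).const_add x
    have h3 : HasDerivAt (fun t => w (x + t • v)) (fderiv ℝ w (x + t • v) v) t :=
      HasFDerivAt.comp_hasDerivAt (f := fun t : ℝ => x + t • v) (l := w) t ht.hasFDerivAt h2
    have h4 := (h3.sub_const (w x)).sub ((hasDerivAt_id t).mul_const (L v))
    rw [one_mul] at h4
    exact h4
  have hg2 : HasDerivAt (fun t : ℝ => fderiv ℝ w (x + t • v) v - L v) (D2 w x v) 0 := by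
    have h2 : HasDerivAt (fun t : ℝ => x + t • v) v 0 := by
      simpa using ((hasDerivAt_id (0:ℝ)).smul_const v).const_add x
    have h3 := (diff_fderiv h).hasFDerivAt
    have h3' : HasFDerivAt (fderiv ℝ w) (fderiv ℝ (fderiv ℝ w) x) (x + (0:ℝ) • v) := by
      simpa using h3
    have h4 : HasDerivAt (fun t : ℝ => fderiv ℝ w (x + t • v)) (fderiv ℝ (fderiv ℝ w) x v) 0 :=
      HasFDerivAt.comp_hasDerivAt (f := fun t : ℝ => x + t • v) (l := fderiv ℝ w) 0 h3' h2
    have h5 := (ContinuousLinearMap.apply ℝ ℝ v).hasFDerivAt.comp_hasDerivAt 0 h4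
    exact (h5.sub_const (L v))
  have hdg : deriv g =ᶠ[nhds 0] fun t : ℝ => fderiv ℝ w (x + t • v) v - L v := by
    filter_upwards [hg1] with t ht using ht.deriv
  have hmin : IsLocalMin g 0 := by
    apply isLocalMin_of_deriv_deriv_pos
    · rw [hdg.deriv_eq, hg2.deriv]; exact hpos
    · rw [hdg.self_of_nhds]; simp [L]
    · exact hg1.self_of_nhds.continuousAt
  -- g ≤ 0 = g 0, so g is constant near 0
  have hle : ∀ᶠ t in nhds (0:ℝ), g t ≤ 0 := by
    filter_upwards [hline.eventually hc] with t ht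
    have : L (x + t • v - x) = t * L v := by simp
    simp only [g]; rw [this] at ht; linarith
  have hg0 : g 0 = 0 := by simp [g]
  have hz : g =ᶠ[nhds 0] fun _ => (0:ℝ) := by
    filter_upwards [hle, hmin] with t h1 h2
    rw [hg0] at h2; linarith
  have : deriv (deriv g) 0 = 0 := by
    have h1 : deriv g =ᶠ[nhds 0] deriv (fun _ => (0:ℝ)) := hz.deriv
    rw [h1.deriv_eq]; simp
  rw [hdg.deriv_eq, hg2.deriv] at this
  linarith

end BH


namespace BH
variable {n : ℕ}

lemma lap_nonpos {W : E n → ℝ} {x : E n} (hneg : ∀ v, D2 W x v ≤ 0) : 0 ≤ -lap W x := by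
  rw [lap_eq W x (EuclideanSpace.basisFun (Fin n) ℝ), ← Finset.sum_neg_distrib]
  exact Finset.sum_nonneg fun i _ => by linarith [hneg (EuclideanSpace.basisFun (Fin n) ℝ i)]

open Metric in
/-- Alexandrov–Bakelman–Pucci: geometric core. -/
lemma abp_core (c : E n) (R : ℝ) (hR : 0 < R) (W : E n → ℝ)
    (hcont : ContinuousOn W (closedBall c R)) (hs : ∀ x ∈ sphere c R, W x ≤ 0)
    (hC : ∀ x ∈ ball c R, 0 < W x → ContDiffAt ℝ 2 W x)
    (x0 : E n) (hx0 : x0 ∈ closedBall c R) (m : ℝ) (hm : 0 < m) (hmx : m ≤ W x0) :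
    ∃ Γ : Set (E n), MeasurableSet Γ ∧
      (∀ x ∈ Γ, x ∈ ball c R ∧ 0 < W x ∧
        (∀ y ∈ closedBall c R, W y ≤ W x + fderiv ℝ W x (y - x)) ∧
        ‖fderiv ℝ W x‖ < m / (2 * R) ∧ (∀ v, D2 W x v ≤ 0)) ∧
      volume (ball (0 : E n) (m / (2 * R))) ≤ ∫⁻ x in Γ, ENNReal.ofReal (-lap W x) ^ n := by
  set U : Set (E n) := {x | x ∈ ball c R ∧ 0 < W x} with hU
  have hcb : ContinuousOn W (ball c R) := hcont.mono ball_subset_closedBall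
  have hUo : IsOpen U := by
    have := hcb.isOpen_inter_preimage isOpen_ball (isOpen_Ioi (a := (0:ℝ)))
    exact this
  have hCU : ∀ x ∈ U, ContDiffAt ℝ 2 W x := fun x hx => hC x hx.1 hx.2
  have hW : ContinuousOn W U := hcb.mono fun x hx => hx.1
  have hdW : ContinuousOn (fderiv ℝ W) U := fun x hx =>
    (diff_fderiv (hCU x hx)).continuousAt.continuousWithinAt
  set Γ : Set (E n) := {x | x ∈ U ∧ (∀ y ∈ closedBall c R, W y ≤ W x + fderiv ℝ W x (y - x)) ∧
        ‖fderiv ℝ W x‖ < m / (2 * R)} with hΓ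
  have hprop : ∀ x ∈ Γ, x ∈ ball c R ∧ 0 < W x ∧
        (∀ y ∈ closedBall c R, W y ≤ W x + fderiv ℝ W x (y - x)) ∧
        ‖fderiv ℝ W x‖ < m / (2 * R) ∧ (∀ v, D2 W x v ≤ 0) := by
    rintro x ⟨⟨hx1, hx2⟩, hx3, hx4⟩
    refine ⟨hx1, hx2, hx3, hx4, fun v => ?_⟩
    apply second_deriv_nonpos_of_contact (hC x hx1 hx2)
    filter_upwards [isOpen_ball.mem_nhds hx1] with y hy using hx3 y (ball_subset_closedBall hy)
  have hmeas : MeasurableSet Γ := by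
    have h1 : IsClosed {x : U | ∀ y ∈ closedBall c R,
        W y ≤ W x + fderiv ℝ W x (y - (x : E n))} := by
      have : {x : U | ∀ y ∈ closedBall c R,
        W y ≤ W x + fderiv ℝ W x (y - (x : E n))} = ⋂ y ∈ closedBall c R,
          {x : U | W y ≤ W x + fderiv ℝ W x (y - (x : E n))} := by ext; simp
      rw [this]
      refine isClosed_biInter fun y _ => ?_
      have c1 : Continuous fun x : U => W x := continuousOn_iff_continuous_domRestrict.1 hW
      have c2 : Continuous fun x : U => fderiv ℝ W x := continuousOn_iff_continuous_domRestrict.1 hdW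
      exact isClosed_le continuous_const (c1.add (c2.clm_apply (by fun_prop)))
    have h2 : IsOpen {x : U | ‖fderiv ℝ W x‖ < m / (2 * R)} := by
      have c2 : Continuous fun x : U => fderiv ℝ W x := continuousOn_iff_continuous_domRestrict.1 hdW
      exact isOpen_lt c2.norm continuous_const
    have h3 := (h1.measurableSet.inter h2.measurableSet)
    have h4 := MeasurableSet.subtype_image hUo.measurableSet h3
    convert h4 using 1
    ext x
    simp only [hΓ, Set.mem_setOf_eq, Set.mem_image, Set.mem_inter_iff]
    constructor
    · rintro ⟨a, b, c⟩; exact ⟨⟨x, a⟩, ⟨b, c⟩, rfl⟩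
    · rintro ⟨⟨y, hy⟩, ⟨b, c⟩, rfl⟩; exact ⟨hy, b, c⟩
  refine ⟨Γ, hmeas, hprop, ?_⟩
  let J := (InnerProductSpace.toDual ℝ (E n)).symm
  let G : E n → E n := fun x => J (fderiv ℝ W x)
  have hGd : ∀ x ∈ Γ, HasFDerivWithinAt G (hop W x) Γ x := by
    intro x hx
    have h1 := (diff_fderiv (hCU x hx.1)).hasFDerivAt
    exact (J.toContinuousLinearEquiv.toContinuousLinearMap.hasFDerivAt.comp x h1).hasFDerivWithinAt
  have hcover : ball (0 : E n) (m / (2 * R)) ⊆ G '' Γ := by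
    intro p hp
    rw [mem_ball_zero_iff] at hp
    obtain ⟨x1, hx1, hmax⟩ := (isCompact_closedBall c R).exists_isMaxOn
      ⟨x0, hx0⟩ (f := fun y => W y - inner ℝ p (y - x0)) (by
        apply hcont.sub; fun_prop)
    have hmax' : ∀ y ∈ closedBall c R, W y - inner ℝ p (y - x0) ≤ W x1 - inner ℝ p (x1 - x0) :=
      fun y hy => hmax hy
    have hge := hmax' x0 hx0
    simp only [sub_self, inner_zero_right, sub_zero] at hge
    have hin : |inner ℝ p (x1 - x0)| ≤ ‖p‖ * (2 * R) := by
      refine (abs_real_inner_le_norm _ _).trans ?_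
      gcongr
      rw [← dist_eq_norm]
      have := dist_triangle_right x1 x0 c
      rw [mem_closedBall] at hx1 hx0
      linarith
    have hlt : ‖p‖ * (2 * R) < m := by
      rwa [lt_div_iff₀ (by positivity)] at hp
    have hpos : 0 < W x1 := by
      have := abs_le.1 hin
      linarith [this.1]
    have hball : x1 ∈ ball c R := by
      rcases lt_or_eq_of_le (mem_closedBall.1 hx1) with h | h
      · exact h
      · exact absurd (hs x1 h) (not_le.2 hpos)
    have hCx := hC x1 hball hpos
    have hdw : DifferentiableAt ℝ W x1 := hCx.differentiableAt (by norm_num)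
    have hloc : IsLocalMax (fun y => W y - inner ℝ p (y - x0)) x1 := by
      filter_upwards [isOpen_ball.mem_nhds hball] with y hy using hmax' y (ball_subset_closedBall hy)
    have hder : HasFDerivAt (fun y => W y - inner ℝ p (y - x0))
        (fderiv ℝ W x1 - innerSL ℝ p) x1 := by
      apply hdw.hasFDerivAt.sub
      have h1 := (innerSL ℝ p).hasFDerivAt (x := x1 - x0)
      have h2 := h1.comp x1 ((hasFDerivAt_id x1).sub_const x0)
      exact h2
    have hz := hloc.hasFDerivAt_eq_zero hder
    have heq : fderiv ℝ W x1 = innerSL ℝ p := sub_eq_zero.1 hz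
    have heq' : fderiv ℝ W x1 = InnerProductSpace.toDual ℝ (E n) p := by
      rw [heq]; ext v; simp
    refine ⟨x1, ⟨⟨hball, hpos⟩, fun y hy => ?_, ?_⟩, ?_⟩
    · have := hmax' y hy
      rw [heq]
      have e : inner ℝ p (y - x1) = inner ℝ p (y - x0) - inner ℝ p (x1 - x0) := by
        rw [← inner_sub_right]; congr 1; abel
      simp only [innerSL_apply_apply]
      rw [e]; linarith
    · rw [heq']; simpa using hp
    · simp only [G, J]; rw [heq']; simp
  calc volume (ball (0 : E n) (m / (2 * R))) ≤ volume (G '' Γ) := measure_mono hcover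
    _ ≤ ∫⁻ x in Γ, ENNReal.ofReal |(hop W x).det| :=
        addHaar_image_le_lintegral_abs_det_fderiv _ hmeas hGd
    _ ≤ ∫⁻ x in Γ, ENNReal.ofReal (-lap W x) ^ n := by
        apply setLIntegral_mono' hmeas
        intro x hx
        have hl : 0 ≤ -lap W x := lap_nonpos (hprop x hx).2.2.2.2
        rw [← ENNReal.ofReal_pow hl]
        exact ENNReal.ofReal_le_ofReal (det_hop_le (hCU x hx.1) (hprop x hx).2.2.2.2)

lemma lap_le_of_ell {lam Lam : ℝ} {W : E n → ℝ} {x : E n} {h : ℝ}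
    (hE : Ell lam Lam W x h) (hneg : ∀ v, D2 W x v ≤ 0) : lam * (-lap W x) ≤ h := by
  apply le_of_forall_pos_le_add
  intro ε hε
  obtain ⟨ξ, a, ha, hsum⟩ := hE ε hε
  rw [lap_eq W x ξ]
  have : ∑ k, a k * D2 W x (ξ k) ≤ ∑ k, lam * D2 W x (ξ k) := by
    apply Finset.sum_le_sum
    intro k _
    nlinarith [hneg (ξ k), (ha k).1]
  rw [← Finset.mul_sum] at this
  linarith

open Metric in
/-- ABP with small drift. -/
lemma abp (n : ℕ) (hn : 1 ≤ n) (lam Lam : ℝ) (hlam : 0 < lam) :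
    ∃ κ C : ℝ, 0 < κ ∧ 0 < C ∧ ∀ (c : E n) (R : ℝ) (_ : 0 < R) (W b g : E n → ℝ)
      (_ : ContinuousOn W (closedBall c R)) (_ : ∀ x ∈ sphere c R, W x ≤ 0)
      (_ : ∀ x ∈ ball c R, 0 < W x → ContDiffAt ℝ 2 W x)
      (_ : Measurable b) (_ : Measurable g) (_ : ∀ x, 0 ≤ b x) (_ : ∀ x, 0 ≤ g x)
      (_ : ∀ x ∈ ball c R, 0 < W x → Ell lam Lam W x (b x * ‖fderiv ℝ W x‖ + g x))
      (_ : ∫⁻ x in ball c R, ENNReal.ofReal (b x) ^ n ≤ ENNReal.ofReal κ ^ n)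
      (T : ℝ) (_ : 0 ≤ T)
      (_ : ∫⁻ x in {x | x ∈ ball c R ∧ 0 < W x}, ENNReal.ofReal (g x) ^ n ≤ ENNReal.ofReal T ^ n),
      ∀ x0 ∈ closedBall c R, W x0 ≤ C * R * T := by
  have hn0 : n ≠ 0 := by omega
  set ω := (volume (ball (0 : E n) 1)).toReal with hω
  have hωfin : volume (ball (0 : E n) 1) ≠ ∞ := measure_ball_lt_top.ne
  have hω0 : 0 < ω := ENNReal.toReal_pos (measure_ball_pos _ _ one_pos).ne' hωfin
  -- constants
  set C1 : ℝ := (2 / lam) ^ n with hC1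
  have hC1p : 0 < C1 := by positivity
  obtain ⟨κ, hκ, hκ2⟩ : ∃ κ : ℝ, 0 < κ ∧ C1 * κ ^ n ≤ ω / 2 := by
    refine ⟨min 1 (ω / (2 * C1)), by positivity, ?_⟩
    have h1 : (min 1 (ω / (2 * C1))) ^ n ≤ min 1 (ω / (2 * C1)) :=
      pow_le_of_le_one (by positivity) (min_le_left _ _) hn0
    have h2 := h1.trans (min_le_right _ _)
    calc C1 * _ ≤ C1 * (ω / (2 * C1)) := by gcongr
      _ = ω / 2 := by field_simp
  set C2 : ℝ := 2 * C1 / ω + 1 with hC2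
  have hC2p : 1 ≤ C2 := by rw [hC2]; have : 0 < 2 * C1 / ω := by positivity
                           linarith
  refine ⟨κ, 2 * C2, hκ, by positivity, ?_⟩
  intro c R hR W b g hcont hs hC hbm hgm hb hg hell hbκ T hT hgT x0 hx0
  by_contra hcon
  push Not at hcon
  have hmpos : 0 < W x0 := lt_of_le_of_lt (by positivity) hcon
  obtain ⟨Γ, hΓm, hΓ, hvol⟩ := abp_core c R hR W hcont hs hC x0 hx0 (W x0) hmpos le_rfl
  set s := W x0 / (2 * R) with hsdef
  have hs0 : 0 < s := by positivity
  have hsT : C2 * T < s := by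
    rw [hsdef, lt_div_iff₀ (by positivity)]; linarith
  have hpt : ∀ x ∈ Γ, ENNReal.ofReal (-lap W x) ^ n ≤
      ENNReal.ofReal C1 * (ENNReal.ofReal s ^ n * ENNReal.ofReal (b x) ^ n + ENNReal.ofReal (g x) ^ n) := by
    intro x hx
    obtain ⟨h1, h2, h3, h4, h5⟩ := hΓ x hx
    have h6 := lap_le_of_ell (hell x h1 h2) h5
    have h7 : -lap W x ≤ (b x * s + g x) / lam := by
      rw [le_div_iff₀ hlam]
      have : b x * ‖fderiv ℝ W x‖ ≤ b x * s := mul_le_mul_of_nonneg_left h4.le (hb x)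
      linarith
    have h8 : (-lap W x) ^ n ≤ C1 * (s ^ n * b x ^ n + g x ^ n) := by
      calc (-lap W x) ^ n ≤ ((b x * s + g x) / lam) ^ n := by
            gcongr; exact lap_nonpos h5
        _ ≤ (2 / lam * max (b x * s) (g x)) ^ n := by
            have := hb x
            have := hg x
            gcongr
            rw [div_mul_eq_mul_div]
            gcongr
            linarith [le_max_left (b x * s) (g x), le_max_right (b x * s) (g x)]
        _ = C1 * (max (b x * s) (g x)) ^ n := by rw [mul_pow]
        _ ≤ C1 * (s ^ n * b x ^ n + g x ^ n) := by
            gcongr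
            have e1 : 0 ≤ s ^ n * b x ^ n := mul_nonneg (by positivity) (pow_nonneg (hb x) _)
            have e2 : 0 ≤ g x ^ n := pow_nonneg (hg x) _
            rcases max_choice (b x * s) (g x) with h | h <;> rw [h]
            · rw [mul_pow]; linarith
            · linarith
    rw [← ENNReal.ofReal_pow (lap_nonpos h5), ← ENNReal.ofReal_pow hs0.le, ← ENNReal.ofReal_pow (hb x),
      ← ENNReal.ofReal_pow (hg x), ← ENNReal.ofReal_mul (by positivity),
      ← ENNReal.ofReal_add (mul_nonneg (by positivity) (pow_nonneg (hb x) _)) (pow_nonneg (hg x) _),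
      ← ENNReal.ofReal_mul (by positivity)]
    exact ENNReal.ofReal_le_ofReal h8
  have hmain : volume (ball (0 : E n) s) ≤ ENNReal.ofReal (C1 * (s ^ n * κ ^ n + T ^ n)) := by
    calc volume (ball (0 : E n) s) ≤ _ := hvol
      _ ≤ ∫⁻ x in Γ, ENNReal.ofReal C1 *
          (ENNReal.ofReal s ^ n * ENNReal.ofReal (b x) ^ n + ENNReal.ofReal (g x) ^ n) :=
          setLIntegral_mono' hΓm hpt
      _ = ENNReal.ofReal C1 * (ENNReal.ofReal s ^ n * (∫⁻ x in Γ, ENNReal.ofReal (b x) ^ n)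
          + ∫⁻ x in Γ, ENNReal.ofReal (g x) ^ n) := by
          rw [lintegral_const_mul _ (by fun_prop), lintegral_add_left (by fun_prop),
            lintegral_const_mul _ (by fun_prop)]
      _ ≤ ENNReal.ofReal C1 * (ENNReal.ofReal s ^ n * ENNReal.ofReal κ ^ n + ENNReal.ofReal T ^ n) := by
          gcongr
          · exact (lintegral_mono_set fun x hx => (hΓ x hx).1).trans hbκ
          · exact (lintegral_mono_set (t := {x | x ∈ ball c R ∧ 0 < W x}) fun x hx => ⟨(hΓ x hx).1, (hΓ x hx).2.1⟩).trans hgT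
      _ = _ := by
          rw [← ENNReal.ofReal_pow hs0.le, ← ENNReal.ofReal_pow hκ.le, ← ENNReal.ofReal_pow hT,
            ← ENNReal.ofReal_mul (by positivity), ← ENNReal.ofReal_add (by positivity) (by positivity),
            ← ENNReal.ofReal_mul (by positivity)]
  have hvb : volume (ball (0 : E n) s) = ENNReal.ofReal (s ^ n * ω) := by
    rw [Measure.addHaar_ball_of_pos volume _ hs0, ENNReal.ofReal_mul (by positivity), hω,
      ENNReal.ofReal_toReal hωfin]
    simp
  rw [hvb, ENNReal.ofReal_le_ofReal_iff (by positivity)] at hmain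
  have h1 : s ^ n * ω / 2 ≤ C1 * T ^ n := by
    have : C1 * (s ^ n * κ ^ n) ≤ s ^ n * (ω / 2) := by
      calc C1 * (s ^ n * κ ^ n) = s ^ n * (C1 * κ ^ n) := by ring
        _ ≤ _ := by gcongr
    linarith
  have h2 : s ^ n ≤ (2 * C1 / ω) * T ^ n := by
    rw [div_mul_eq_mul_div, le_div_iff₀ hω0]; linarith
  have h3 : (C2 * T) ^ n < s ^ n := by gcongr
  have h4 : C2 * T ^ n ≤ (C2 * T) ^ n := by
    rw [mul_pow]; gcongr; exact le_self_pow₀ hC2p hn0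
  have h5 : (2 * C1 / ω) * T ^ n ≤ C2 * T ^ n := by gcongr; rw [hC2]; linarith
  linarith

end BH


namespace BH
variable {n : ℕ}

lemma hess_quad {u : E n → ℝ} {x : E n} (h : ContDiffAt ℝ 2 u x) (v : E n) :
    (v : Fin n → ℝ) ⬝ᵥ (Matrix.mulVec (hess n u x) v) = D2 u x v := by
  have hd := diff_fderiv h
  have he : ∀ i j, hess n u x i j = fderiv ℝ (fderiv ℝ u) x (EuclideanSpace.single i 1)
      (EuclideanSpace.single j 1) := by
    intro i j
    rw [hess, fderiv_clm_apply hd (by fun_prop)]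
    simp
  have hv : v = ∑ i, v i • (EuclideanSpace.single i (1:ℝ) : E n) := by
    have := (EuclideanSpace.basisFun (Fin n) ℝ).sum_repr v
    simpa using this.symm
  have hR : D2 u x v = ∑ i, ∑ j, v i * v j * hess n u x i j := by
    rw [D2]
    conv_lhs => rw [hv]
    simp only [map_sum, map_smul, ContinuousLinearMap.sum_apply, ContinuousLinearMap.smul_apply, ← he,
      smul_eq_mul, Finset.mul_sum]
    rw [Finset.sum_comm]
    refine Finset.sum_congr rfl fun i _ => Finset.sum_congr rfl fun j _ => by ring
  rw [hR]
  simp only [dotProduct, Matrix.mulVec, Finset.mul_sum]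
  refine Finset.sum_congr rfl fun i _ => Finset.sum_congr rfl fun j _ => by ring

lemma trace_frame {lam Lam : ℝ} {u : E n → ℝ} {x : E n} (h : ContDiffAt ℝ 2 u x)
    (A : Matrix (Fin n) (Fin n) ℝ) (hA : A.IsSymm)
    (h1 : (A - lam • (1 : Matrix (Fin n) (Fin n) ℝ)).PosSemidef)
    (h2 : (Lam • (1 : Matrix (Fin n) (Fin n) ℝ) - A).PosSemidef) :
    ∃ (ξ : OrthonormalBasis (Fin n) ℝ (E n)) (a : Fin n → ℝ),
    (∀ k, lam ≤ a k ∧ a k ≤ Lam) ∧ (A * hess n u x).trace = ∑ k, a k * D2 u x (ξ k) := by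
  have hH : A.IsHermitian := by
    rw [Matrix.IsHermitian, Matrix.conjTranspose_eq_transpose_of_trivial]; exact hA
  set ξ := hH.eigenvectorBasis
  have hev : ∀ k, Matrix.mulVec A (ξ k) = hH.eigenvalues k • (ξ k : Fin n → ℝ) := fun k =>
    hH.mulVec_eigenvectorBasis k
  have hnorm : ∀ k, (ξ k : Fin n → ℝ) ⬝ᵥ (ξ k : Fin n → ℝ) = 1 := by
    intro k
    have := ξ.orthonormal.1 k
    have h3 : inner ℝ (ξ k) (ξ k) = (1:ℝ) := by rw [real_inner_self_eq_norm_sq, this]; norm_num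
    rw [← h3]; rfl
  refine ⟨ξ, hH.eigenvalues, fun k => ?_, ?_⟩
  · have e1 := h1.dotProduct_mulVec_nonneg (ξ k)
    have e2 := h2.dotProduct_mulVec_nonneg (ξ k)
    simp only [star_trivial, Matrix.sub_mulVec, Matrix.smul_mulVec, Matrix.one_mulVec, hev,
      dotProduct_sub, dotProduct_smul, hnorm, smul_eq_mul, mul_one] at e1 e2
    constructor <;> linarith
  · rw [Matrix.trace_mul_comm]
    have e1 : (hess n u x * A).trace = LinearMap.trace ℝ (E n) (Matrix.toEuclideanLin (hess n u x * A)) := by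
      rw [Matrix.toEuclideanLin_eq_toLin, Matrix.trace_toLin_eq]
    rw [e1, LinearMap.trace_eq_sum_inner _ ξ]
    refine Finset.sum_congr rfl fun k _ => ?_
    rw [← hess_quad h]
    have : inner ℝ (ξ k) (Matrix.toEuclideanLin (hess n u x * A) (ξ k)) =
      (Matrix.mulVec (hess n u x * A) (ξ k)) ⬝ᵥ (ξ k : Fin n → ℝ) := rfl
    rw [this, ← Matrix.mulVec_mulVec, hev, Matrix.mulVec_smul, smul_dotProduct, smul_eq_mul,
      dotProduct_comm]

lemma pucci_set_nonempty (lam Lam : ℝ) (hL : lam ≤ Lam) (M : Matrix (Fin n) (Fin n) ℝ) :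
   { t : ℝ | ∃ A : Matrix (Fin n) (Fin n) ℝ, A.IsSymm ∧
    (A - lam • (1 : Matrix (Fin n) (Fin n) ℝ)).PosSemidef ∧
    (Lam • (1 : Matrix (Fin n) (Fin n) ℝ) - A).PosSemidef ∧ t = (A * M).trace }.Nonempty := by
  refine ⟨_, lam • 1, ?_, ?_, ?_, rfl⟩
  · simp [Matrix.IsSymm]
  · simp [Matrix.PosSemidef.zero]
  · rw [← sub_smul]
    exact Matrix.PosSemidef.one.smul (by linarith)

lemma D2_neg (u : E n → ℝ) (x v : E n) : D2 (fun y => -u y) x v = -D2 u x v := by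
  have : fderiv ℝ (fun y => -u y) = fun y => -fderiv ℝ u y := by ext1 y; exact fderiv_fun_neg
  rw [D2, this, fderiv_fun_neg]; rfl

lemma ell_of_pucciPlus {lam Lam : ℝ} (hL : lam ≤ Lam) {u : E n → ℝ} {x : E n} {h : ℝ}
    (hu : ContDiffAt ℝ 2 u x) (hh : -h ≤ pucciPlus n lam Lam (hess n u x)) :
    Ell lam Lam u x h := by
  intro ε hε
  obtain ⟨t, ⟨A, hA, h1, h2, rfl⟩, ht⟩ := exists_lt_of_lt_csSup
    (pucci_set_nonempty lam Lam hL (hess n u x)) (lt_of_lt_of_le (sub_lt_self _ hε) hh)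
  obtain ⟨ξ, a, ha, he⟩ := trace_frame hu A hA h1 h2
  exact ⟨ξ, a, ha, he ▸ ht.le⟩

lemma ell_of_pucciMinus {lam Lam : ℝ} (hL : lam ≤ Lam) {u : E n → ℝ} {x : E n} {h : ℝ}
    (hu : ContDiffAt ℝ 2 u x) (hh : pucciMinus n lam Lam (hess n u x) ≤ h) :
    Ell lam Lam (fun y => - u y) x h := by
  intro ε hε
  obtain ⟨t, ⟨A, hA, h1, h2, rfl⟩, ht⟩ := exists_lt_of_csInf_lt
    (pucci_set_nonempty lam Lam hL (hess n u x)) (lt_of_le_of_lt hh (lt_add_of_pos_right _ hε))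
  obtain ⟨ξ, a, ha, he⟩ := trace_frame hu A hA h1 h2
  refine ⟨ξ, a, ha, ?_⟩
  simp only [D2_neg, mul_neg, Finset.sum_neg_distrib, ← he]
  linarith

lemma D2_congr {w v : E n → ℝ} {x : E n} (h : w =ᶠ[nhds x] v) : D2 w x = D2 v x := by
  ext z; rw [D2, D2, h.fderiv.fderiv_eq]

lemma ev_diff {w : E n → ℝ} {x : E n} (h : ContDiffAt ℝ 2 w x) :
    ∀ᶠ y in nhds x, DifferentiableAt ℝ w y := by
  have := h.eventually (by simp)
  filter_upwards [this] with y hy using hy.differentiableAt (by norm_num)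

lemma D2_add {w v : E n → ℝ} {x : E n} (hw : ContDiffAt ℝ 2 w x) (hv : ContDiffAt ℝ 2 v x) (z : E n) :
    D2 (fun y => w y + v y) x z = D2 w x z + D2 v x z := by
  have : fderiv ℝ (fun y => w y + v y) =ᶠ[nhds x] fun y => fderiv ℝ w y + fderiv ℝ v y := by
    filter_upwards [ev_diff hw, ev_diff hv] with y h1 h2 using fderiv_fun_add h1 h2
  rw [D2, this.fderiv_eq, fderiv_fun_add (diff_fderiv hw) (diff_fderiv hv)]; rfl

lemma D2_mul {w v : E n → ℝ} {x : E n} (hw : ContDiffAt ℝ 2 w x) (hv : ContDiffAt ℝ 2 v x) (z : E n) :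
    D2 (fun y => w y * v y) x z = w x * D2 v x z + 2 * (fderiv ℝ w x z * fderiv ℝ v x z)
      + v x * D2 w x z := by
  have : fderiv ℝ (fun y => w y * v y) =ᶠ[nhds x]
      fun y => w y • fderiv ℝ v y + v y • fderiv ℝ w y := by
    filter_upwards [ev_diff hw, ev_diff hv] with y h1 h2 using fderiv_fun_mul h1 h2
  have d1 := hw.differentiableAt (by norm_num)
  have d2 := hv.differentiableAt (by norm_num)
  have h := ((d1.hasFDerivAt.smul (diff_fderiv hv).hasFDerivAt).add
    (d2.hasFDerivAt.smul (diff_fderiv hw).hasFDerivAt))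
  have e : fderiv ℝ (fun y => w y • fderiv ℝ v y + v y • fderiv ℝ w y) x = _ := h.fderiv
  rw [D2, this.fderiv_eq, e]
  simp [D2]; ring

lemma D2_const (c : ℝ) (x z : E n) : D2 (fun _ => c) x z = 0 := by
  have : fderiv ℝ (fun _ : E n => c) = fun _ => 0 := by ext1 y; simp
  rw [D2, this]; simp

lemma D2_clm (l : E n →L[ℝ] ℝ) (x z : E n) : D2 (fun y => l y) x z = 0 := by
  have : fderiv ℝ (fun y => l y) = fun _ => l := by ext1 y; exact l.fderiv
  rw [D2, this]; simp

lemma D2_const_mul {w : E n → ℝ} {x : E n} (hw : ContDiffAt ℝ 2 w x) (c : ℝ) (z : E n) :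
    D2 (fun y => c * w y) x z = c * D2 w x z := by
  rw [D2_mul contDiffAt_const hw]; simp [D2_const]

lemma fderiv_q (c y : E n) : fderiv ℝ (fun y => ‖y - c‖ ^ 2) y = (2:ℝ) • innerSL ℝ (y - c) := by
  have h1 := ((hasFDerivAt_id y).sub_const c).norm_sq
  have h2 := h1.fderiv
  simp only [id_eq] at h2
  rw [h2]; ext v; simp

lemma contDiff_q (c : E n) : ContDiff ℝ 2 (fun y => ‖y - c‖ ^ 2) := by
  exact (contDiff_id.sub contDiff_const).norm_sq ℝ

lemma D2_q (c x z : E n) : D2 (fun y => ‖y - c‖ ^ 2) x z = 2 * ‖z‖ ^ 2 := by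
  have : fderiv ℝ (fun y : E n => ‖y - c‖ ^ 2) = fun y => (2:ℝ) • innerSL ℝ (y - c) := by
    ext1 y; exact fderiv_q c y
  rw [D2, this]
  have h : HasFDerivAt (fun y : E n => (2:ℝ) • innerSL ℝ (y - c)) ((2:ℝ) • innerSL ℝ) x := by
    have := ((innerSL ℝ).hasFDerivAt (x := x - c)).comp x ((hasFDerivAt_id x).sub_const c)
    exact this.const_smul (2:ℝ)
  rw [h.fderiv]
  change 2 * inner ℝ z z = _
  rw [real_inner_self_eq_norm_sq]

lemma D2_comp {F : ℝ → ℝ} (hF : ContDiff ℝ 2 F) {w : E n → ℝ} {x : E n} (hw : ContDiffAt ℝ 2 w x)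
    (z : E n) : D2 (fun y => F (w y)) x z
      = deriv (deriv F) (w x) * (fderiv ℝ w x z) ^ 2 + deriv F (w x) * D2 w x z := by
  have hF1 : Differentiable ℝ F := hF.differentiable (by norm_num)
  have hF2 : Differentiable ℝ (deriv F) := by
    have : ContDiff ℝ 1 (deriv F) := hF.deriv' 
    exact this.differentiable (by norm_num)
  have : fderiv ℝ (fun y => F (w y)) =ᶠ[nhds x] fun y => deriv F (w y) • fderiv ℝ w y := by
    filter_upwards [ev_diff hw] with y h1
    exact ((hF1 (w y)).hasDerivAt.comp_hasFDerivAt y h1.hasFDerivAt).fderiv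
  have d1 := hw.differentiableAt (by norm_num)
  have h3 : HasFDerivAt (fun y => deriv F (w y)) (deriv (deriv F) (w x) • fderiv ℝ w x) x :=
    (hF2 (w x)).hasDerivAt.comp_hasFDerivAt x d1.hasFDerivAt
  have e : fderiv ℝ (fun y => deriv F (w y) • fderiv ℝ w y) x = _ :=
    (h3.smul (diff_fderiv hw).hasFDerivAt).fderiv
  rw [D2, this.fderiv_eq, e]
  simp [D2]; ring

lemma fderiv_comp_real {F : ℝ → ℝ} (hF : ContDiff ℝ 2 F) {w : E n → ℝ} {x : E n}
    (hw : DifferentiableAt ℝ w x) : fderiv ℝ (fun y => F (w y)) x = deriv F (w x) • fderiv ℝ w x :=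
  (((hF.differentiable (by norm_num)) (w x)).hasDerivAt.comp_hasFDerivAt x hw.hasFDerivAt).fderiv

/-- Frames. -/
lemma frame_norm (ξ : OrthonormalBasis (Fin n) ℝ (E n)) (y : E n) :
    ∑ k, (inner ℝ y (ξ k)) ^ 2 = ‖y‖ ^ 2 := by
  rw [← ξ.sum_sq_norm_inner_left y]; simp

lemma ell_add {lam Lam : ℝ} {w φ W : E n → ℝ} {x : E n} {h P : ℝ}
    (hw : ContDiffAt ℝ 2 w x) (hφ : ContDiffAt ℝ 2 φ x) (hW : W =ᶠ[nhds x] fun y => w y + φ y)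
    (hE : Ell lam Lam w x h)
    (hP : ∀ (ξ : OrthonormalBasis (Fin n) ℝ (E n)) (a : Fin n → ℝ), (∀ k, lam ≤ a k ∧ a k ≤ Lam) →
      -P ≤ ∑ k, a k * D2 φ x (ξ k)) : Ell lam Lam W x (h + P) := by
  intro ε hε
  obtain ⟨ξ, a, ha, hs⟩ := hE ε hε
  refine ⟨ξ, a, ha, ?_⟩
  have := hP ξ a ha
  simp only [D2_congr hW, D2_add hw hφ, mul_add, Finset.sum_add_distrib]
  linarith

lemma Ell.mono {lam Lam : ℝ} {w : E n → ℝ} {x : E n} {h h' : ℝ} (hE : Ell lam Lam w x h)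
    (hh : h ≤ h') : Ell lam Lam w x h' := by
  intro ε hε
  obtain ⟨ξ, a, ha, hs⟩ := hE ε hε
  exact ⟨ξ, a, ha, by linarith⟩

lemma Ell.congr {lam Lam : ℝ} {w v : E n → ℝ} {x : E n} {h : ℝ} (hE : Ell lam Lam w x h)
    (hh : v =ᶠ[nhds x] w) : Ell lam Lam v x h := by
  intro ε hε
  obtain ⟨ξ, a, ha, hs⟩ := hE ε hε
  exact ⟨ξ, a, ha, by rwa [D2_congr hh]⟩

end BH


namespace BH
variable {n : ℕ}

/-- `‖b‖_{L^n(S)} ≤ T` for nonnegative functions. -/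
def Lnle (b : E n → ℝ) (S : Set (E n)) (T : ℝ) : Prop :=
  ∫⁻ x in S, ENNReal.ofReal (b x) ^ n ≤ ENNReal.ofReal T ^ n

lemma Lnle.mono_set {b : E n → ℝ} {S S' : Set (E n)} {T : ℝ} (h : Lnle b S T) (hS : S' ⊆ S) :
    Lnle b S' T := (lintegral_mono_set hS).trans h

lemma Lnle.mono {b : E n → ℝ} {S : Set (E n)} {T T' : ℝ} (h : Lnle b S T) (hT : T ≤ T') :
    Lnle b S T' := h.trans (pow_le_pow_left₀ (by positivity) (ENNReal.ofReal_le_ofReal hT) _)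

lemma Lnle.const_mul {b : E n → ℝ} {S : Set (E n)} {T c : ℝ} (h : Lnle b S T) (hc : 0 ≤ c) :
    Lnle (fun x => c * b x) S (c * T) := by
  unfold Lnle at *
  simp only [ENNReal.ofReal_mul hc, mul_pow]
  rw [lintegral_const_mul' _ _ (by finiteness)]
  gcongr

lemma Lnle.add (hn : 1 ≤ n) {b g : E n → ℝ} {S : Set (E n)} {T T' : ℝ} (h : Lnle b S T)
    (h' : Lnle g S T') (hb : Measurable b) (hg : Measurable g) (hb0 : ∀ x, 0 ≤ b x)
    (hg0 : ∀ x, 0 ≤ g x) (hT : 0 ≤ T) (hT' : 0 ≤ T') :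
    Lnle (fun x => b x + g x) S (T + T') := by
  unfold Lnle at *
  have key := ENNReal.lintegral_Lp_add_le (μ := volume.restrict S) (p := n)
    (f := fun x => ENNReal.ofReal (b x)) (g := fun x => ENNReal.ofReal (g x))
    (hb.ennreal_ofReal.aemeasurable) (hg.ennreal_ofReal.aemeasurable) (by exact_mod_cast hn)
  have hn0 : (n:ℝ) ≠ 0 := by positivity
  have cv : ∀ A T : ℝ≥0∞, A ≤ T ^ n → A ^ (1 / (n:ℝ)) ≤ T := by
    intro A T h
    rw [one_div]
    have := ENNReal.rpow_le_rpow h (z := (n:ℝ)⁻¹) (by positivity)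
    rwa [← ENNReal.rpow_natCast, ← ENNReal.rpow_mul, mul_inv_cancel₀ hn0, ENNReal.rpow_one] at this
  simp only [Pi.add_apply, ENNReal.rpow_natCast] at key
  have k2 := key.trans (add_le_add (cv _ _ h) (cv _ _ h'))
  have k3 := pow_le_pow_left₀ (by positivity) k2 n
  rw [← ENNReal.rpow_natCast, ← ENNReal.rpow_mul, one_div, inv_mul_cancel₀ hn0, ENNReal.rpow_one] at k3
  simp only [ENNReal.ofReal_add (hb0 _) (hg0 _), ENNReal.ofReal_add hT hT']
  exact k3

lemma Lnle.mono_fun {b g : E n → ℝ} {S : Set (E n)} (hS : MeasurableSet S) {T : ℝ} (h : Lnle b S T)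
    (hbg : ∀ x ∈ S, g x ≤ b x) : Lnle g S T := by
  refine le_trans (setLIntegral_mono' hS fun x hx => ?_) h
  gcongr
  exact hbg x hx

open Metric in
/-- ABP estimate on half balls by zero extension. -/
lemma abp_half (n : ℕ) (hn : 1 ≤ n) (lam Lam : ℝ) (hlam : 0 < lam) : ∃ κ C : ℝ, 0 < κ ∧ 0 < C ∧
    ∀ (e : E n) (c : E n) (R : ℝ) (_ : 0 < R) (v b g : E n → ℝ),
      ContinuousOn v (closedBall c R ∩ {x | 0 ≤ inner ℝ e x}) →
      (∀ x ∈ closedBall c R, inner ℝ e x = 0 → v x ≤ 0) →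
      (∀ x ∈ sphere c R, 0 ≤ inner ℝ e x → v x ≤ 0) →
      (∀ x ∈ ball c R, 0 < inner ℝ e x → 0 < v x → ContDiffAt ℝ 2 v x) →
      Measurable b → Measurable g → (∀ x, 0 ≤ b x) → (∀ x, 0 ≤ g x) →
      (∀ x ∈ ball c R, 0 < inner ℝ e x → 0 < v x → Ell lam Lam v x (b x * ‖fderiv ℝ v x‖ + g x)) →
      Lnle b (ball c R) κ → ∀ T, 0 ≤ T →
      Lnle g {x | x ∈ ball c R ∧ 0 < inner ℝ e x ∧ 0 < v x} T →
      ∀ x ∈ closedBall c R, 0 ≤ inner ℝ e x → v x ≤ C * R * T := by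
  obtain ⟨κ, C, hκ, hC, H⟩ := abp n hn lam Lam hlam
  refine ⟨κ, C, hκ, hC, ?_⟩
  intro e c R hR v b g hcont hflat hs hC2 hbm hgm hb0 hg0 hE hbκ T hT hgT x0 hx0 hx0e
  classical
  set W : E n → ℝ := fun y => if 0 < inner ℝ e y then max (v y) 0 else 0 with hW
  have hce : Continuous fun y : E n => inner ℝ e y := by fun_prop
  have hWpos : ∀ x, 0 < W x → 0 < inner ℝ e x ∧ 0 < v x := by
    intro x hx
    simp only [hW] at hx
    split_ifs at hx with h
    · refine ⟨h, ?_⟩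
      rcases lt_max_iff.1 hx with h | h
      · exact h
      · exact absurd h (lt_irrefl _)
    · exact absurd hx (lt_irrefl _)
  have hWc : ContinuousOn W (closedBall c R) := by
    have hU : closedBall c R = (closedBall c R ∩ {x | 0 ≤ inner ℝ e x}) ∪
        (closedBall c R ∩ {x | inner ℝ e x ≤ 0}) := by
      rw [← Set.inter_union_distrib_left]
      symm
      rw [Set.inter_eq_left]
      intro x _
      exact le_total (0:ℝ) (inner ℝ e x)
    rw [hU]
    refine ContinuousOn.union_of_isClosed ?_ ?_ ?_ ?_
    · refine (hcont.sup continuousOn_const (f := v) (g := fun _ => (0:ℝ))).congr ?_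
      intro y hy
      simp only [hW]
      split_ifs with h
      · rfl
      · have h0 : inner ℝ e y = 0 := le_antisymm (not_lt.1 h) hy.2
        exact (max_eq_right (hflat y hy.1 h0)).symm
    · refine (continuousOn_const (c := (0:ℝ))).congr ?_
      intro y hy
      simp only [hW]
      rw [if_neg (not_lt.2 hy.2)]
    · exact isClosed_closedBall.inter (isClosed_le continuous_const hce)
    · exact isClosed_closedBall.inter (isClosed_le hce continuous_const)
  have hball : ∀ x ∈ ball c R, 0 < W x → W =ᶠ[nhds x] v := by
    intro x hx hx0
    obtain ⟨h1, h2⟩ := hWpos x hx0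
    have hat : ContinuousAt v x := by
      refine hcont.continuousAt ?_
      filter_upwards [isOpen_ball.mem_nhds hx, (isOpen_lt continuous_const hce).mem_nhds h1] with y hy hy'
      exact ⟨ball_subset_closedBall hy, le_of_lt hy'⟩
    filter_upwards [(isOpen_lt continuous_const hce).mem_nhds h1, hat.eventually (lt_mem_nhds h2)] with y hy hy'
    simp only [hW]
    rw [if_pos hy, max_eq_left hy'.le]
  have key := H c R hR W b g hWc ?_ ?_ hbm hgm hb0 hg0 ?_ hbκ T hT ?_ x0 hx0
  · rcases hx0e.eq_or_lt with h | h
    · exact (hflat x0 hx0 h.symm).trans (by positivity)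
    · refine le_trans ?_ key
      simp only [hW]
      rw [if_pos h]; exact le_max_left _ _
  · intro x hx
    simp only [hW]
    split_ifs with h
    · exact max_le (hs x hx h.le) le_rfl
    · exact le_rfl
  · intro x hx hx0
    obtain ⟨h1, h2⟩ := hWpos x hx0
    exact (hC2 x hx h1 h2).congr_of_eventuallyEq (hball x hx hx0)
  · intro x hx hx0
    obtain ⟨h1, h2⟩ := hWpos x hx0
    rw [(hball x hx hx0).fderiv_eq]
    exact (hE x hx h1 h2).congr (hball x hx hx0)
  · refine le_trans (lintegral_mono_set ?_) hgT
    rintro x ⟨hx, hx0⟩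
    exact ⟨hx, hWpos x hx0⟩

end BH


namespace BH
variable {n : ℕ}

/-- Boundary barrier. -/
noncomputable def psi (e x0 : E n) (ρ N : ℝ) (y : E n) : ℝ :=
  ((1/ρ) * ‖y - x0‖ ^ 2 + N * innerSL ℝ e y) + (-(N/ρ)) * (innerSL ℝ e y * innerSL ℝ e y)

lemma contDiff_psi (e x0 : E n) (ρ N : ℝ) : ContDiff ℝ 2 (psi e x0 ρ N) := by
  unfold psi
  have := contDiff_q x0
  fun_prop

lemma D2_psi (e x0 : E n) (ρ N : ℝ) (x z : E n) :
    D2 (psi e x0 ρ N) x z = (1/ρ) * (2 * ‖z‖^2) - (N/ρ) * (2 * (inner ℝ e z)^2) := by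
  have hq := contDiff_q x0
  have hl : ContDiff ℝ 2 (fun y => innerSL ℝ e y) := by fun_prop
  unfold psi
  rw [D2_add (by fun_prop) (by fun_prop), D2_add (contDiffAt_const.mul hq.contDiffAt) (by fun_prop),
    D2_const_mul hq.contDiffAt, D2_const_mul (by fun_prop), D2_const_mul (by fun_prop), D2_mul (by fun_prop) (by fun_prop), D2_q, D2_clm]
  have : fderiv ℝ (fun y => innerSL ℝ e y) x = innerSL ℝ e := (innerSL ℝ e).fderiv
  rw [this]
  simp only [innerSL_apply_apply]
  ring

lemma fderiv_psi (e x0 : E n) (ρ N : ℝ) (x : E n) :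
    fderiv ℝ (psi e x0 ρ N) x = (2/ρ) • innerSL ℝ (x - x0) + (N * (1 - 2 * inner ℝ e x / ρ)) • innerSL ℝ e := by
  have h1 : HasFDerivAt (fun y => ‖y - x0‖ ^ 2) ((2:ℝ) • innerSL ℝ (x - x0)) x := by
    rw [← fderiv_q]
    exact ((contDiff_q x0).differentiable (by norm_num) x).hasFDerivAt
  have h2 : HasFDerivAt (fun y => innerSL ℝ e y) (innerSL ℝ e) x := (innerSL ℝ e).hasFDerivAt
  have h3 := ((h1.const_mul (1/ρ)).add (h2.const_mul N)).add ((h2.mul h2).const_mul (-(N/ρ)))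
  have h4 : fderiv ℝ (psi e x0 ρ N) x = _ := h3.fderiv
  rw [h4]
  ext v
  simp
  ring

lemma norm_fderiv_psi (e x0 : E n) (he : ‖e‖ = 1) (ρ N : ℝ) (hρ : 0 < ρ) (hN : 0 ≤ N) (x : E n)
    (hx : ‖x - x0‖ ≤ ρ) (hl0 : 0 ≤ inner ℝ e x) (hl1 : inner ℝ e x ≤ ρ) :
    ‖fderiv ℝ (psi e x0 ρ N) x‖ ≤ 2 + N := by
  rw [fderiv_psi]
  refine (norm_add_le _ _).trans (add_le_add ?_ ?_)
  · rw [norm_smul, innerSL_apply_norm, Real.norm_of_nonneg (by positivity), div_mul_eq_mul_div,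
      div_le_iff₀ hρ]
    linarith
  · rw [norm_smul, innerSL_apply_norm, he, mul_one, Real.norm_eq_abs, abs_mul, abs_of_nonneg hN]
    refine mul_le_of_le_one_right hN ?_
    have h1 : 0 ≤ inner ℝ e x / ρ := by positivity
    have h2 : inner ℝ e x / ρ ≤ 1 := (div_le_one hρ).2 hl1
    rw [abs_le, mul_div_assoc]
    constructor <;> linarith

lemma sum_psi {lam Lam : ℝ} (hlam : 0 < lam) (e x0 : E n) (he : ‖e‖ = 1) (ρ : ℝ) (hρ : 0 < ρ) (x : E n)
    (ξ : OrthonormalBasis (Fin n) ℝ (E n)) (a : Fin n → ℝ) (ha : ∀ k, lam ≤ a k ∧ a k ≤ Lam) :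
    ∑ k, a k * D2 (psi e x0 ρ (n * Lam / lam)) x (ξ k) ≤ 0 := by
  rcases Nat.eq_zero_or_pos n with rfl | hn
  · simp
  have hL : 0 < Lam := hlam.trans_le ((ha ⟨0, hn⟩).1.trans (ha ⟨0, hn⟩).2)
  have h1 : ∀ k, a k * D2 (psi e x0 ρ (n * Lam / lam)) x (ξ k) ≤
      (2/ρ) * Lam - (2/ρ) * (n * Lam) * (inner ℝ e (ξ k))^2 := by
    intro k
    rw [D2_psi, ξ.orthonormal.1 k]
    obtain ⟨h1, h2⟩ := ha k
    have e1 : a k * (1/ρ * (2 * 1^2)) ≤ (2/ρ) * Lam := by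
      have : a k * (1/ρ * (2 * 1^2)) = (2/ρ) * a k := by ring
      rw [this]; gcongr
    have e2 : (2/ρ) * (n * Lam) * (inner ℝ e (ξ k))^2 ≤
        a k * (n * Lam / lam / ρ * (2 * (inner ℝ e (ξ k))^2)) := by
      have : a k * (n * Lam / lam / ρ * (2 * (inner ℝ e (ξ k))^2)) =
        (a k / lam) * ((2/ρ) * (n * Lam) * (inner ℝ e (ξ k))^2) := by ring
      rw [this]
      refine le_mul_of_one_le_left (by positivity) ((one_le_div hlam).2 h1)
    linarith
  refine (Finset.sum_le_sum fun k _ => h1 k).trans ?_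
  rw [Finset.sum_sub_distrib, ← Finset.mul_sum, ← Finset.mul_sum, frame_norm, he]
  simp

open Metric in
lemma BL_step (n : ℕ) (hn : 1 ≤ n) (lam Lam : ℝ) (hlam : 0 < lam) (hL : lam ≤ Lam) :
    ∃ κ C : ℝ, 0 < κ ∧ 0 < C ∧
    ∀ (e x0 : E n) (ρ : ℝ) (w b g : E n → ℝ) (A η B G : ℝ), ‖e‖ = 1 → inner ℝ e x0 = 0 → 0 < ρ →
      0 ≤ A → 0 ≤ η → 0 ≤ B → 0 ≤ G →
      ContinuousOn w (closedBall x0 ρ ∩ {x | 0 ≤ inner ℝ e x}) →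
      (∀ x ∈ closedBall x0 ρ, inner ℝ e x = 0 → w x ≤ 0) →
      (∀ x ∈ closedBall x0 ρ, 0 ≤ inner ℝ e x → w x ≤ A * inner ℝ e x + η * ρ) →
      (∀ x ∈ ball x0 ρ, 0 < inner ℝ e x → ContDiffAt ℝ 2 w x) →
      Measurable b → Measurable g → (∀ x, 0 ≤ b x) → (∀ x, 0 ≤ g x) →
      (∀ x ∈ ball x0 ρ, 0 < inner ℝ e x → Ell lam Lam w x (b x * ‖fderiv ℝ w x‖ + g x)) →
      Lnle b (ball x0 ρ) B → B ≤ κ → Lnle g (ball x0 ρ) G →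
      ∀ x ∈ closedBall x0 (ρ/2), 0 ≤ inner ℝ e x → w x ≤ (A + n * Lam / lam * η) * inner ℝ e x +
        (η / 2 + 2 * C * (G + B * (A + (2 + n * Lam / lam) * η))) * (ρ / 2) := by
  obtain ⟨κ, C, hκ, hC, H⟩ := abp_half n hn lam Lam hlam
  refine ⟨κ, C, hκ, hC, ?_⟩
  intro e x0 ρ w b g A η B G he hx0 hρ hA hη hB hG hcont hflat hub hC2 hbm hgm hb0 hg0 hE hbB hBκ hgG x hx hxe
  set N : ℝ := n * Lam / lam with hN
  have hLam : 0 < Lam := hlam.trans_le hL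
  have hN0 : 0 ≤ N := by positivity
  set φ : E n → ℝ := fun y => (-A) * innerSL ℝ e y + (-η) * psi e x0 ρ N y with hφ
  have hψ := contDiff_psi e x0 ρ N
  have hφc : ContDiff ℝ 2 φ := by fun_prop
  have hle : ∀ y ∈ closedBall x0 ρ, inner ℝ e y ≤ ρ := by
    intro y hy
    have : inner ℝ e y = inner ℝ e (y - x0) := by rw [inner_sub_right, hx0, sub_zero]
    rw [this]
    refine (real_inner_le_norm _ _).trans ?_
    rw [he, one_mul]; exact mem_closedBall_iff_norm.1 hy
  have hψ0 : ∀ y ∈ closedBall x0 ρ, 0 ≤ inner ℝ e y → (1/ρ) * ‖y - x0‖^2 ≤ psi e x0 ρ N y := by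
    intro y hy hy0
    have h1 := hle y hy
    unfold psi
    simp only [innerSL_apply_apply]
    have : 0 ≤ (N / ρ) * (inner ℝ e y * (ρ - inner ℝ e y)) :=
      mul_nonneg (by positivity) (mul_nonneg hy0 (by linarith))
    have e1 : (N / ρ) * (inner ℝ e y * (ρ - inner ℝ e y)) = N * inner ℝ e y - N/ρ * (inner ℝ e y * inner ℝ e y) := by
      field_simp
    linarith
  have key := H e x0 ρ hρ (fun y => w y + φ y) b (fun y => g y + (A + (2 + N) * η) * b y)
    (hcont.add hφc.continuous.continuousOn) ?_ ?_ ?_ hbm (by fun_prop) hb0 ?_ ?_ (hbB.mono hBκ)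
    (G + (A + (2 + N) * η) * B) (by positivity) ?_ x ?_ hxe
  · have hxr : ‖x - x0‖ ≤ ρ / 2 := mem_closedBall_iff_norm.1 hx
    have hps : psi e x0 ρ N x ≤ ρ / 4 + N * inner ℝ e x := by
      unfold psi
      simp only [innerSL_apply_apply]
      have h1 : (1/ρ) * ‖x - x0‖^2 ≤ ρ / 4 := by
        calc (1/ρ) * ‖x - x0‖^2 ≤ (1/ρ) * (ρ/2)^2 := by gcongr
          _ = ρ / 4 := by field_simp; norm_num
      have h2 : 0 ≤ N / ρ * (inner ℝ e x * inner ℝ e x) := by positivity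
      linarith
    have h3 := mul_le_mul_of_nonneg_left hps hη
    simp only [hφ, innerSL_apply_apply] at key
    nlinarith
  · intro y hy hy0
    have h1 := hψ0 y hy hy0.ge
    have h2 := hflat y hy hy0
    have h3 : 0 ≤ η * psi e x0 ρ N y := mul_nonneg hη (le_trans (by positivity) h1)
    simp only [hφ, innerSL_apply_apply, hy0]
    linarith
  · intro y hy hy0
    have hyc := sphere_subset_closedBall hy
    have h1 := hψ0 y hyc hy0
    have h2 := hub y hyc hy0
    rw [mem_sphere_iff_norm.1 hy] at h1
    have h4 : 1 / ρ * ρ^2 = ρ := by field_simp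
    have h3 := mul_le_mul_of_nonneg_left h1 hη
    rw [h4] at h3
    simp only [hφ, innerSL_apply_apply]
    linarith
  · intro y hy hy0 _
    exact (hC2 y hy hy0).add hφc.contDiffAt
  · intro y
    have := hg0 y
    have := hb0 y
    positivity
  · intro y hy hy0 _
    have hyc := ball_subset_closedBall hy
    have hw := hC2 y hy hy0
    refine (ell_add hw hφc.contDiffAt (Filter.EventuallyEq.refl _ _) (hE y hy hy0) (P := 0) ?_).mono ?_
    · intro ξ a ha
      have := sum_psi hlam e x0 he ρ hρ y ξ a ha
      have e1 : ∀ z, D2 φ y z = -η * D2 (psi e x0 ρ N) y z := by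
        intro z
        simp only [hφ]
        rw [D2_add (by fun_prop) (by fun_prop), D2_const_mul (by fun_prop), D2_const_mul (by fun_prop), D2_clm]
        ring
      simp only [e1]
      have e2 : ∑ k, a k * (-η * D2 (psi e x0 ρ N) y (ξ k)) = -η * ∑ k, a k * D2 (psi e x0 ρ N) y (ξ k) := by
        rw [Finset.mul_sum]; exact Finset.sum_congr rfl fun k _ => by ring
      rw [e2]
      have := mul_le_mul_of_nonneg_left this hη
      linarith
    · have hd : fderiv ℝ (fun z => w z + φ z) y = fderiv ℝ w y + fderiv ℝ φ y :=
        fderiv_fun_add (hw.differentiableAt (by norm_num)) (hφc.differentiable (by norm_num) y)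
      have hdφ : ‖fderiv ℝ φ y‖ ≤ A + (2 + N) * η := by
        have h1 : fderiv ℝ φ y = (-A) • innerSL ℝ e + (-η) • fderiv ℝ (psi e x0 ρ N) y := by
          have h2 : HasFDerivAt (fun y => innerSL ℝ e y) (innerSL ℝ e) y := (innerSL ℝ e).hasFDerivAt
          have h3 := (hψ.differentiable (by norm_num) y).hasFDerivAt
          exact ((h2.const_mul (-A)).add (h3.const_mul (-η))).fderiv
        rw [h1]
        refine (norm_add_le _ _).trans ?_
        rw [norm_smul, norm_smul, innerSL_apply_norm, he, norm_neg, norm_neg, Real.norm_of_nonneg hA,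
          Real.norm_of_nonneg hη]
        have := norm_fderiv_psi e x0 he ρ N hρ hN0 y (mem_closedBall_iff_norm.1 hyc) hy0.le (hle y hyc)
        have := mul_le_mul_of_nonneg_left this hη
        linarith
      have hw' : ‖fderiv ℝ w y‖ ≤ ‖fderiv ℝ (fun z => w z + φ z) y‖ + (A + (2 + N) * η) := by
        have : fderiv ℝ w y = fderiv ℝ (fun z => w z + φ z) y - fderiv ℝ φ y := by rw [hd]; abel
        rw [this]
        refine (norm_sub_le _ _).trans (by linarith)
      have := mul_le_mul_of_nonneg_left hw' (hb0 y)
      linarith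
  · refine Lnle.mono_set ?_ (S := ball x0 ρ) (fun y hy => hy.1)
    refine Lnle.add hn hgG (hbB.const_mul (by positivity)) hgm (by fun_prop) hg0 ?_ hG (by positivity)
    intro y
    have := hb0 y
    positivity
  · exact closedBall_subset_closedBall (by linarith) hx

open Metric in
/-- Boundary Lipschitz estimate. -/
lemma BL (n : ℕ) (hn : 1 ≤ n) (lam Lam α : ℝ) (hlam : 0 < lam) (hL : lam ≤ Lam) (hα : 0 < α) :
    ∃ κ C : ℝ, 0 < κ ∧ 0 < C ∧
    ∀ (e x0 : E n) (r : ℝ) (w b g : E n → ℝ) (η B G : ℝ), ‖e‖ = 1 → inner ℝ e x0 = 0 → 0 < r →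
      0 ≤ η → 0 ≤ B → 0 ≤ G →
      ContinuousOn w (closedBall x0 r ∩ {x | 0 ≤ inner ℝ e x}) →
      (∀ x ∈ closedBall x0 r, inner ℝ e x = 0 → w x ≤ 0) →
      (∀ x ∈ closedBall x0 r, 0 ≤ inner ℝ e x → w x ≤ η * r) →
      (∀ x ∈ ball x0 r, 0 < inner ℝ e x → ContDiffAt ℝ 2 w x) →
      Measurable b → Measurable g → (∀ x, 0 ≤ b x) → (∀ x, 0 ≤ g x) →
      (∀ x ∈ ball x0 r, 0 < inner ℝ e x → Ell lam Lam w x (b x * ‖fderiv ℝ w x‖ + g x)) →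
      (∀ ρ, 0 < ρ → ρ ≤ r → Lnle b (ball x0 ρ) (ρ ^ α * B)) → r ^ α * B ≤ κ →
      (∀ ρ, 0 < ρ → ρ ≤ r → Lnle g (ball x0 ρ) (ρ ^ α * G)) →
      ∀ s, 0 < s → s ≤ r → w (x0 + s • e) ≤ C * (η + r ^ α * G) * s := by
  obtain ⟨κ, C, hκ, hC, H⟩ := BL_step n hn lam Lam hlam hL
  have hLam : 0 < Lam := hlam.trans_le hL
  set N : ℝ := n * Lam / lam with hN
  have hN0 : 0 ≤ N := by positivity
  set σ : ℝ := max (3/4) ((1/2:ℝ)^α) with hσ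
  have hσ0 : 3/4 ≤ σ := le_max_left _ _
  have hσ1 : σ < 1 := max_lt (by norm_num) (Real.rpow_lt_one (by norm_num) (by norm_num) hα)
  set L : ℝ := 16 * C + 1 with hLdef
  set Q : ℝ := N * L / (1 - σ) with hQ
  have h1σ : 0 < 1 - σ := by linarith
  have hQ0 : 0 ≤ Q := by positivity
  set κ' : ℝ := min κ (L / 8 / (2 * C * (Q + (2 + N) * L))) with hκ'
  have hden : 0 < 2 * C * (Q + (2 + N) * L) := by positivity
  refine ⟨κ', Q + 2 * L, lt_min hκ (by positivity), by positivity, ?_⟩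
  intro e x0 r w b g η B G he hx0 hr hη hB hG hcont hflat hub hC2 hbm hgm hb0 hg0 hE hbB hBκ hgG s hs hsr
  set S : ℝ := η + r ^ α * G with hS
  have hrα : 0 < r ^ α := by positivity
  have hS0 : 0 ≤ S := by positivity
  have claim : ∀ k : ℕ, ∀ x ∈ closedBall x0 (r * (1/2)^k), 0 ≤ inner ℝ e x →
      w x ≤ Q * S * (1 - σ^k) * inner ℝ e x + L * S * σ^k * (r * (1/2)^k) := by
    intro k
    induction k with
    | zero =>
      intro x hx hxe
      simp only [pow_zero, mul_one] at hx ⊢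
      have h1 := hub x hx hxe
      have h2 : η ≤ L * S := by
        have : η ≤ S := by simp only [hS]; linarith [mul_nonneg hrα.le hG]
        have : S ≤ L * S := le_mul_of_one_le_left hS0 (by simp only [hLdef]; linarith)
        linarith
      have := mul_le_mul_of_nonneg_right h2 hr.le
      simp; linarith
    | succ k ih =>
      intro x hx hxe
      have hσk : 0 < σ^k := by positivity
      have hσk1 : σ^k ≤ 1 := pow_le_one₀ (by linarith) hσ1.le
      set ρ : ℝ := r * (1/2)^k with hρdef
      have hρ : 0 < ρ := by positivity
      have hρr : ρ ≤ r := mul_le_of_le_one_right hr.le (pow_le_one₀ (by norm_num) (by norm_num))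
      have hρα : ρ ^ α ≤ σ^k * r^α := by
        rw [hρdef, Real.mul_rpow hr.le (by positivity), mul_comm]
        gcongr
        rw [← Real.rpow_natCast, ← Real.rpow_mul (by norm_num), mul_comm, Real.rpow_mul (by norm_num), Real.rpow_natCast]
        gcongr
        exact le_max_right _ _
      have hρα' : ρ ^ α ≤ r^α := by gcongr
      have hsub : closedBall x0 ρ ⊆ closedBall x0 r := closedBall_subset_closedBall hρr
      have hsub' : ball x0 ρ ⊆ ball x0 r := ball_subset_ball hρr
      have hA0 : 0 ≤ Q * S * (1 - σ^k) := mul_nonneg (by positivity) (by linarith)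
      have st := H e x0 ρ w b g (Q * S * (1 - σ^k)) (L * S * σ^k) (ρ^α * B) (ρ^α * G) he hx0 hρ
        hA0 (by positivity) (by positivity) (by positivity)
        (hcont.mono (Set.inter_subset_inter_left _ hsub)) (fun x hx => hflat x (hsub hx))
        ih (fun x hx => hC2 x (hsub' hx)) hbm hgm hb0 hg0 (fun x hx => hE x (hsub' hx))
        (hbB ρ hρ hρr) ?_ (hgG ρ hρ hρr) x ?_ hxe
      · refine st.trans ?_
        have e1 : r * (1/2)^(k+1) = ρ/2 := by rw [hρdef]; ring
        rw [e1]
        refine add_le_add (mul_le_mul_of_nonneg_right (le_of_eq ?_) hxe) (mul_le_mul_of_nonneg_right ?_ (by positivity))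
        · have : Q * (1 - σ) = N * L := by rw [hQ]; field_simp
          rw [pow_succ]
          linear_combination (-S * σ^k) * this
        · have hBk : r^α * B * (2 * C * (Q + (2 + N) * L)) ≤ L/8 := by
            have := hBκ.trans (min_le_right _ _)
            rwa [le_div_iff₀ hden] at this
          have hGS : r^α * G ≤ S := by simp only [hS]; linarith
          have hin : Q * S * (1 - σ^k) + (2 + N) * (L * S * σ^k) ≤ (Q + (2+N) * L) * S := by
            have : Q * S * σ^k ≥ 0 := by positivity
            have : (2+N) * L * S * σ^k ≤ (2+N)*L*S := mul_le_of_le_one_right (by positivity) hσk1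
            linarith
          have hin0 : 0 ≤ Q * S * (1 - σ^k) + (2 + N) * (L * S * σ^k) := by positivity
          have t1 : ρ^α * G ≤ σ^k * S :=
            (mul_le_mul_of_nonneg_right hρα hG).trans (by rw [mul_assoc]; gcongr)
          have t2 : ρ^α * B * (Q * S * (1 - σ^k) + (2 + N) * (L * S * σ^k)) ≤
              σ^k * (r^α * B) * ((Q + (2+N) * L) * S) := by
            rw [← mul_assoc (σ^k)]
            gcongr
          have t3 : 2 * C * (σ^k * (r^α * B) * ((Q + (2+N) * L) * S)) ≤ σ^k * S * (L/8) := by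
            calc _ = σ^k * S * (r^α * B * (2 * C * (Q + (2 + N) * L))) := by ring
              _ ≤ _ := by gcongr
          have t4 : 2 * C * (ρ^α * G) ≤ σ^k * S * (L/8) := by
            calc 2 * C * (ρ^α * G) ≤ 2 * C * (σ^k * S) := by gcongr
              _ = σ^k * S * (2 * C) := by ring
              _ ≤ _ := by gcongr; simp only [hLdef]; linarith
          have t5 : 2 * C * (ρ^α * B * (Q * S * (1 - σ^k) + (2 + N) * (L * S * σ^k))) ≤ σ^k * S * (L/8) :=
            (mul_le_mul_of_nonneg_left t2 (by positivity)).trans t3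
          have t6 : L * S * σ^k * (3/4) ≤ L * S * σ^(k+1) := by
            rw [pow_succ, ← mul_assoc]; gcongr
          rw [mul_add (2 * C)]
          linarith
      · exact (mul_le_mul_of_nonneg_right hρα' hB).trans (hBκ.trans (min_le_left _ _))
      · convert hx using 2
        rw [hρdef]; ring
  obtain ⟨k, hk1, hk2⟩ := exists_nat_pow_near_of_lt_one (x := s / r) (y := (1/2:ℝ)) (by positivity)
    ((div_le_one hr).2 hsr) (by norm_num) (by norm_num)
  rw [lt_div_iff₀ hr] at hk1
  rw [div_le_iff₀ hr] at hk2
  have hin : inner ℝ e (x0 + s • e) = s := by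
    rw [inner_add_right, inner_smul_right, hx0, real_inner_self_eq_norm_sq, he]; simp
  have := claim k (x0 + s • e) ?_ (by rw [hin]; exact hs.le)
  · rw [hin] at this
    refine this.trans ?_
    have hσk : 0 < σ^k := by have : 0 < σ := by linarith
                             positivity
    have hσk1 : σ^k ≤ 1 := pow_le_one₀ (by linarith) hσ1.le
    have h1 : Q * S * (1 - σ^k) * s ≤ Q * S * s := by
      refine mul_le_mul_of_nonneg_right ?_ hs.le
      refine mul_le_of_le_one_right (by positivity) (by linarith)
    have h2 : L * S * σ^k * (r * (1/2)^k) ≤ L * S * (2 * s) := by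
      refine mul_le_mul ?_ ?_ (by positivity) (by positivity)
      · exact mul_le_of_le_one_right (by positivity) hσk1
      · rw [pow_succ] at hk1; linarith
    linarith
  · rw [mem_closedBall_iff_norm]
    simp [norm_smul, he, abs_of_pos hs]
    rw [one_div, inv_pow] at hk2; linarith

end BH


namespace BH
variable {n : ℕ}

lemma ell_barrier {lam Lam : ℝ} {w φ : E n → ℝ} {x : E n} {b f P m : ℝ}
    (hw : ContDiffAt ℝ 2 w x) (hφ : ContDiffAt ℝ 2 φ x) (hb : 0 ≤ b)
    (hE : Ell lam Lam w x (b * ‖fderiv ℝ w x‖ + f))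
    (hP : ∀ (ξ : OrthonormalBasis (Fin n) ℝ (E n)) (a : Fin n → ℝ), (∀ k, lam ≤ a k ∧ a k ≤ Lam) →
      -P ≤ ∑ k, a k * D2 φ x (ξ k)) (hm : ‖fderiv ℝ φ x‖ ≤ m) :
    Ell lam Lam (fun y => w y + φ y) x (b * ‖fderiv ℝ (fun y => w y + φ y) x‖ + (f + m * b + P)) := by
  refine (ell_add hw hφ (Filter.EventuallyEq.refl _ _) hE hP).mono ?_
  have hd : fderiv ℝ (fun z => w z + φ z) x = fderiv ℝ w x + fderiv ℝ φ x :=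
    fderiv_fun_add (hw.differentiableAt (by norm_num)) (hφ.differentiableAt (by norm_num))
  have hw' : ‖fderiv ℝ w x‖ ≤ ‖fderiv ℝ (fun z => w z + φ z) x‖ + m := by
    have : fderiv ℝ w x = fderiv ℝ (fun z => w z + φ z) x - fderiv ℝ φ x := by rw [hd]; abel
    rw [this]
    exact (norm_sub_le _ _).trans (by linarith)
  have := mul_le_mul_of_nonneg_left hw' hb
  linarith

/-- Gaussian barrier. -/
noncomputable def gau (γ : ℝ) (c y : E n) : ℝ := Real.exp ((-γ) * ‖y - c‖ ^ 2)

lemma contDiff_gau (γ : ℝ) (c : E n) : ContDiff ℝ 2 (gau γ c) :=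
  Real.contDiff_exp.comp (contDiff_const.mul (contDiff_q c))

lemma fderiv_gau (γ : ℝ) (c x : E n) : fderiv ℝ (gau γ c) x = (gau γ c x * (-γ * 2)) • innerSL ℝ (x - c) := by
  have hq := contDiff_q c
  have h1 : ContDiff ℝ 2 (fun y => (-γ) * ‖y - c‖ ^ 2) := contDiff_const.mul hq
  have := fderiv_comp_real (Real.contDiff_exp) (h1.differentiable (by norm_num) x)
  have h2 : fderiv ℝ (fun y => (-γ) * ‖y - c‖ ^ 2) x = (-γ) • ((2:ℝ) • innerSL ℝ (x - c)) := by
    rw [← fderiv_q]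
    exact ((hq.differentiable (by norm_num) x).hasFDerivAt.const_mul (-γ)).fderiv
  have h3 : gau γ c = fun y => Real.exp ((-γ) * ‖y - c‖ ^ 2) := rfl
  rw [h3, this, h2, Real.deriv_exp, smul_smul, smul_smul]
  ring_nf

lemma D2_gau (γ : ℝ) (c x z : E n) : D2 (gau γ c) x z =
    gau γ c x * (4 * γ^2 * (inner ℝ (x - c) z)^2 - 2 * γ * ‖z‖^2) := by
  have hq := contDiff_q c
  have h1 : ContDiff ℝ 2 (fun y => (-γ) * ‖y - c‖ ^ 2) := contDiff_const.mul hq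
  have h3 : gau γ c = fun y => Real.exp ((-γ) * ‖y - c‖ ^ 2) := rfl
  have h2 : fderiv ℝ (fun y => (-γ) * ‖y - c‖ ^ 2) x = (-γ) • ((2:ℝ) • innerSL ℝ (x - c)) := by
    rw [← fderiv_q]
    exact ((hq.differentiable (by norm_num) x).hasFDerivAt.const_mul (-γ)).fderiv
  rw [h3, D2_comp (Real.contDiff_exp) h1.contDiffAt, D2_const_mul hq.contDiffAt, D2_q, h2,
    Real.deriv_exp, Real.deriv_exp]
  change _ * (-γ * (2 * inner ℝ (x - c) z))^2 + _ = _
  ring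

lemma sum_gau {lam Lam γ : ℝ} (hγ : 0 ≤ γ) (c x : E n)
    (ξ : OrthonormalBasis (Fin n) ℝ (E n)) (a : Fin n → ℝ) (ha : ∀ k, lam ≤ a k ∧ a k ≤ Lam) :
    gau γ c x * (4 * γ^2 * lam * ‖x - c‖^2 - 2 * γ * (n * Lam)) ≤ ∑ k, a k * D2 (gau γ c) x (ξ k) := by
  have h0 : 0 ≤ gau γ c x := (Real.exp_pos _).le
  have h1 : ∀ k, gau γ c x * (4 * γ^2 * lam * (inner ℝ (x - c) (ξ k))^2 - 2 * γ * Lam) ≤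
      a k * D2 (gau γ c) x (ξ k) := by
    intro k
    rw [D2_gau, ξ.orthonormal.1 k]
    obtain ⟨h1, h2⟩ := ha k
    have : a k * (gau γ c x * (4 * γ^2 * (inner ℝ (x - c) (ξ k))^2 - 2 * γ * 1^2)) =
      gau γ c x * (4 * γ^2 * a k * (inner ℝ (x - c) (ξ k))^2 - 2 * γ * a k) := by ring
    rw [this]
    gcongr
  refine le_trans (le_of_eq ?_) (Finset.sum_le_sum fun k _ => h1 k)
  rw [← Finset.mul_sum, Finset.sum_sub_distrib, ← Finset.mul_sum, frame_norm]
  simp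
  left; ring

lemma norm_fderiv_gau {γ : ℝ} (hγ : 0 ≤ γ) (c x : E n) : ‖fderiv ℝ (gau γ c) x‖ ≤ 2 * γ * ‖x - c‖ := by
  have h0 : 0 < gau γ c x := Real.exp_pos _
  have h1 : gau γ c x ≤ 1 := by
    unfold gau
    rw [Real.exp_le_one_iff]
    have : 0 ≤ γ * ‖x - c‖^2 := by positivity
    linarith
  rw [fderiv_gau, norm_smul, innerSL_apply_norm, norm_mul, Real.norm_of_nonneg h0.le, norm_mul, norm_neg,
    Real.norm_of_nonneg hγ]
  simp only [Real.norm_ofNat]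
  have : 0 ≤ 2 * γ * ‖x - c‖ := by positivity
  nlinarith

lemma gau_le_one {γ : ℝ} (hγ : 0 ≤ γ) (c x : E n) : gau γ c x ≤ 1 := by
  unfold gau
  rw [Real.exp_le_one_iff]
  have : 0 ≤ γ * ‖x - c‖^2 := by positivity
  linarith

/-- The domain. -/
def Om (e : E n) : Set (E n) := {x | ‖x‖ < 2 ∧ 0 < inner ℝ e x}

lemma isOpen_Om (e : E n) : IsOpen (Om e) :=
  (isOpen_lt continuous_norm continuous_const).inter
    (isOpen_lt continuous_const (by fun_prop : Continuous fun x : E n => inner ℝ e x))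

/-- All hypotheses on the solution. -/
structure Data (lam Lam α B q Kq d0 : ℝ) (e : E n) (u b f : E n → ℝ) (F : ℝ) : Prop where
  he : ‖e‖ = 1
  cont : ContinuousOn u {x | ‖x‖ < 2 ∧ 0 ≤ inner ℝ e x}
  flat : ∀ x, ‖x‖ < 2 → inner ℝ e x = 0 → u x = 0
  pos : ∀ x ∈ Om e, 0 < u x
  C2 : ∀ x ∈ Om e, ContDiffAt ℝ 2 u x
  bm : Measurable b
  fm : Measurable f
  b0 : ∀ x, 0 ≤ b x
  f0 : ∀ x, 0 ≤ f x
  Ep : ∀ x ∈ Om e, Ell lam Lam u x (b x * ‖fderiv ℝ u x‖ + f x)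
  Em : ∀ x ∈ Om e, Ell lam Lam (fun y => -u y) x (b x * ‖fderiv ℝ u x‖ + f x)
  B0 : 0 ≤ B
  F0 : 0 ≤ F
  hb : ∀ x ρ, 0 < ρ → Lnle b (Metric.ball x ρ) (ρ ^ α * B)
  hbq : ∫⁻ x, ENNReal.ofReal (b x) ^ q ≤ ENNReal.ofReal Kq
  hfn : Lnle f Set.univ F
  hf : ∀ x, inner ℝ e x = 0 → ∀ ρ, 0 < ρ → ρ ≤ d0 → Lnle f (Metric.ball x ρ) (ρ ^ α * F)

lemma norm_fderiv_neg (u : E n → ℝ) (x : E n) : ‖fderiv ℝ (fun y => -u y) x‖ = ‖fderiv ℝ u x‖ := by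
  rw [fderiv_fun_neg, norm_neg]

lemma Data.nonneg {lam Lam α B q Kq d0 : ℝ} {e : E n} {u b f : E n → ℝ} {F : ℝ}
    (D : Data lam Lam α B q Kq d0 e u b f F) (x : E n) (h1 : ‖x‖ < 2) (h2 : 0 ≤ inner ℝ e x) : 0 ≤ u x := by
  rcases h2.eq_or_lt with h | h
  · exact (D.flat x h1 h.symm).ge
  · exact (D.pos x ⟨h1, h⟩).le

lemma exists_small {α : ℝ} (hα : 0 < α) (B ε : ℝ) (hε : 0 < ε) :
    ∃ r0, 0 < r0 ∧ r0 ≤ 1 ∧ ∀ r, 0 ≤ r → r ≤ r0 → r ^ α * B ≤ ε := by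
  set B' := |B| + 1
  have hB' : 0 < B' := by positivity
  refine ⟨min 1 ((ε / B') ^ (1/α)), by positivity, min_le_left _ _, ?_⟩
  intro r hr h
  have h1 : r ^ α ≤ ε / B' := by
    calc r ^ α ≤ ((ε / B') ^ (1/α)) ^ α := by gcongr; exact h.trans (min_le_right _ _)
      _ = ε / B' := by rw [← Real.rpow_mul (by positivity)]; rw [one_div, inv_mul_cancel₀ hα.ne', Real.rpow_one]
  calc r ^ α * B ≤ r^α * B' := by gcongr; linarith [le_abs_self B]
    _ ≤ ε / B' * B' := by gcongr
    _ = ε := by field_simp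

open Metric in
/-- Growth lemma. -/
lemma growth (n : ℕ) (hn : 1 ≤ n) (lam Lam α B q Kq d0 : ℝ) (hlam : 0 < lam) (hL : lam ≤ Lam)
    (hα : 0 < α) : ∃ M δ r0 ε0 : ℝ, 1 < M ∧ 0 < δ ∧ δ < 1 ∧ 0 < r0 ∧ r0 ≤ 1 ∧ 0 < ε0 ∧
    ∀ (e : E n) (u b f : E n → ℝ) (F : ℝ), Data lam Lam α B q Kq d0 e u b f F →
    ∀ (x : E n) (r t : ℝ), 0 < r → r ≤ r0 → closedBall x (5 * r) ⊆ Om e → 0 < t → F ≤ ε0 * t →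
      volume (ball x r ∩ {y | u y ≤ M * t}) ≤ ENNReal.ofReal δ * volume (ball x r) →
      ∀ y ∈ closedBall x (4 * r), t < u y := by
  obtain ⟨κ, C, hκ, hC, H⟩ := abp n hn lam Lam hlam
  have hLam : 0 < Lam := hlam.trans_le hL
  have hn0 : (0:ℝ) < n := by exact_mod_cast hn
  set γ : ℝ := n * Lam / (2 * lam) with hγ
  have hγ0 : 0 < γ := by positivity
  have hexp : 0 < Real.exp (-(16 * γ)) - Real.exp (-(25 * γ)) := by
    rw [sub_pos, Real.exp_lt_exp]; linarith
  set M : ℝ := 2 / (Real.exp (-(16 * γ)) - Real.exp (-(25 * γ))) with hM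
  have hM1 : 1 < M := by
    rw [hM, one_lt_div hexp]
    have h1 : Real.exp (-(16 * γ)) ≤ 1 := by rw [Real.exp_le_one_iff]; linarith
    have := Real.exp_pos (-(25 * γ))
    linarith
  have hM0 : 0 < M := by linarith
  set A : ℝ := M * (2 * γ * (n * Lam)) with hA
  have hA0 : 0 < A := by positivity
  set ε : ℝ := 1 / (20 * C * A) with hε
  set ω : ℝ := (volume (ball (0 : E n) 1)).toReal with hω
  have hωpos : 0 < ω := ENNReal.toReal_pos (measure_ball_pos _ _ one_pos).ne' measure_ball_lt_top.ne
  obtain ⟨r1, hr1, hr11, hr1'⟩ := exists_small hα B (min κ (1 / (20 * C * (M * (10 * γ))))) (by positivity)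
  refine ⟨M, min (1/2) (ε^n / ω), r1 / 5, 1 / (20 * C), hM1, by positivity,
    lt_of_le_of_lt (min_le_left _ _) (by norm_num), by positivity, by linarith, by positivity, ?_⟩
  intro e u b f F D x r t hr hr0 hsub ht hF hvol
  have h5r : 0 < 5 * r := by positivity
  have hsmall := hr1' (5 * r) h5r.le (by linarith)
  set c0 := Real.exp (-(25 * γ)) with hc0
  set φ : E n → ℝ := fun y => (t * M) * gau (γ / r^2) x y + (-(t * M) * c0) with hφ
  have hg := contDiff_gau (γ / r^2) x
  have hφc : ContDiff ℝ 2 φ := by fun_prop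
  have hγr : 0 < γ / r^2 := by positivity
  have hgau : ∀ y, gau (γ / r^2) x y = Real.exp (-(γ * (‖y - x‖ / r)^2)) := by
    intro y; unfold gau; congr 1; field_simp
  have hφle : ∀ y, φ y ≤ t * M := by
    intro y
    have := gau_le_one hγr.le x y
    have h2 : 0 ≤ t * M * c0 := by positivity
    have := mul_le_mul_of_nonneg_left this (by positivity : 0 ≤ t * M)
    simp only [hφ]; linarith
  set T1 : ℝ := t * A / r^2 * (ε * r) with hT1
  set g1 : E n → ℝ := Set.indicator (ball x r) (fun _ => t * A / r^2) with hg1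
  have hg1m : Measurable g1 := measurable_const.indicator measurableSet_ball
  have hg10 : ∀ y, 0 ≤ g1 y := fun y => Set.indicator_nonneg (fun _ _ => by positivity) y
  set m : ℝ := t * M * (10 * γ / r) with hm
  have hm0 : 0 < m := by positivity
  have ucont : ContinuousOn u (closedBall x (5 * r)) :=
    D.cont.mono (fun y hy => ⟨(hsub hy).1, (hsub hy).2.le⟩)
  have key := H x (5 * r) h5r (fun y => -u y + φ y) b (fun y => (f y + m * b y) + g1 y)
    (ucont.neg.add hφc.continuous.continuousOn) ?_ ?_ D.bm
    ((D.fm.add (D.bm.const_mul _)).add hg1m) D.b0 ?_ ?_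
    ((D.hb x (5*r) h5r).mono (hsmall.trans (min_le_left _ _)))
    ((F + m * ((5*r)^α * B)) + T1) ?_ ?_
  · intro y hy
    have hy5 : y ∈ closedBall x (5 * r) := closedBall_subset_closedBall (by linarith) hy
    have h1 := key y hy5
    have e1 : C * (5 * r) * (F + m * ((5*r)^α * B) + T1) =
        5 * C * (r * F) + 5 * C * (t * (M * (10 * γ)) * ((5*r)^α * B)) + 5 * C * (t * A * ε) := by
      simp only [hm, hT1]; field_simp
    have b1 : 5 * C * (r * F) ≤ t / 4 := by
      have h2 : r * F ≤ 1 / (20 * C) * t := by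
        calc r * F ≤ 1 * F := by gcongr; exact D.F0; linarith
          _ ≤ _ := by linarith
      calc 5 * C * (r * F) ≤ 5 * C * (1 / (20 * C) * t) := by gcongr
        _ = t / 4 := by field_simp; norm_num
    have b2 : 5 * C * (t * (M * (10 * γ)) * ((5*r)^α * B)) ≤ t / 4 := by
      calc _ ≤ 5 * C * (t * (M * (10 * γ)) * (1 / (20 * C * (M * (10 * γ))))) := by
            gcongr; exact hsmall.trans (min_le_right _ _)
        _ = t / 4 := by field_simp; norm_num
    have b3 : 5 * C * (t * A * ε) = t / 4 := by simp only [hε]; field_simp; norm_num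
    have hlow : 2 * t ≤ φ y := by
      simp only [hφ, hgau]
      have h3 : ‖y - x‖ / r ≤ 4 := (div_le_iff₀ hr).2 (mem_closedBall_iff_norm.1 hy)
      have h4 : (‖y - x‖ / r)^2 ≤ 16 := by
        have : 0 ≤ ‖y - x‖ / r := by positivity
        nlinarith
      have h5 : Real.exp (-(16 * γ)) ≤ Real.exp (-(γ * (‖y - x‖ / r)^2)) := by
        rw [Real.exp_le_exp]
        have := mul_le_mul_of_nonneg_left h4 hγ0.le
        linarith
      have h6 : M * (Real.exp (-(16 * γ)) - Real.exp (-(25 * γ))) = 2 := by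
        rw [hM]; exact div_mul_cancel₀ _ hexp.ne'
      have h7 := mul_le_mul_of_nonneg_left h5 (by positivity : 0 ≤ t * M)
      have h8 : t * (M * (Real.exp (-(16 * γ)) - Real.exp (-(25 * γ)))) = t * 2 := by rw [h6]
      simp only [hc0]
      linarith
    rw [e1] at h1
    linarith
  · intro y hy
    have h1 := hsub (sphere_subset_closedBall hy)
    have h2 := D.pos y h1
    have : φ y = 0 := by
      simp only [hφ, hgau, mem_sphere_iff_norm.1 hy]
      have : 5 * r / r = 5 := by field_simp
      rw [this, hc0]; ring_nf
    linarith
  · intro y hy _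
    exact (D.C2 y (hsub (ball_subset_closedBall hy))).neg.add hφc.contDiffAt
  · intro y
    have := D.f0 y
    have := D.b0 y
    have := hg10 y
    positivity
  · intro y hy hpos
    have hyO := hsub (ball_subset_closedBall hy)
    refine ell_barrier (D.C2 y hyO).neg hφc.contDiffAt (D.b0 y) ?_ ?_ ?_
    · rw [norm_fderiv_neg]; exact D.Em y hyO
    · intro ξ a ha
      have e1 : ∀ z, D2 φ y z = (t * M) * D2 (gau (γ / r^2) x) y z := by
        intro z
        simp only [hφ]
        rw [D2_add (by fun_prop) (by fun_prop), D2_const_mul (by fun_prop), D2_const]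
        ring
      simp only [e1]
      have e2 : ∑ k, a k * (t * M * D2 (gau (γ / r^2) x) y (ξ k)) =
          t * M * ∑ k, a k * D2 (gau (γ / r^2) x) y (ξ k) := by
        rw [Finset.mul_sum]; exact Finset.sum_congr rfl fun k _ => by ring
      rw [e2]
      have hs := mul_le_mul_of_nonneg_left (sum_gau hγr.le x y ξ a ha) (by positivity : 0 ≤ t * M)
      refine le_trans ?_ hs
      have hgp : 0 < gau (γ / r^2) x y := Real.exp_pos _
      by_cases hyr : y ∈ ball x r
      · have : g1 y = t * A / r^2 := by simp only [hg1]; rw [Set.indicator_of_mem hyr]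
        rw [this]
        have h1 : -(2 * (γ / r^2) * (n * Lam)) ≤ gau (γ / r^2) x y *
          (4 * (γ / r^2)^2 * lam * ‖y - x‖^2 - 2 * (γ / r^2) * (n * Lam)) := by
          have hg1 := gau_le_one hγr.le x y
          have h2 : 0 ≤ gau (γ / r^2) x y * (4 * (γ / r^2)^2 * lam * ‖y - x‖^2) := by positivity
          have h3 : gau (γ / r^2) x y * (2 * (γ / r^2) * (n * Lam)) ≤ 1 * (2 * (γ / r^2) * (n * Lam)) := by
            gcongr
          linarith
        have h2 := mul_le_mul_of_nonneg_left h1 (by positivity : 0 ≤ t * M)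
        refine le_trans (le_of_eq ?_) h2
        rw [hA]; ring
      · have : g1 y = 0 := by simp only [hg1]; rw [Set.indicator_of_notMem hyr]
        rw [this, neg_zero]
        have hyr' : r ≤ ‖y - x‖ := by rw [mem_ball_iff_norm] at hyr; exact not_lt.1 hyr
        have h3 : 0 ≤ 4 * (γ / r^2)^2 * lam * ‖y - x‖^2 - 2 * (γ / r^2) * (n * Lam) := by
          have : 4 * (γ / r^2)^2 * lam * r^2 ≤ 4 * (γ / r^2)^2 * lam * ‖y - x‖^2 := by gcongr
          have h4 : 4 * (γ / r^2)^2 * lam * r^2 = 2 * (γ / r^2) * (n * Lam) := by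
            have : n * Lam = 2 * lam * γ := by rw [hγ]; field_simp
            rw [this]; field_simp; norm_num
          linarith
        positivity
    · have h1 : fderiv ℝ φ y = (t * M) • fderiv ℝ (gau (γ / r^2) x) y := by
        have h3 := (hg.differentiable (by norm_num) y).hasFDerivAt
        exact ((h3.const_mul (t * M)).add_const _).fderiv
      rw [h1, norm_smul, Real.norm_of_nonneg (by positivity), hm]
      gcongr
      refine (norm_fderiv_gau hγr.le x y).trans ?_
      calc 2 * (γ / r^2) * ‖y - x‖ ≤ 2 * (γ / r^2) * (5 * r) := by
            gcongr; exact (mem_ball_iff_norm.1 hy).le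
        _ = 10 * γ / r := by field_simp; norm_num
  · have := D.F0
    have := D.B0
    positivity
  · have hB := D.B0
    refine Lnle.add hn (T := F + m * ((5*r)^α * B)) (T' := T1) ?_ ?_ (D.fm.add (D.bm.const_mul _)) hg1m ?_ hg10
      ?_ (by positivity)
    · refine Lnle.mono_set (S := ball x (5 * r)) ?_ (fun y hy => hy.1)
      refine Lnle.add hn (D.hfn.mono_set (Set.subset_univ _)) ((D.hb x _ h5r).const_mul hm0.le) D.fm
        (D.bm.const_mul _) D.f0 ?_ D.F0 (by positivity)
      intro y
      have := D.b0 y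
      positivity
    · unfold Lnle
      have hstep : ∀ y, ENNReal.ofReal (g1 y) ^ n = Set.indicator (ball x r) (fun _ => ENNReal.ofReal (t * A / r^2) ^ n) y := by
        intro y
        by_cases hy : y ∈ ball x r
        · simp only [hg1]; rw [Set.indicator_of_mem hy, Set.indicator_of_mem hy]
        · simp only [hg1]; rw [Set.indicator_of_notMem hy, Set.indicator_of_notMem hy]
          simp; omega
      simp only [hstep]
      rw [lintegral_indicator measurableSet_ball, Measure.restrict_restrict measurableSet_ball,
        lintegral_const, Measure.restrict_apply_univ, hT1, ENNReal.ofReal_mul (by positivity), mul_pow]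
      gcongr
      calc volume (ball x r ∩ {y | y ∈ ball x (5 * r) ∧ 0 < -u y + φ y}) ≤
          volume (ball x r ∩ {y | u y ≤ M * t}) := by
            refine measure_mono ?_
            rintro y ⟨hy, -, hy2⟩
            refine ⟨hy, ?_⟩
            have := hφle y
            change u y ≤ M * t
            linarith
        _ ≤ _ := hvol
        _ ≤ ENNReal.ofReal (ε^n / ω) * (ENNReal.ofReal r ^ n * ENNReal.ofReal ω) := by
            rw [Measure.addHaar_ball_of_pos _ _ hr, hω, ENNReal.ofReal_toReal measure_ball_lt_top.ne]
            rw [ENNReal.ofReal_pow hr.le]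
            simp only [finrank_euclideanSpace, Fintype.card_fin]
            gcongr
            exact min_le_right _ _
        _ = ENNReal.ofReal (ε * r) ^ n := by
            rw [← ENNReal.ofReal_pow hr.le, ← ENNReal.ofReal_mul (by positivity), ← ENNReal.ofReal_mul (by positivity),
              ← ENNReal.ofReal_pow (by positivity)]
            congr 1
            field_simp
            rw [mul_pow]
    · intro y
      have := D.f0 y
      have := D.b0 y
      positivity
    · have := D.F0
      positivity

end BH


namespace BH
variable {n : ℕ}

open Metric in
/-- Interior lower bound in the tangent ball. -/
lemma hopf_ball (n : ℕ) (hn : 1 ≤ n) (lam Lam α B q Kq d0 : ℝ) (hlam : 0 < lam) (hL : lam ≤ Lam)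
    : ∃ κ C γ : ℝ, 0 < κ ∧ 0 < C ∧ 0 < γ ∧
    ∀ (e : E n) (u b f : E n → ℝ) (F : ℝ), Data lam Lam α B q Kq d0 e u b f F →
    ∀ (x0 : E n) (h t : ℝ), 0 < h → 2 * h ≤ d0 → inner ℝ e x0 = 0 → ‖x0‖ + 2 * h < 2 → 0 ≤ t →
      h ^ α * B ≤ κ → (∀ y ∈ closedBall (x0 + h • e) (h/2), t ≤ u y) →
      ∀ y ∈ closedBall x0 h, 0 ≤ inner ℝ e y →
        t * (γ * Real.exp (-γ) * ((2 * h * inner ℝ e y - ‖y - x0‖^2) / h^2)) -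
          C * h * ((2*h)^α * F + t * (2 * γ / h) * (h^α * B)) ≤ u y := by
  obtain ⟨κ, C, hκ, hC, H⟩ := abp n hn lam Lam hlam
  have hLam : 0 < Lam := hlam.trans_le hL
  have hn0 : (0:ℝ) < n := by exact_mod_cast hn
  set γ : ℝ := 2 * n * Lam / lam with hγ
  have hγ0 : 0 < γ := by positivity
  refine ⟨κ, C, γ, hκ, hC, hγ0, ?_⟩
  intro e u b f F D x0 h t hh hd hx0 hnorm ht hBκ hlow y hy hye
  have hF0 := D.F0
  have hB0 := D.B0
  set z0 := x0 + h • e with hz0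
  have hee : inner ℝ e e = (1:ℝ) := by rw [real_inner_self_eq_norm_sq, D.he]; norm_num
  have hid : ∀ y, ‖y - z0‖^2 = ‖y - x0‖^2 - 2 * h * inner ℝ e y + h^2 := by
    intro y
    have : y - z0 = (y - x0) - h • e := by rw [hz0]; abel
    rw [this, norm_sub_sq_real, norm_smul, D.he, inner_smul_right, inner_sub_left, real_inner_comm e y,
      real_inner_comm e x0, hx0]
    simp only [Real.norm_eq_abs, mul_one, sq_abs]; ring
  have hz0n : ‖z0 - x0‖ = h := by
    rw [hz0, add_sub_cancel_left, norm_smul, D.he, Real.norm_of_nonneg hh.le, mul_one]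
  have hdom : ∀ y ∈ closedBall z0 h, ‖y‖ < 2 ∧ 0 ≤ inner ℝ e y := by
    intro y hy
    have h1 := mem_closedBall_iff_norm.1 hy
    constructor
    · have : y = (y - z0) + (z0 - x0) + x0 := by abel
      have h2 : ‖y‖ ≤ ‖y - z0‖ + ‖z0 - x0‖ + ‖x0‖ := by
        conv_lhs => rw [this]
        exact norm_add₃_le
      linarith
    · have h2 := hid y
      have h3 : ‖y - z0‖^2 ≤ h^2 := by gcongr
      have h4 : 0 ≤ ‖y - x0‖^2 := by positivity
      nlinarith
  have hdom' : ∀ y ∈ ball z0 h, y ∈ Om e := by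
    intro y hy
    refine ⟨(hdom y (ball_subset_closedBall hy)).1, ?_⟩
    have h1 := mem_ball_iff_norm.1 hy
    have h2 := hid y
    have h3 : ‖y - z0‖^2 < h^2 := by gcongr
    have h4 : 0 ≤ ‖y - x0‖^2 := by positivity
    nlinarith
  set c0 := Real.exp (-γ) with hc0
  set φ : E n → ℝ := fun y => t * gau (γ / h^2) z0 y + (-t * c0) with hφ
  have hg := contDiff_gau (γ / h^2) z0
  have hφc : ContDiff ℝ 2 φ := by fun_prop
  have hγr : 0 < γ / h^2 := by positivity
  have hgau : ∀ y, gau (γ / h^2) z0 y = Real.exp (-(γ * (‖y - z0‖^2 / h^2))) := by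
    intro y; unfold gau; congr 1; field_simp
  set m : ℝ := t * (2 * γ / h) with hm
  have hm0 : 0 ≤ m := by positivity
  have hφle : ∀ y, φ y ≤ t := by
    intro y
    have := gau_le_one hγr.le z0 y
    have h2 : 0 ≤ t * c0 := by positivity
    have := mul_le_mul_of_nonneg_left this ht
    simp only [hφ]; linarith
  have key := H z0 h hh (fun y => -u y + φ y) b (fun y => f y + m * b y)
    (((D.cont.mono hdom)).neg.add hφc.continuous.continuousOn) ?_ ?_ D.bm
    (D.fm.add (D.bm.const_mul _)) D.b0 ?_ ?_ ((D.hb z0 h hh).mono hBκ)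
    ((2*h)^α * F + m * (h^α * B)) (by positivity) ?_
  · have hE0 : 0 ≤ C * h * ((2*h)^α * F + m * (h^α * B)) := by positivity
    by_cases hyz : y ∈ closedBall z0 h
    · have h1 := key y hyz
      have h2 : t * (γ * c0 * ((2 * h * inner ℝ e y - ‖y - x0‖^2) / h^2)) ≤ φ y := by
        simp only [hφ, hgau]
        have e1 : (2 * h * inner ℝ e y - ‖y - x0‖^2) / h^2 = 1 - ‖y - z0‖^2 / h^2 := by
          rw [hid]; field_simp; ring
        rw [e1]
        set s := ‖y - z0‖^2 / h^2
        have e2 : Real.exp (-(γ * s)) = c0 * Real.exp (γ * (1 - s)) := by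
          rw [hc0, ← Real.exp_add]; ring_nf
        have e3 := Real.add_one_le_exp (γ * (1 - s))
        have e4 : c0 * (γ * (1 - s) + 1) ≤ Real.exp (-(γ * s)) := by
          rw [e2]; gcongr
        have := mul_le_mul_of_nonneg_left e4 ht
        linarith
      linarith
    · have h3 : h < ‖y - z0‖ := by rw [mem_closedBall_iff_norm] at hyz; exact not_le.1 hyz
      have h4 : h^2 < ‖y - z0‖^2 := by gcongr
      have h5 : (2 * h * inner ℝ e y - ‖y - x0‖^2) / h^2 ≤ 0 := by
        refine div_nonpos_of_nonpos_of_nonneg ?_ (by positivity)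
        rw [hid] at h4; linarith
      have h6 : t * (γ * c0 * ((2 * h * inner ℝ e y - ‖y - x0‖^2) / h^2)) ≤ 0 :=
        mul_nonpos_of_nonneg_of_nonpos ht (mul_nonpos_of_nonneg_of_nonpos (by positivity) h5)
      have h7 : 0 ≤ u y := by
        refine D.nonneg y ?_ hye
        have := norm_le_norm_add_norm_sub' y x0
        have := mem_closedBall_iff_norm.1 hy
        rw [← norm_neg (y - x0)] at this
        simp at this
        linarith [norm_sub_rev x0 y]
      linarith
  · intro y hy
    have h1 := hdom y (sphere_subset_closedBall hy)
    have h2 := D.nonneg y h1.1 h1.2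
    have : φ y = 0 := by
      simp only [hφ, hgau, mem_sphere_iff_norm.1 hy]
      have : h^2 / h^2 = 1 := by field_simp
      rw [this, hc0]; ring_nf
    linarith
  · intro y hy _
    exact (D.C2 y (hdom' y hy)).neg.add hφc.contDiffAt
  · intro y
    have := D.f0 y
    have := D.b0 y
    positivity
  · intro y hy hpos
    have hyO := hdom' y hy
    have hfar : h / 2 ≤ ‖y - z0‖ := by
      by_contra hcon
      have := hlow y (mem_closedBall_iff_norm.2 (not_le.1 hcon).le)
      have := hφle y
      linarith
    have e0 : f y + m * b y = f y + m * b y + 0 := by ring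
    rw [e0]
    refine ell_barrier (D.C2 y hyO).neg hφc.contDiffAt (D.b0 y) ?_ ?_ ?_
    · rw [norm_fderiv_neg]; exact D.Em y hyO
    · intro ξ a ha
      have e1 : ∀ z, D2 φ y z = t * D2 (gau (γ / h^2) z0) y z := by
        intro z
        simp only [hφ]
        rw [D2_add (by fun_prop) (by fun_prop), D2_const_mul (by fun_prop), D2_const]
        ring
      simp only [e1]
      have e2 : ∑ k, a k * (t * D2 (gau (γ / h^2) z0) y (ξ k)) =
          t * ∑ k, a k * D2 (gau (γ / h^2) z0) y (ξ k) := by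
        rw [Finset.mul_sum]; exact Finset.sum_congr rfl fun k _ => by ring
      rw [e2, neg_zero]
      refine mul_nonneg ht (le_trans ?_ (sum_gau hγr.le z0 y ξ a ha))
      have hgp : 0 < gau (γ / h^2) z0 y := Real.exp_pos _
      refine mul_nonneg hgp.le ?_
      have : 4 * (γ / h^2)^2 * lam * (h/2)^2 ≤ 4 * (γ / h^2)^2 * lam * ‖y - z0‖^2 := by gcongr
      have h4 : 4 * (γ / h^2)^2 * lam * (h/2)^2 = 2 * (γ / h^2) * (n * Lam) := by
        have : n * Lam = lam * γ / 2 := by rw [hγ]; field_simp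
        rw [this]; field_simp; try norm_num
      linarith
    · have h1 : fderiv ℝ φ y = t • fderiv ℝ (gau (γ / h^2) z0) y := by
        have h3 := (hg.differentiable (by norm_num) y).hasFDerivAt
        exact ((h3.const_mul t).add_const _).fderiv
      rw [h1, norm_smul, Real.norm_of_nonneg ht, hm]
      gcongr
      refine (norm_fderiv_gau hγr.le z0 y).trans ?_
      calc 2 * (γ / h^2) * ‖y - z0‖ ≤ 2 * (γ / h^2) * h := by
            gcongr; exact (mem_ball_iff_norm.1 hy).le
        _ = 2 * γ / h := by field_simp
  · refine Lnle.mono_set (S := ball z0 h) ?_ (fun y hy => hy.1)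
    refine Lnle.add hn ?_ ((D.hb z0 h hh).const_mul hm0) D.fm
        (D.bm.const_mul _) D.f0 ?_ (by positivity) (by positivity)
    · refine (D.hf x0 hx0 (2*h) (by positivity) hd).mono_set ?_
      intro y hy
      rw [mem_ball_iff_norm] at hy ⊢
      have : y - x0 = (y - z0) + (z0 - x0) := by abel
      rw [this]
      refine (norm_add_le _ _).trans_lt (by linarith)
    · intro y
      have := D.b0 y
      positivity

open Metric in
lemma hopf (n : ℕ) (hn : 1 ≤ n) (lam Lam α B q Kq d0 : ℝ) (hlam : 0 < lam) (hL : lam ≤ Lam)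
    (hα : 0 < α) (hd0 : 0 < d0) (hd1 : d0 ≤ 1/4) : ∃ h θ c C : ℝ, 0 < h ∧ h ≤ 1/8 ∧ 0 < θ ∧ 0 < c ∧ 0 < C ∧
    ∀ (e : E n) (u b f : E n → ℝ) (F : ℝ), Data lam Lam α B q Kq d0 e u b f F →
    ∀ (x0 : E n) (t : ℝ), inner ℝ e x0 = 0 → ‖x0‖ < 3/2 → 0 ≤ t →
      (∀ y ∈ closedBall (x0 + h • e) (h/2), t ≤ u y) →
      ∀ s, 0 < s → s ≤ θ → (c * t - C * F) * s ≤ u (x0 + s • e) := by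
  obtain ⟨κ1, C1, γ, hκ1, hC1, hγ, H1⟩ := hopf_ball n hn lam Lam α B q Kq d0 hlam hL
  obtain ⟨κ2, C2, hκ2, hC2, H2⟩ := BL n hn lam Lam α hlam hL hα
  set θ : ℝ := min 1 (1 / (4 * C2)) with hθ
  have hθ0 : 0 < θ := by positivity
  have hθ1 : θ ≤ 1 := min_le_left _ _
  have hθ2 : C2 * θ ≤ 1/4 := by
    have : θ ≤ 1 / (4 * C2) := min_le_right _ _
    calc C2 * θ ≤ C2 * (1 / (4 * C2)) := by gcongr
      _ = 1/4 := by field_simp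
  set ε : ℝ := min (min κ1 κ2) (min (1 / (8 * C2)) (θ / (8 * C2 * C1 * Real.exp γ))) with hε
  have hexp := Real.exp_pos γ
  have hε0 : 0 < ε := by positivity
  obtain ⟨r0, hr0, hr01, hsm⟩ := exists_small hα B ε hε0
  set h : ℝ := min r0 (d0/4) with hh
  have hh0 : 0 < h := by positivity
  have hhd : h ≤ d0/4 := min_le_right _ _
  have hh1 : h ≤ 1 := by linarith
  set a0 : ℝ := 2 * γ * Real.exp (-γ) / h with ha0
  have ha00 : 0 < a0 := by positivity
  set r : ℝ := θ * h with hr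
  have hrpos : 0 < r := by positivity
  have hrh : r ≤ h := mul_le_of_le_one_left hh0.le hθ1
  refine ⟨h, r, a0 / 2, C2 * (C1 * (2*h)^α / θ + 1), hh0, by linarith, hrpos, by positivity, by positivity, ?_⟩
  intro e u b f F D x0 t hx0 hx0n ht hlow s hs hsr
  have hF0 := D.F0
  have hB0 := D.B0
  have hsB := hsm h hh0.le (min_le_left _ _)
  set E0 : ℝ := C1 * h * ((2*h)^α * F + t * (2 * γ / h) * (h^α * B)) with hE0
  have hE00 : 0 ≤ E0 := by positivity
  have hball := H1 e u b f F D x0 h t hh0 (by linarith) hx0 (by linarith) ht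
    (hsB.trans ((min_le_left _ _).trans (min_le_left _ _))) hlow
  set a : ℝ := a0 * t with ha
  have ha0' : 0 ≤ a := by positivity
  have hrα : r ^ α ≤ h ^ α := by gcongr
  have hnb : ∀ y ∈ closedBall x0 r, ‖y‖ < 2 := by
    intro y hy
    have h1 := mem_closedBall_iff_norm.1 hy
    have h2 := norm_le_norm_add_norm_sub' y x0
    linarith [norm_sub_rev x0 y]
  set φ : E n → ℝ := fun y => a * innerSL ℝ e y with hφ
  have hφc : ContDiff ℝ 2 φ := by fun_prop
  have key := H2 e x0 r (fun y => -u y + φ y) b (fun y => f y + a * b y) (a * r / (2 * h) + E0 / r) B (F + a * B)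
    D.he hx0 hrpos (by positivity) hB0 (by positivity) ?_ ?_ ?_ ?_ D.bm (D.fm.add (D.bm.const_mul _)) D.b0
    ?_ ?_ (fun ρ hρ _ => D.hb x0 ρ hρ) ?_ ?_ s hs hsr
  · have hin : inner ℝ e (x0 + s • e) = s := by
      rw [inner_add_right, inner_smul_right, hx0, real_inner_self_eq_norm_sq, D.he]; simp
    have h1 : φ (x0 + s • e) = a * s := by simp only [hφ, innerSL_apply_apply, hin]
    rw [h1] at key
    have b1 : C2 * (a * r / (2 * h)) ≤ a / 8 := by
      have : C2 * (a * r / (2 * h)) = a / 2 * (C2 * θ) := by rw [hr]; field_simp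
      rw [this]
      calc a / 2 * (C2 * θ) ≤ a / 2 * (1/4) := by gcongr
        _ = a / 8 := by ring
    have b2 : C2 * (E0 / r) ≤ C2 * (C1 * (2*h)^α / θ) * F + a / 8 := by
      have e1 : C2 * (E0 / r) = C2 * (C1 * (2*h)^α / θ) * F +
          a * (C2 * C1 * Real.exp γ / θ * (h^α * B)) := by
        have : a = 2 * γ * t / (Real.exp γ * h) := by
          rw [ha, ha0, Real.exp_neg]; field_simp
        rw [this, hE0, hr]; field_simp
      rw [e1]
      have e2 : C2 * C1 * Real.exp γ / θ * (h^α * B) ≤ 1/8 := by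
        calc _ ≤ C2 * C1 * Real.exp γ / θ * (θ / (8 * C2 * C1 * Real.exp γ)) := by
              gcongr; exact hsB.trans ((min_le_right _ _).trans (min_le_right _ _))
          _ = 1/8 := by field_simp
      have := mul_le_mul_of_nonneg_left e2 ha0'
      linarith
    have hr1 : r ^ α ≤ 1 := Real.rpow_le_one hrpos.le (by linarith) hα.le
    have b3 : C2 * (r^α * (F + a * B)) ≤ C2 * F + a / 8 := by
      have e1 : r^α * F ≤ F := mul_le_of_le_one_left hF0 hr1
      have e2 : r^α * B ≤ 1 / (8 * C2) := by
        calc r^α * B ≤ h^α * B := by gcongr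
          _ ≤ _ := hsB.trans ((min_le_right _ _).trans (min_le_left _ _))
      calc C2 * (r^α * (F + a * B)) = C2 * (r^α * F) + C2 * a * (r^α * B) := by ring
        _ ≤ C2 * F + C2 * a * (1 / (8 * C2)) := by gcongr
        _ = _ := by field_simp
    have b4 : C2 * (a * r / (2 * h) + E0 / r + r ^ α * (F + a * B)) * s ≤
      (a / 2 + C2 * (C1 * (2*h)^α / θ + 1) * F) * s := by
      refine mul_le_mul_of_nonneg_right ?_ hs.le
      have : C2 * (a * r / (2 * h) + E0 / r + r ^ α * (F + a * B)) =
        C2 * (a * r / (2 * h)) + C2 * (E0 / r) + C2 * (r ^ α * (F + a * B)) := by ring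
      rw [this]
      linarith
    have b5 : (a0 / 2 * t - C2 * (C1 * (2*h)^α / θ + 1) * F) * s = a * s -
      (a / 2 + C2 * (C1 * (2*h)^α / θ + 1) * F) * s := by rw [ha]; ring
    rw [b5]; linarith
  · refine ContinuousOn.add (ContinuousOn.neg (D.cont.mono ?_)) hφc.continuous.continuousOn
    exact fun y hy => ⟨hnb y hy.1, hy.2⟩
  · intro y hy hy0
    have := D.nonneg y (hnb y hy) hy0.ge
    simp only [hφ, innerSL_apply_apply, hy0]
    linarith
  · intro y hy hy0
    have h1 := hball y (closedBall_subset_closedBall hrh hy) hy0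
    have h2 := mem_closedBall_iff_norm.1 hy
    have h3 : ‖y - x0‖^2 ≤ r^2 := by gcongr
    have e1 : t * (γ * Real.exp (-γ) * ((2 * h * inner ℝ e y - ‖y - x0‖^2) / h^2)) =
      a * inner ℝ e y - a * ‖y - x0‖^2 / (2 * h) := by
      rw [ha, ha0]; field_simp
    have e2 : a * ‖y - x0‖^2 / (2 * h) ≤ a * r^2 / (2 * h) := by gcongr
    have e3 : (a * r / (2 * h) + E0 / r) * r = a * r^2 / (2 * h) + E0 := by field_simp
    rw [e3]
    simp only [hφ, innerSL_apply_apply]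
    rw [e1] at h1
    linarith
  · intro y hy hy0
    exact (D.C2 y ⟨hnb y (ball_subset_closedBall hy), hy0⟩).neg.add hφc.contDiffAt
  · intro y
    have := D.f0 y
    have := D.b0 y
    positivity
  · intro y hy hy0
    have hyO : y ∈ Om e := ⟨hnb y (ball_subset_closedBall hy), hy0⟩
    have e0 : f y + a * b y = f y + a * b y + 0 := by ring
    rw [e0]
    refine ell_barrier (D.C2 y hyO).neg hφc.contDiffAt (D.b0 y) ?_ ?_ ?_
    · rw [norm_fderiv_neg]; exact D.Em y hyO
    · intro ξ c _
      have e1 : ∀ z, D2 φ y z = 0 := by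
        intro z
        simp only [hφ]
        rw [D2_const_mul (by fun_prop), D2_clm, mul_zero]
      simp [e1]
    · have h2 : HasFDerivAt (fun y => innerSL ℝ e y) (innerSL ℝ e) y := (innerSL ℝ e).hasFDerivAt
      have h1 : fderiv ℝ φ y = a • innerSL ℝ e := (h2.const_mul a).fderiv
      rw [h1, norm_smul, innerSL_apply_norm, D.he, Real.norm_of_nonneg ha0', mul_one]
  · refine le_trans ?_ (hsB.trans ((min_le_left _ _).trans (min_le_right _ _)))
    gcongr
  · intro ρ hρ hρr
    have e1 : ρ^α * (F + a * B) = ρ^α * F + a * (ρ^α * B) := by ring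
    rw [e1]
    refine Lnle.add hn (D.hf x0 hx0 ρ hρ (by linarith)) ((D.hb x0 ρ hρ).const_mul ha0') D.fm
        (D.bm.const_mul _) D.f0 ?_ (by positivity) (by positivity)
    intro y
    have := D.b0 y
    positivity

end BH


namespace BH
variable {n : ℕ}

/-- Distance-like function to the boundary of the half ball. -/
noncomputable def dd (e x : E n) : ℝ := min (2 - ‖x‖) (inner ℝ e x)

lemma mem_Om_iff (e x : E n) : x ∈ Om e ↔ 0 < dd e x := by
  unfold Om dd
  simp

lemma dd_le_lip (e : E n) (he : ‖e‖ = 1) (x y : E n) : dd e y ≤ dd e x + ‖y - x‖ := by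
  unfold dd
  rw [← min_add_add_right]
  refine min_le_min ?_ ?_
  · have := norm_le_norm_add_norm_sub' x y
    linarith [norm_sub_rev x y]
  · have h1 : inner ℝ e y = inner ℝ e x + inner ℝ e (y - x) := by rw [← inner_add_right]; congr 1; abel
    have h2 := real_inner_le_norm e (y - x)
    rw [he, one_mul] at h2
    linarith

lemma dd_concave (e x z : E n) (s : ℝ) (h0 : 0 ≤ s) (h1 : s ≤ 1) :
    (1 - s) * dd e x + s * dd e z ≤ dd e (x + s • (z - x)) := by
  have hx1 : dd e x ≤ 2 - ‖x‖ := min_le_left _ _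
  have hx2 : dd e x ≤ inner ℝ e x := min_le_right _ _
  have hz1 : dd e z ≤ 2 - ‖z‖ := min_le_left _ _
  have hz2 : dd e z ≤ inner ℝ e z := min_le_right _ _
  have hs : 0 ≤ 1 - s := by linarith
  have a1 := mul_le_mul_of_nonneg_left hx1 hs
  have a2 := mul_le_mul_of_nonneg_left hx2 hs
  have a3 := mul_le_mul_of_nonneg_left hz1 h0
  have a4 := mul_le_mul_of_nonneg_left hz2 h0
  have e1 : x + s • (z - x) = (1 - s) • x + s • z := by module
  rw [e1]
  refine le_min ?_ ?_
  · have := norm_add_le ((1 - s) • x) (s • z)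
    rw [norm_smul, norm_smul, Real.norm_of_nonneg hs, Real.norm_of_nonneg h0] at this
    linarith
  · rw [inner_add_right, inner_smul_right, inner_smul_right]
    linarith

lemma cball_sub_Om (e : E n) (he : ‖e‖ = 1) (x : E n) (ρ : ℝ) (h : ρ < dd e x) :
    Metric.closedBall x ρ ⊆ Om e := by
  intro y hy
  rw [mem_Om_iff]
  have := dd_le_lip e he y x
  rw [Metric.mem_closedBall, dist_comm, dist_eq_norm] at hy
  linarith

lemma dist_Om (e x z : E n) (hx : x ∈ Om e) (hz : z ∈ Om e) : ‖z - x‖ ≤ 4 := by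
  have := norm_sub_le z x
  have := hx.1
  have := hz.1
  linarith

lemma continuous_dd (e : E n) : Continuous (dd e) := by unfold dd; fun_prop

open Metric in
/-- Chain of balls. -/
lemma chain (n : ℕ) (hn : 1 ≤ n) (lam Lam α B q Kq d0 : ℝ) (hlam : 0 < lam) (hL : lam ≤ Lam)
    (hα : 0 < α) (δ0 : ℝ) (hδ0 : 0 < δ0) (hδ1 : δ0 ≤ 1) :
    ∃ (M δ ε0 τ c β : ℝ) (k0 : ℕ), 1 < M ∧ 0 < δ ∧ δ < 1 ∧ 0 < ε0 ∧ 0 < τ ∧ τ ≤ 1/2 ∧ 0 < c ∧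
      c ≤ 1/10 ∧ 0 < β ∧ β < 1 ∧
    ∀ (e : E n) (u b f : E n → ℝ) (F : ℝ), Data lam Lam α B q Kq d0 e u b f F → F ≤ ε0 →
    ∀ z, δ0 ≤ dd e z → u z ≤ 1 →
    ∀ k : ℕ, ∀ x, τ * β^k ≤ dd e x →
      ENNReal.ofReal δ * volume (ball x (c * min (dd e x) τ)) <
        volume (ball x (c * min (dd e x) τ) ∩ {y | u y ≤ M^(k0+k+1)}) ∧
      ∀ ρ, 0 < ρ → ρ ≤ c * min (dd e x) τ →
        volume (ball x ρ ∩ {y | u y ≤ M^(k0+k+1)}) ≤ ENNReal.ofReal δ * volume (ball x ρ) →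
        ∀ y ∈ closedBall x (4 * ρ), M^(k0+k) < u y := by
  obtain ⟨M, δ, r0, ε0, hM, hδ, hδ1', hr0, hr01, hε0, G⟩ := growth n hn lam Lam α B q Kq d0 hlam hL hα
  set τ : ℝ := δ0 / 2 with hτ
  set c : ℝ := min r0 (1/10) with hc
  have hc0 : 0 < c := by positivity
  have hc1 : c ≤ 1/10 := min_le_right _ _
  have hcr : c ≤ r0 := min_le_left _ _
  have hτ0 : 0 < τ := by positivity
  set a : ℝ := c * τ / 4 with ha
  have ha0 : 0 < a := by positivity
  obtain ⟨k0, hk0⟩ := exists_nat_ge (4 / (c * τ))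
  refine ⟨M, δ, ε0, τ, c, 1/(1+a), k0, hM, hδ, hδ1', hε0, hτ0, by linarith, hc0, hc1, by positivity,
    by rw [div_lt_one (by positivity)]; linarith, ?_⟩
  intro e u b f F D hF z hz huz
  have hzO : z ∈ Om e := by rw [mem_Om_iff]; linarith
  have hM0 : 0 < M := by linarith
  have hMk : ∀ k : ℕ, 1 ≤ M^k := fun k => one_le_pow₀ hM.le
  -- growth at admissible radii
  have G1 : ∀ (k : ℕ) x ρ, 0 < ρ → ρ ≤ c * min (dd e x) τ →
      volume (ball x ρ ∩ {y | u y ≤ M^(k+1)}) ≤ ENNReal.ofReal δ * volume (ball x ρ) →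
        ∀ y ∈ closedBall x (4 * ρ), M^k < u y := by
    intro k x ρ hρ hρ1 hv
    have hdx : 0 < min (dd e x) τ := by
      by_contra hcon
      have := mul_nonpos_of_nonneg_of_nonpos hc0.le (not_lt.1 hcon)
      linarith
    have hle : min (dd e x) τ ≤ 1 := (min_le_right _ _).trans (by linarith)
    have hρr : ρ ≤ r0 := by nlinarith
    have h5 : 5 * ρ < dd e x := by
      have : min (dd e x) τ ≤ dd e x := min_le_left _ _
      have h6 : 0 < dd e x := hdx.trans_le this
      nlinarith
    refine G e u b f F D x ρ (M^k) hρ hρr (cball_sub_Om e D.he x _ h5) (by positivity) ?_ ?_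
    · have := hMk k
      nlinarith
    · rw [pow_succ, mul_comm] at hv; exact hv
  have G2 : ∀ (k : ℕ) x ρ, 0 < ρ → ρ ≤ c * min (dd e x) τ → (∀ y ∈ ball x ρ, M^(k+1) < u y) →
      ∀ y ∈ closedBall x (4 * ρ), M^k < u y := by
    intro k x ρ hρ hρ1 hv
    refine G1 k x ρ hρ hρ1 ?_
    have : ball x ρ ∩ {y | u y ≤ M^(k+1)} = ∅ := by
      ext y
      simp only [Set.mem_inter_iff, Set.mem_setOf_eq, Set.mem_empty_iff_false, iff_false, not_and, not_le]
      exact hv y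
    rw [this]; simp
  set r : ℝ := c * τ with hr
  have hrpos : 0 < r := by positivity
  have Q : ∀ (j : ℕ) x, τ ≤ dd e x → ‖z - x‖ ≤ j * r → ¬ (∀ y ∈ ball x r, M^j < u y) := by
    intro j
    induction j with
    | zero =>
      intro x hx hxz hcon
      simp only [CharP.cast_eq_zero, zero_mul] at hxz
      have : z = x := by
        have := norm_le_zero_iff.1 hxz
        exact sub_eq_zero.1 this
      have := hcon z (by rw [this]; exact mem_ball_self hrpos)
      simp at this
      linarith
    | succ j ih =>
      intro x hx hxz hcon
      have hmin : min (dd e x) τ = τ := min_eq_right hx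
      have g := G2 j x r hrpos (by rw [hmin]) hcon
      by_cases hzr : ‖z - x‖ ≤ r
      · have := g z (by rw [mem_closedBall_iff_norm]; linarith)
        have := hMk j
        linarith
      · have hzr' := not_le.1 hzr
        have hN : 0 < ‖z - x‖ := hrpos.trans hzr'
        set s : ℝ := r / ‖z - x‖ with hs
        have hs0 : 0 ≤ s := by positivity
        have hs1 : s ≤ 1 := (div_le_one hN).2 hzr'.le
        have hsn : s * ‖z - x‖ = r := by rw [hs]; field_simp
        refine ih (x + s • (z - x)) ?_ ?_ ?_
        · have h1 := dd_concave e x z s hs0 hs1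
          have h2 : (1 - s) * τ ≤ (1 - s) * dd e x := mul_le_mul_of_nonneg_left hx (by linarith)
          have h3 : s * τ ≤ s * dd e z := mul_le_mul_of_nonneg_left (by linarith) hs0
          linarith
        · have : z - (x + s • (z - x)) = (1 - s) • (z - x) := by module
          rw [this, norm_smul, Real.norm_of_nonneg (by linarith)]
          push_cast at hxz
          linarith
        · intro y hy
          refine g y ?_
          rw [mem_closedBall_iff_norm]
          rw [mem_ball_iff_norm] at hy
          have : y - x = (y - (x + s • (z - x))) + s • (z - x) := by module
          rw [this]
          refine (norm_add_le _ _).trans ?_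
          rw [norm_smul, Real.norm_of_nonneg hs0]
          linarith
  have Q' : ∀ x, τ ≤ dd e x → ¬ (∀ y ∈ ball x r, M^k0 < u y) := by
    intro x hx
    refine Q k0 x hx ?_
    have hxO : x ∈ Om e := by rw [mem_Om_iff]; linarith
    have h1 := dist_Om e x z hxO hzO
    have h2 : 4 ≤ k0 * r := (div_le_iff₀ hrpos).1 hk0
    linarith
  have P : ∀ (k : ℕ) x, τ * (1/(1+a))^k ≤ dd e x → ¬ (∀ y ∈ ball x (c * min (dd e x) τ), M^(k0+k) < u y) := by
    intro k
    induction k with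
    | zero =>
      intro x hx hcon
      simp only [pow_zero, mul_one] at hx
      rw [min_eq_right hx] at hcon
      exact Q' x hx hcon
    | succ k ih =>
      intro x hx hcon
      rcases le_or_gt τ (dd e x) with hx' | hx'
      · rw [min_eq_right hx'] at hcon
        refine Q' x hx' fun y hy => lt_of_le_of_lt ?_ (hcon y hy)
        exact pow_le_pow_right₀ hM.le (by omega)
      · have hx0 : 0 < dd e x := lt_of_lt_of_le (by positivity) hx
        have hmin : min (dd e x) τ = dd e x := min_eq_left hx'.le
        rw [hmin] at hcon
        set ρ := c * dd e x with hρ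
        have hρ0 : 0 < ρ := by positivity
        have g := G2 (k0+k) x ρ hρ0 (by rw [hmin]) hcon
        set s : ℝ := ρ / 4 with hs
        have hs0 : 0 ≤ s := by positivity
        have hs1 : s ≤ 1 := by
          have : dd e x ≤ 1 := by linarith
          have : ρ ≤ 1 := by nlinarith
          linarith
        have hxO : x ∈ Om e := by rw [mem_Om_iff]; exact hx0
        have hsn : ‖s • (z - x)‖ ≤ ρ := by
          rw [norm_smul, Real.norm_of_nonneg hs0]
          have := dist_Om e x z hxO hzO
          calc s * ‖z - x‖ ≤ s * 4 := by gcongr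
            _ = ρ := by rw [hs]; ring
        refine ih (x + s • (z - x)) ?_ ?_
        · have h1 := dd_concave e x z s hs0 hs1
          have h2 : s * τ ≤ s * (dd e z - dd e x) := mul_le_mul_of_nonneg_left (by linarith) hs0
          have h3 : dd e x * (1 + a) = dd e x + s * τ := by rw [ha, hs, hρ]; ring
          have h4 : τ * (1/(1+a))^k ≤ dd e x * (1 + a) := by
            have : τ * (1/(1+a))^(k+1) * (1 + a) = τ * (1/(1+a))^k := by
              rw [pow_succ]; field_simp
            rw [← this]
            gcongr
          linarith
        · intro y hy
          refine g y ?_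
          rw [mem_closedBall_iff_norm]
          rw [mem_ball_iff_norm] at hy
          have h1 := dd_le_lip e D.he x (x + s • (z - x))
          rw [add_sub_cancel_left] at h1
          have h2 : c * min (dd e (x + s • (z - x))) τ ≤ 2 * ρ := by
            calc c * min (dd e (x + s • (z - x))) τ ≤ c * dd e (x + s • (z - x)) := by
                  gcongr; exact min_le_left _ _
              _ ≤ c * (dd e x + ρ) := by gcongr; linarith
              _ ≤ c * (dd e x + dd e x) := by
                  gcongr; rw [hρ]; nlinarith
              _ = 2 * ρ := by rw [hρ]; ring
          have : y - x = (y - (x + s • (z - x))) + s • (z - x) := by module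
          rw [this]
          refine (norm_add_le _ _).trans ?_
          linarith
  intro k x hx
  refine ⟨?_, fun ρ hρ hρ1 hv => G1 (k0+k) x ρ hρ hρ1 hv⟩
  by_contra hcon
  have hx0 : 0 < dd e x := lt_of_lt_of_le (by positivity) hx
  have hpos : 0 < c * min (dd e x) τ := mul_pos hc0 (lt_min hx0 hτ0)
  refine P k x hx fun y hy => ?_
  refine G1 (k0+k) x _ hpos le_rfl (not_lt.1 hcon) y ?_
  exact closedBall_subset_closedBall (by linarith) (ball_subset_closedBall hy)

end BH


namespace BH
variable {n : ℕ}

open Metric in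
lemma ink (hn : 1 ≤ n) (A G : Set (E n)) (hG : MeasurableSet G) (δ : ℝ≥0∞) (R : ℝ)
    (h : ∀ x ∈ A, ∃ r, 0 < r ∧ r ≤ R ∧ δ * volume (ball x r) ≤ volume (ball x r ∩ G)) :
    δ * volume A ≤ 5^n * volume G := by
  haveI : Nonempty (Fin n) := ⟨⟨0, hn⟩⟩
  choose! r hr using h
  obtain ⟨s, hsA, hdis, hcov⟩ := Vitali.exists_disjoint_subfamily_covering_enlargement_closedBall A
    (fun x : E n => x) r R (fun a ha => (hr a ha).2.1) 5 (by norm_num)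
  have hcount : s.Countable := by
    apply hdis.countable_of_nonempty_interior
    intro a ha
    exact ⟨a, ball_subset_interior_closedBall (mem_ball_self (hr a (hsA ha)).1)⟩
  haveI := hcount.to_subtype
  have hsub : A ⊆ ⋃ a : s, closedBall (a : E n) (5 * r a) := by
    intro x hx
    obtain ⟨b, hb, hb'⟩ := hcov x hx
    exact Set.mem_iUnion.2 ⟨⟨b, hb⟩, hb' (mem_closedBall_self (hr x hx).1.le)⟩
  have hdis2 : Pairwise (Function.onFun Disjoint (fun a : s => ball (a : E n) (r a) ∩ G)) := by
    intro a b hab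
    have := hdis a.2 b.2 (fun h => hab (Subtype.ext h))
    exact this.mono (Set.inter_subset_left.trans ball_subset_closedBall)
      (Set.inter_subset_left.trans ball_subset_closedBall)
  calc δ * volume A ≤ δ * ∑' a : s, volume (closedBall (a : E n) (5 * r a)) := by
        gcongr
        exact (measure_mono hsub).trans (measure_iUnion_le _)
    _ = ∑' a : s, 5^n * (δ * volume (ball (a : E n) (r a))) := by
        rw [← ENNReal.tsum_mul_left]
        congr 1; ext a
        have h0 := (hr a (hsA a.2)).1
        rw [Measure.addHaar_closedBall_mul volume _ (by norm_num) h0.le, Measure.addHaar_closedBall_eq_addHaar_ball,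
          finrank_euclideanSpace, Fintype.card_fin, Measure.addHaar_ball_center volume (a : E n)]
        rw [ENNReal.ofReal_pow (by norm_num)]
        norm_num
        ring
    _ = 5^n * ∑' a : s, δ * volume (ball (a : E n) (r a)) := by rw [ENNReal.tsum_mul_left]
    _ ≤ 5^n * ∑' a : s, volume (ball (a : E n) (r a) ∩ G) := by
        gcongr with a
        exact (hr a (hsA a.2)).2.2
    _ = 5^n * volume (⋃ a : s, ball (a : E n) (r a) ∩ G) := by
        rw [measure_iUnion hdis2 (fun a => measurableSet_ball.inter hG)]
    _ ≤ 5^n * volume G := by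
        gcongr
        exact Set.iUnion_subset fun a => Set.inter_subset_right

lemma Om_sub_ball (e : E n) : Om e ⊆ Metric.ball 0 2 := fun x hx => by
  rw [mem_ball_zero_iff]; exact hx.1

lemma dd_self (e : E n) (he : ‖e‖ = 1) : dd e e = 1 := by
  unfold dd
  rw [real_inner_self_eq_norm_sq, he]; norm_num

lemma vol_collar (e : E n) (he : ‖e‖ = 1) (t : ℝ) (h0 : 0 ≤ t) (h1 : t ≤ 1) :
    (volume {x | x ∈ Om e ∧ dd e x < t}).toReal ≤ n * t * (volume (Metric.ball (0 : E n) 2)).toReal := by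
  have hfin : volume (Om e) ≠ ⊤ := ((measure_mono (Om_sub_ball e)).trans_lt measure_ball_lt_top).ne
  set T := AffineMap.homothety e (1 - t) '' Om e with hT
  set D := {x | x ∈ Om e ∧ dd e x < t} with hD
  have hTO : T ⊆ Om e \ D := by
    rintro _ ⟨y, hy, rfl⟩
    have hy' := (mem_Om_iff e y).1 hy
    have hc := dd_concave e y e t h0 h1
    rw [dd_self e he] at hc
    have heq : AffineMap.homothety e (1 - t) y = y + t • (e - y) := by
      rw [AffineMap.homothety_apply]; simp only [vsub_eq_sub, vadd_eq_add]; module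
    rw [heq]
    have h2 : t ≤ dd e (y + t • (e - y)) := by nlinarith
    refine ⟨(mem_Om_iff e _).2 ?_, fun h => absurd h.2 (not_lt.2 h2)⟩
    rcases h0.eq_or_lt with h | h
    · subst h; simpa using hy'
    · linarith
  have hvT : volume T = ENNReal.ofReal ((1-t)^n) * volume (Om e) := by
    rw [hT, Measure.addHaar_image_homothety, finrank_euclideanSpace, Fintype.card_fin,
      abs_of_nonneg (by have : 0 ≤ 1 - t := by linarith
                        positivity)]
  have hDO : D ⊆ Om e := fun x hx => hx.1
  have hDm : MeasurableSet D := (isOpen_Om e).measurableSet.inter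
    ((isOpen_lt (continuous_dd e) continuous_const).measurableSet)
  have hadd : volume D + volume (Om e \ D) = volume (Om e) := by
    have := measure_diff_add_inter (μ := volume) (Om e) hDm
    rwa [Set.inter_eq_self_of_subset_right hDO, add_comm] at this
  have hle : volume D + volume T ≤ volume (Om e) := by rw [← hadd]; gcongr
  have hDf : volume D ≠ ⊤ := ((measure_mono hDO).trans_lt hfin.lt_top).ne
  have hTf : volume T ≠ ⊤ := by rw [hvT]; exact ENNReal.mul_ne_top ENNReal.ofReal_ne_top hfin
  have hle' := ENNReal.toReal_mono hfin hle
  have h1t : 0 ≤ 1 - t := by linarith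
  rw [ENNReal.toReal_add hDf hTf, hvT, ENNReal.toReal_mul, ENNReal.toReal_ofReal (by positivity)] at hle'
  have hB : 1 + (n:ℝ) * (-t) ≤ (1 + -t)^n := one_add_mul_le_pow (by linarith) n
  have hB' : 1 - n * t ≤ (1-t)^n := by rw [show 1 - t = 1 + -t by ring]; linarith
  have hV : (volume (Om e)).toReal ≤ (volume (Metric.ball (0 : E n) 2)).toReal :=
    ENNReal.toReal_mono measure_ball_lt_top.ne (measure_mono (Om_sub_ball e))
  have hV0 : 0 ≤ (volume (Om e)).toReal := ENNReal.toReal_nonneg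
  calc (volume D).toReal ≤ (n * t) * (volume (Om e)).toReal := by nlinarith
    _ ≤ _ := by gcongr

lemma seq_decay (θ β N V : ℝ) (hθ0 : 0 ≤ θ) (hθ : θ < 1) (hβ0 : 0 < β) (hβ : β < 1) (hN : 0 ≤ N) (hV : 0 ≤ V) :
    ∃ A σ : ℝ, 0 ≤ A ∧ 0 < σ ∧ σ < 1 ∧ ∀ v : ℕ → ℝ, v 0 ≤ V → (∀ k, v (k+1) ≤ θ * v k + N * β^k) →
      ∀ k, v k ≤ A * σ^k := by
  set σ := max β ((1+θ)/2) with hσ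
  have h1 : β ≤ σ := le_max_left _ _
  have h2 : (1+θ)/2 ≤ σ := le_max_right _ _
  have h3 : 0 < σ - θ := by linarith
  refine ⟨V + N / (σ - θ), σ, by positivity, by linarith, max_lt hβ (by linarith), ?_⟩
  intro v hv0 hv k
  have hA : N ≤ (V + N / (σ - θ)) * (σ - θ) := by
    rw [add_mul, div_mul_cancel₀ _ h3.ne']; nlinarith
  induction k with
  | zero => simp; have : 0 ≤ N / (σ - θ) := by positivity
            linarith
  | succ k ih =>
    have hσk : 0 ≤ σ^k := by have : 0 < σ := by linarith
                             positivity
    have hb : N * β^k ≤ N * σ^k := by gcongr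
    calc v (k+1) ≤ θ * v k + N * β^k := hv k
      _ ≤ θ * ((V + N / (σ - θ)) * σ^k) + N * σ^k := by gcongr
      _ ≤ (V + N / (σ - θ)) * σ^(k+1) := by
        rw [pow_succ]; nlinarith

open Metric in
lemma weak_decay (n : ℕ) (hn : 1 ≤ n) (lam Lam α B q Kq d0 : ℝ) (hlam : 0 < lam) (hL : lam ≤ Lam)
    (hα : 0 < α) (δ0 : ℝ) (hδ0 : 0 < δ0) (hδ1 : δ0 ≤ 1) :
    ∃ (M ε0 A σ : ℝ) (k0 : ℕ), 1 < M ∧ 0 < ε0 ∧ 0 ≤ A ∧ 0 < σ ∧ σ < 1 ∧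
    ∀ (e : E n) (u b f : E n → ℝ) (F : ℝ), Data lam Lam α B q Kq d0 e u b f F → F ≤ ε0 →
    ∀ z, δ0 ≤ dd e z → u z ≤ 1 →
    ∀ k : ℕ, volume {x | x ∈ Om e ∧ M^(k0+k) < u x} ≤ ENNReal.ofReal (A * σ^k) := by
  obtain ⟨M, δ, ε0, τ, c, β, k0, hM, hδ, hδ1', hε0, hτ, hτ1, hc, hc1, hβ, hβ1, H⟩ :=
    chain n hn lam Lam α B q Kq d0 hlam hL hα δ0 hδ0 hδ1
  set V := (volume (ball (0 : E n) 2)).toReal with hV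
  have hV0 : 0 ≤ V := ENNReal.toReal_nonneg
  set L : ℝ := 5^n / δ with hLd
  have hL0 : 0 < L := by positivity
  obtain ⟨A, σ, hA, hσ0, hσ1, hseq⟩ := seq_decay (L/(1+L)) β (n * τ * V) V (by positivity)
    (by rw [div_lt_one (by positivity)]; linarith) hβ hβ1 (by positivity) hV0
  refine ⟨M, ε0, A, σ, k0, hM, hε0, hA, hσ0, hσ1, ?_⟩
  intro e u b f F D hF z hz hz1 k
  have hcontO : ContinuousOn u (Om e) := D.cont.mono fun x hx => ⟨hx.1, hx.2.le⟩
  set S : ℕ → Set (E n) := fun k => {x | x ∈ Om e ∧ M^(k0+k) < u x} with hS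
  have hSo : ∀ k, IsOpen (S k) := fun k =>
    hcontO.isOpen_inter_preimage (isOpen_Om e) isOpen_Ioi
  have hSO : ∀ k, S k ⊆ Om e := fun k x hx => hx.1
  have hOf : volume (Om e) ≠ ⊤ := ((measure_mono (Om_sub_ball e)).trans_lt measure_ball_lt_top).ne
  have hSf : ∀ k, volume (S k) ≠ ⊤ := fun k => ((measure_mono (hSO k)).trans_lt hOf.lt_top).ne
  have hmono : ∀ k, S (k+1) ⊆ S k := by
    intro k x hx
    refine ⟨hx.1, lt_of_le_of_lt ?_ hx.2⟩
    exact pow_le_pow_right₀ hM.le (by omega)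
  have hstep : ∀ k, (volume (S (k+1))).toReal ≤ L/(1+L) * (volume (S k)).toReal + n * τ * V * β^k := by
    intro k
    set Dk := {x | x ∈ Om e ∧ dd e x < τ * β^k} with hDk
    have hDkm := vol_collar e D.he (τ * β^k) (by positivity) (by
      have : β^k ≤ 1 := pow_le_one₀ hβ.le hβ1.le
      nlinarith)
    have hink : ENNReal.ofReal δ * volume (S (k+1) \ Dk) ≤ 5^n * volume (S k \ S (k+1)) := by
      apply ink hn _ _ ((hSo k).measurableSet.diff (hSo (k+1)).measurableSet) _ 1
      rintro x ⟨hxS, hxD⟩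
      have hdx : τ * β^k ≤ dd e x := by
        by_contra hcon
        exact hxD ⟨hxS.1, not_le.1 hcon⟩
      obtain ⟨H1, H2⟩ := H e u b f F D hF z hz hz1 k x hdx
      have hdx0 : 0 < dd e x := (mem_Om_iff e x).1 hxS.1
      set r := c * min (dd e x) τ with hr
      have hr0 : 0 < r := mul_pos hc (lt_min hdx0 hτ)
      have hrd : r < dd e x := by
        have : min (dd e x) τ ≤ dd e x := min_le_left _ _
        have : r ≤ c * dd e x := by rw [hr]; gcongr
        nlinarith
      have hr1 : r ≤ 1 := by
        have : min (dd e x) τ ≤ τ := min_le_right _ _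
        have : r ≤ c * τ := by rw [hr]; gcongr
        nlinarith
      let good : ℕ → Prop := fun j =>
        volume (ball x (r/2^j) ∩ {y | u y ≤ M^(k0+k+1)}) ≤ ENNReal.ofReal δ * volume (ball x (r/2^j))
      have hex : ∃ j, good j := by
        obtain ⟨η, hη, hηs⟩ := Metric.isOpen_iff.1 (hSo (k+1)) x hxS
        have ht : Filter.Tendsto (fun j : ℕ => r * (1/2:ℝ)^j) Filter.atTop (nhds 0) := by
          have := (tendsto_pow_atTop_nhds_zero_of_lt_one (by norm_num : (0:ℝ) ≤ 1/2) (by norm_num)).const_mul r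
          simpa using this
        obtain ⟨j, hj⟩ := (ht.eventually (gt_mem_nhds hη)).exists
        refine ⟨j, ?_⟩
        have hemp : ball x (r/2^j) ∩ {y | u y ≤ M^(k0+k+1)} = ∅ := by
          rw [Set.eq_empty_iff_forall_notMem]
          rintro y ⟨hy, hy2⟩
          have hj' : r/2^j < η := by
            have : r/2^j = r * (1/2:ℝ)^j := by rw [one_div, inv_pow]; rfl
            rw [this]; exact hj
          have := (hηs (ball_subset_ball hj'.le hy)).2
          exact absurd hy2 (not_le.2 this)
        show volume (ball x (r/2^j) ∩ {y | u y ≤ M^(k0+k+1)}) ≤ _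
        rw [hemp]; simp
      classical
      set j := Nat.find hex with hj
      have hjg : good j := Nat.find_spec hex
      have hj0 : j ≠ 0 := by
        intro h0
        rw [h0] at hjg
        have h' : volume (ball x (r/2^0) ∩ {y | u y ≤ M^(k0+k+1)}) ≤ ENNReal.ofReal δ * volume (ball x (r/2^0)) := hjg
        rw [pow_zero, div_one] at h'
        exact absurd H1 (not_lt.2 h')
      obtain ⟨i, hi⟩ := Nat.exists_eq_succ_of_ne_zero hj0
      have hbad : ¬ good i := Nat.find_min hex (by omega)
      have hpi : (1:ℝ) ≤ 2^i := one_le_pow₀ (by norm_num)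
      have hri : r/2^i ≤ r := div_le_self hr0.le hpi
      have hrj : r/2^i = 2 * (r/2^j) := by rw [hi, Nat.succ_eq_add_one, pow_succ]; field_simp
      refine ⟨r/2^i, by positivity, hri.trans hr1, ?_⟩
      refine (not_le.1 hbad).le.trans (measure_mono ?_)
      rintro y ⟨hy, hyu⟩
      refine ⟨hy, ⟨cball_sub_Om e D.he x _ (hri.trans_lt hrd) (ball_subset_closedBall hy), ?_⟩, fun h => absurd hyu (not_le.2 h.2)⟩
      refine H2 (r/2^j) (by positivity) (div_le_self hr0.le (one_le_pow₀ (by norm_num))) hjg y ?_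
      refine ball_subset_closedBall (ball_subset_ball ?_ hy)
      rw [hrj]
      have : 0 < r/2^j := by positivity
      linarith
    have hdf : volume (S k \ S (k+1)) ≠ ⊤ := ((measure_mono Set.diff_subset).trans_lt (hSf k).lt_top).ne
    have hdf2 : volume (S (k+1) \ Dk) ≠ ⊤ := ((measure_mono Set.diff_subset).trans_lt (hSf (k+1)).lt_top).ne
    have hDf : volume Dk ≠ ⊤ := ((measure_mono (fun x hx => hx.1)).trans_lt hOf.lt_top).ne
    have h1 := ENNReal.toReal_mono (ENNReal.mul_ne_top (by simp) hdf) hink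
    rw [ENNReal.toReal_mul, ENNReal.toReal_mul, ENNReal.toReal_ofReal hδ.le] at h1
    have h2 : (volume (S k \ S (k+1))).toReal = (volume (S k)).toReal - (volume (S (k+1))).toReal := by
      rw [measure_diff (hmono k) (hSo (k+1)).measurableSet.nullMeasurableSet (hSf (k+1)),
        ENNReal.toReal_sub_of_le (measure_mono (hmono k)) (hSf k)]
    rw [h2] at h1
    have h3 : (volume (S (k+1))).toReal ≤ (volume (S (k+1) \ Dk)).toReal + (volume Dk).toReal := by
      rw [← ENNReal.toReal_add hdf2 hDf]
      apply ENNReal.toReal_mono (by finiteness)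
      refine (measure_mono ?_).trans (measure_union_le _ _)
      intro x hx
      by_cases h : x ∈ Dk
      · right; exact h
      · left; exact ⟨hx, h⟩
    have h4 : (volume (S (k+1) \ Dk)).toReal ≤ L * ((volume (S k)).toReal - (volume (S (k+1))).toReal) := by
      rw [hLd, div_mul_eq_mul_div, le_div_iff₀ hδ]
      simp at h1
      linarith
    have h5 : (volume (S (k+1))).toReal * (1 + L) ≤ L * (volume (S k)).toReal + n * τ * V * β^k := by
      have : (n:ℝ) * (τ * β^k) * V = n * τ * V * β^k := by ring
      linarith
    rw [← le_div_iff₀ (by positivity)] at h5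
    refine h5.trans ?_
    rw [add_div]
    gcongr
    · exact le_of_eq (by rw [hLd]; ring)
    · apply div_le_self (by positivity); linarith
  have h0 : (volume (S 0)).toReal ≤ V := ENNReal.toReal_mono measure_ball_lt_top.ne
    (measure_mono ((hSO 0).trans (Om_sub_ball e)))
  have := hseq (fun k => (volume (S k)).toReal) h0 hstep k
  rw [← ENNReal.ofReal_toReal (hSf k)]
  exact ENNReal.ofReal_le_ofReal this

lemma l_eps (n : ℕ) (hn : 1 ≤ n) (lam Lam α B q Kq d0 : ℝ) (hlam : 0 < lam) (hL : lam ≤ Lam)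
    (hα : 0 < α) (δ0 : ℝ) (hδ0 : 0 < δ0) (hδ1 : δ0 ≤ 1) :
    ∃ (ε0 ε C : ℝ), 0 < ε0 ∧ 0 < ε ∧ 0 < C ∧
    ∀ (e : E n) (u b f : E n → ℝ) (F : ℝ), Data lam Lam α B q Kq d0 e u b f F → F ≤ ε0 →
    ∀ z, δ0 ≤ dd e z → u z ≤ 1 →
    ∫⁻ x in Om e, ENNReal.ofReal (u x) ^ ε ≤ ENNReal.ofReal C := by
  obtain ⟨M, ε0, A, σ, k0, hM, hε0, hA, hσ0, hσ1, H⟩ :=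
    weak_decay n hn lam Lam α B q Kq d0 hlam hL hα δ0 hδ0 hδ1
  have hM0 : 0 < M := by linarith
  have hlogM : 0 < Real.log M := Real.log_pos hM
  have hlogσ : Real.log σ < 0 := Real.log_neg hσ0 hσ1
  set ε := -Real.log σ / (2 * Real.log M) with hε
  have hε' : 0 < ε := by have : 0 < -Real.log σ := by linarith
                         positivity
  set s := M^ε * σ with hs
  have hs0 : 0 < s := by positivity
  have hs1 : s < 1 := by
    have : s = Real.exp (Real.log σ / 2) := by
      rw [hs, Real.rpow_def_of_pos hM0]
      have h7 : Real.exp (Real.log M * ε) * σ = Real.exp (Real.log M * ε) * Real.exp (Real.log σ) := by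
        rw [Real.exp_log hσ0]
      rw [h7, ← Real.exp_add]
      congr 1
      rw [hε]; field_simp; ring
    rw [this]; rw [← Real.exp_zero]; exact Real.exp_lt_exp.2 (by linarith)
  set V := (volume (Metric.ball (0 : E n) 2)).toReal with hV
  have hV0 : 0 ≤ V := ENNReal.toReal_nonneg
  set m : ℝ := (M^k0)^ε with hm
  have hm0 : 0 < m := by positivity
  refine ⟨ε0, ε, m * V + m * M^ε * A * (1-s)⁻¹ + 1, hε0, hε', by
    have : 0 < 1 - s := by linarith
    positivity, ?_⟩
  intro e u b f F D hF z hz hz1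
  have H' := H e u b f F D hF z hz hz1
  have hcontO : ContinuousOn u (Om e) := D.cont.mono fun x hx => ⟨hx.1, hx.2.le⟩
  set S : ℕ → Set (E n) := fun k => {x | x ∈ Om e ∧ M^(k0+k) < u x} with hS
  have hSo : ∀ k, IsOpen (S k) := fun k =>
    hcontO.isOpen_inter_preimage (isOpen_Om e) isOpen_Ioi
  have hpt : ∀ x ∈ Om e, ENNReal.ofReal (u x) ^ ε ≤ ENNReal.ofReal m +
      ∑' k, (S k).indicator (fun _ => ENNReal.ofReal (m * M^ε * (M^ε)^k)) x := by
    intro x hx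
    have hu0 := D.pos x hx
    rcases le_or_gt (u x) (M^k0) with h | h
    · refine le_add_right ?_
      rw [ENNReal.ofReal_rpow_of_pos hu0]
      exact ENNReal.ofReal_le_ofReal (Real.rpow_le_rpow hu0.le h hε'.le)
    · refine le_add_left ?_
      have hex : ∃ k, u x ≤ M^(k0+k+1) := by
        obtain ⟨k, hk⟩ := pow_unbounded_of_one_lt (u x) hM
        exact ⟨k, hk.le.trans (pow_le_pow_right₀ hM.le (by omega))⟩
      classical
      set k := Nat.find hex with hk
      have hk1 : u x ≤ M^(k0+k+1) := Nat.find_spec hex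
      have hk2 : M^(k0+k) < u x := by
        rcases Nat.eq_zero_or_pos k with h0 | h0
        · rw [h0]; exact h
        · have := Nat.find_min hex (m := k-1) (by omega)
          have h3 : k0 + (k-1) + 1 = k0 + k := by omega
          rw [h3] at this
          exact not_le.1 this
      refine le_trans ?_ (ENNReal.le_tsum k)
      rw [Set.indicator_of_mem (show x ∈ S k from ⟨hx, hk2⟩), ENNReal.ofReal_rpow_of_pos hu0]
      apply ENNReal.ofReal_le_ofReal
      refine (Real.rpow_le_rpow hu0.le hk1 hε'.le).trans (le_of_eq ?_)
      rw [pow_succ, pow_add, Real.mul_rpow (by positivity) (by positivity), Real.mul_rpow (by positivity) (by positivity),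
        ← Real.rpow_natCast M k, ← Real.rpow_mul hM0.le, mul_comm (k:ℝ) ε, Real.rpow_mul hM0.le, Real.rpow_natCast]
      ring
  have hsum : ∑' k : ℕ, ENNReal.ofReal (m * M^ε * A * s^k) = ENNReal.ofReal (m * M^ε * A * (1-s)⁻¹) := by
    rw [← ENNReal.ofReal_tsum_of_nonneg (fun k => by positivity)
      ((summable_geometric_of_lt_one hs0.le hs1).mul_left _), tsum_mul_left, tsum_geometric_of_lt_one hs0.le hs1]
  have h1s : 0 < 1 - s := by linarith
  calc ∫⁻ x in Om e, ENNReal.ofReal (u x) ^ ε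
      ≤ ∫⁻ x in Om e, (ENNReal.ofReal m +
        ∑' k, (S k).indicator (fun _ => ENNReal.ofReal (m * M^ε * (M^ε)^k)) x) :=
        setLIntegral_mono' (isOpen_Om e).measurableSet hpt
    _ = ENNReal.ofReal m * volume (Om e) + ∑' k, ∫⁻ x in Om e,
        (S k).indicator (fun _ => ENNReal.ofReal (m * M^ε * (M^ε)^k)) x := by
        rw [lintegral_add_left measurable_const, setLIntegral_const, lintegral_tsum]
        intro k
        exact (measurable_const.indicator (hSo k).measurableSet).aemeasurable
    _ ≤ ENNReal.ofReal (m * V) + ∑' k : ℕ, ENNReal.ofReal (m * M^ε * A * s^k) := by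
        gcongr with k
        · rw [ENNReal.ofReal_mul hm0.le, hV, ENNReal.ofReal_toReal measure_ball_lt_top.ne]
          gcongr
          exact Om_sub_ball e
        · refine (setLIntegral_le_lintegral _ _).trans ?_
          rw [lintegral_indicator_const (hSo k).measurableSet]
          refine (mul_le_mul_right (H' k) _).trans ?_
          rw [← ENNReal.ofReal_mul (by positivity)]
          apply ENNReal.ofReal_le_ofReal
          apply le_of_eq
          rw [hs, mul_pow]; ring
    _ ≤ _ := by
        rw [hsum, ← ENNReal.ofReal_add (by positivity) (by positivity)]
        apply ENNReal.ofReal_le_ofReal; linarith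

end BH


namespace BH
variable {n : ℕ}

noncomputable def zet (x : E n) : ℝ := 361/100 - ‖x - 0‖^2
noncomputable def phi (j : ℕ) (x : E n) : ℝ := (zet x)^(j+2)

lemma phi_smooth (j : ℕ) : ContDiff ℝ 2 (phi j : E n → ℝ) := by
  unfold phi zet
  exact (contDiff_const.sub (contDiff_q 0)).pow _

lemma Fb_smooth (j : ℕ) : ContDiff ℝ 2 (fun r : ℝ => (361/100 - r)^(j+2)) := by fun_prop

lemma Fb_deriv (j : ℕ) : deriv (fun r : ℝ => (361/100 - r)^(j+2)) = fun r => -(((j+2 : ℕ):ℝ) * (361/100 - r)^(j+1)) := by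
  ext r
  have h := ((hasDerivAt_id r).const_sub (361/100)).pow (j+2)
  have h' := h.deriv
  simp only [id_eq] at h'
  have e1 : deriv (fun r : ℝ => (361/100 - r)^(j+2)) r = deriv ((fun x : ℝ => 361/100 - x)^(j+2)) r := rfl
  rw [e1, h']
  simp

lemma Fb_deriv2 (j : ℕ) (r : ℝ) : deriv (deriv (fun r : ℝ => (361/100 - r)^(j+2))) r
    = ((j+2 : ℕ):ℝ) * (((j+1 : ℕ):ℝ) * (361/100 - r)^j) := by
  rw [Fb_deriv]
  have h := ((((hasDerivAt_id r).const_sub (361/100)).pow (j+1)).const_mul ((j+2 : ℕ):ℝ)).neg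
  have h' := h.deriv
  simp only [id_eq] at h'
  refine Eq.trans ?_ (h'.trans ?_)
  · rfl
  · simp

lemma phi_fderiv (j : ℕ) (x : E n) : fderiv ℝ (phi j) x = (-(((j+2 : ℕ):ℝ) * (zet x)^(j+1))) • ((2:ℝ) • innerSL ℝ (x - 0)) := by
  have := fderiv_comp_real (Fb_smooth j) (w := fun y : E n => ‖y - 0‖^2) (x := x)
    ((contDiff_q 0).differentiable (by norm_num) x)
  rw [Fb_deriv, fderiv_q] at this
  exact this

lemma phi_D2 (j : ℕ) (x v : E n) (hv : ‖v‖ = 1) (hz : 0 ≤ zet x) :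
    -(2 * ((j+2 : ℕ):ℝ) * (zet x)^(j+1)) ≤ D2 (phi j) x v := by
  have := D2_comp (Fb_smooth j) (w := fun y : E n => ‖y - 0‖^2) (x := x) (contDiff_q 0).contDiffAt v
  rw [Fb_deriv2, Fb_deriv, D2_q, hv] at this
  have h2 : D2 (phi j) x v = D2 (fun y => (361/100 - ‖y - 0‖^2)^(j+2)) x v := rfl
  rw [h2, this]
  have h3 : (0:ℝ) ≤ (361/100 - ‖x - 0‖^2)^j := pow_nonneg hz _
  have h4 : 0 ≤ ((j+2 : ℕ):ℝ) * (((j+1 : ℕ):ℝ) * (361/100 - ‖x - 0‖^2)^j) * (fderiv ℝ (fun y : E n => ‖y - 0‖^2) x v)^2 := by positivity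
  have h5 : zet x = 361/100 - ‖x - 0‖^2 := rfl
  rw [h5]
  linarith

set_option maxHeartbeats 1000000 in
lemma lmp_pt {lam Lam : ℝ} (hlam : 0 < lam) (hL : lam ≤ Lam) (j : ℕ) (u W : E n → ℝ) (x : E n) (b f : ℝ)
    (hb : 0 ≤ b) (hf : 0 ≤ f) (hu : ContDiffAt ℝ 2 u x) (hu0 : 0 < u x) (hx : ‖x‖ < 19/10)
    (hE : Ell lam Lam u x (b * ‖fderiv ℝ u x‖ + f)) (hW : W =ᶠ[nhds x] fun y => phi j y * u y)
    (hDW : ‖fderiv ℝ W x‖ * (19/10 - ‖x‖) ≤ W x) :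
    Ell lam Lam W x ((zet x)^(j+2) * f + 8 * (j+2) * (b * (u x * (zet x)^(j+1))) +
      n * Lam * (72 * (j+2)^2) * (u x * (zet x)^j)) := by
  set z := zet x with hz
  have hzf : z = (19/10 - ‖x‖) * (19/10 + ‖x‖) := by rw [hz, zet, sub_zero]; ring
  have hnx := norm_nonneg x
  have hz0 : 0 < z := by rw [hzf]; apply mul_pos <;> linarith
  have hz4 : z ≤ 4 := by rw [hz, zet]; nlinarith [sq_nonneg ‖x - 0‖]
  set β : ℝ := (j:ℝ) + 2 with hβ
  have hβ2 : 2 ≤ β := by rw [hβ]; have : (0:ℝ) ≤ j := Nat.cast_nonneg j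
                         linarith
  have hcast : ((j+2 : ℕ):ℝ) = β := by push_cast; rfl
  have hφ : phi j x = z^(j+2) := rfl
  have hdφ : ‖fderiv ℝ (phi j) x‖ ≤ 4 * β * z^(j+1) := by
    rw [phi_fderiv, norm_smul, norm_smul, innerSL_apply_norm, hcast, sub_zero, norm_neg, Real.norm_of_nonneg (by positivity),
      Real.norm_of_nonneg (by norm_num)]
    have : 0 ≤ β * z^(j+1) := by positivity
    calc β * z^(j+1) * (2 * ‖x‖) ≤ β * z^(j+1) * 4 := by gcongr; linarith
      _ = _ := by ring
  have hWx : W x = z^(j+2) * u x := hW.eq_of_nhds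
  have hDWe : fderiv ℝ W x = phi j x • fderiv ℝ u x + u x • fderiv ℝ (phi j) x := by
    rw [hW.fderiv_eq, fderiv_fun_mul ((phi_smooth j).differentiable (by norm_num) x) (hu.differentiableAt (by norm_num))]
  have hDW2 : ‖fderiv ℝ W x‖ ≤ 4 * z^(j+1) * u x := by
    have h1 : ‖fderiv ℝ W x‖ * z ≤ (4 * z^(j+1) * u x) * z := by
      calc ‖fderiv ℝ W x‖ * z = (‖fderiv ℝ W x‖ * (19/10 - ‖x‖)) * (19/10 + ‖x‖) := by rw [hzf]; ring
        _ ≤ (z^(j+2) * u x) * (19/10 + ‖x‖) := by rw [← hWx]; gcongr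
        _ ≤ (z^(j+2) * u x) * 4 := by gcongr; linarith
        _ = _ := by ring
    exact le_of_mul_le_mul_right h1 hz0
  have hDu : z * ‖fderiv ℝ u x‖ ≤ 8 * β * u x := by
    have h1 : ‖phi j x • fderiv ℝ u x‖ ≤ ‖fderiv ℝ W x‖ + u x * ‖fderiv ℝ (phi j) x‖ := by
      have : phi j x • fderiv ℝ u x = fderiv ℝ W x - u x • fderiv ℝ (phi j) x := by rw [hDWe]; abel
      rw [this]
      refine (norm_sub_le _ _).trans ?_
      rw [norm_smul, Real.norm_of_nonneg hu0.le]
    rw [norm_smul, hφ, Real.norm_of_nonneg (by positivity)] at h1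
    have h2 : u x * ‖fderiv ℝ (phi j) x‖ ≤ u x * (4 * β * z^(j+1)) := by gcongr
    have h3 : z^(j+1) * (z * ‖fderiv ℝ u x‖) ≤ z^(j+1) * (8 * β * u x) := by
      have e1 : z^(j+2) * ‖fderiv ℝ u x‖ = z^(j+1) * (z * ‖fderiv ℝ u x‖) := by ring
      have h4 : 0 < z^(j+1) * u x := by positivity
      nlinarith
    exact le_of_mul_le_mul_left h3 (by positivity)
  intro ε hε
  obtain ⟨ξ, a, ha, hs⟩ := hE (ε / z^(j+2)) (by positivity)
  refine ⟨ξ, a, ha, ?_⟩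
  have hk : ∀ k, z^(j+2) * (a k * D2 u x (ξ k)) - Lam * (72 * β^2) * (u x * z^j) ≤ a k * D2 W x (ξ k) := by
    intro k
    obtain ⟨h1, h2⟩ := ha k
    have ha0 : 0 < a k := by linarith
    have hξ : ‖ξ k‖ = 1 := ξ.orthonormal.1 k
    rw [D2_congr hW, D2_mul (phi_smooth j).contDiffAt hu, hφ]
    have hq := phi_D2 j x (ξ k) hξ hz0.le
    rw [hcast] at hq
    have hc1 : |fderiv ℝ (phi j) x (ξ k)| ≤ 4 * β * z^(j+1) := by
      refine ((fderiv ℝ (phi j) x).le_opNorm _).trans ?_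
      rw [hξ, mul_one]; exact hdφ
    have hc2 : |fderiv ℝ u x (ξ k)| ≤ ‖fderiv ℝ u x‖ := by
      refine ((fderiv ℝ u x).le_opNorm _).trans ?_
      rw [hξ, mul_one]
    have hcr : |fderiv ℝ (phi j) x (ξ k) * fderiv ℝ u x (ξ k)| ≤ 32 * β^2 * (u x * z^j) := by
      rw [abs_mul]
      calc _ ≤ (4 * β * z^(j+1)) * ‖fderiv ℝ u x‖ := by gcongr
        _ = 4 * β * z^j * (z * ‖fderiv ℝ u x‖) := by ring
        _ ≤ 4 * β * z^j * (8 * β * u x) := by gcongr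
        _ = _ := by ring
    have hcr' := (abs_le.1 hcr).1
    have hD : -(8 * β^2 * (u x * z^j)) ≤ u x * D2 (phi j) x (ξ k) := by
      have h5 : u x * (-(2 * β * z^(j+1))) ≤ u x * D2 (phi j) x (ξ k) := by gcongr
      have h6 : 2 * β * (u x * z^j) * z ≤ 2 * β * (u x * z^j) * 4 := by gcongr
      have h7 : 8 * β * (u x * z^j) ≤ 8 * β^2 * (u x * z^j) := by gcongr; nlinarith
      have e : u x * (-(2 * β * z^(j+1))) = -(2 * β * (u x * z^j) * z) := by ring
      linarith
    have hP : 0 ≤ 72 * β^2 * (u x * z^j) := by positivity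
    have h8 : a k * (72 * β^2 * (u x * z^j)) ≤ Lam * (72 * β^2 * (u x * z^j)) := by gcongr
    have h9 : a k * (-(72 * β^2 * (u x * z^j))) ≤ a k * (2 * (fderiv ℝ (phi j) x (ξ k) * fderiv ℝ u x (ξ k)) + u x * D2 (phi j) x (ξ k)) := by
      gcongr
      linarith
    nlinarith
  have hsum := Finset.sum_le_sum (fun k (_ : k ∈ Finset.univ) => hk k)
  rw [Finset.sum_sub_distrib, ← Finset.mul_sum] at hsum
  simp only [Finset.sum_const, Finset.card_univ, Fintype.card_fin, nsmul_eq_mul] at hsum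
  have h10 : z^(j+2) * (-(b * ‖fderiv ℝ u x‖ + f) - ε / z^(j+2)) ≤ z^(j+2) * ∑ k, a k * D2 u x (ξ k) := by gcongr
  have h11 : z^(j+2) * (-(b * ‖fderiv ℝ u x‖ + f) - ε / z^(j+2)) = -(b * z^(j+1) * (z * ‖fderiv ℝ u x‖)) - z^(j+2) * f - ε := by
    field_simp; ring
  have h12 : b * z^(j+1) * (z * ‖fderiv ℝ u x‖) ≤ b * z^(j+1) * (8 * β * u x) := by gcongr
  nlinarith

end BH


namespace BH
variable {n : ℕ}

lemma rpow_le_one_add {u s ε : ℝ} (hu : 0 < u) (hs : 0 ≤ s) (hse : s ≤ ε) : u^s ≤ 1 + u^ε := by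
  have h := Real.rpow_pos_of_pos hu ε
  rcases le_or_gt u 1 with h1 | h1
  · have := Real.rpow_le_one hu.le h1 hs
    linarith
  · have := Real.rpow_le_rpow_of_exponent_le h1.le hse
    linarith

lemma pt_bound (n : ℕ) (hn : 1 ≤ n) (q ε : ℝ) (hq : (n:ℝ) < q) (hε : 0 < ε) :
    ∃ j : ℕ, ∀ f b v : ℝ, 0 ≤ f → 0 ≤ b → 0 < v →
      (f + b * v + v^2)^n ≤ 3^n * (f^n + b^q + 2 * (1 + (v^(j+2))^ε)) := by
  have hn0 : (0:ℝ) < n := by exact_mod_cast hn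
  have hqn : 0 < q - n := by linarith
  obtain ⟨j, hj⟩ := exists_nat_ge (max (2 * n / ε) (n * q / (q - n) / ε))
  have hj1 : 2 * n ≤ j * ε := by
    have := (le_max_left _ _).trans hj
    rwa [div_le_iff₀ hε] at this
  have hj2 : n * q / (q - n) ≤ j * ε := by
    have := (le_max_right _ _).trans hj
    rwa [div_le_iff₀ hε] at this
  refine ⟨j, ?_⟩
  intro f b v hf hb hv
  have hX : (v^(j+2))^ε = v^(((j+2 : ℕ):ℝ) * ε) := by
    rw [← Real.rpow_natCast, ← Real.rpow_mul hv.le]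
  have hcast : (j:ℝ) * ε ≤ ((j+2 : ℕ):ℝ) * ε := by push_cast; nlinarith
  rw [hX]
  set X := v^(((j+2 : ℕ):ℝ) * ε) with hXd
  have hX0 : 0 < X := Real.rpow_pos_of_pos hv _
  have h1 : (v^2)^n ≤ 1 + X := by
    rw [← pow_mul, ← Real.rpow_natCast]
    apply rpow_le_one_add hv (by positivity)
    push_cast; push_cast at hcast; linarith
  have h2 : (b * v)^n ≤ b^q + (1 + X) := by
    have hc : (q/n).HolderConjugate (q/(q-n)) := by
      rw [Real.holderConjugate_iff]
      refine ⟨by rw [lt_div_iff₀ hn0]; linarith, ?_⟩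
      have : q ≠ 0 := by linarith
      field_simp; ring
    have hy := Real.young_inequality_of_nonneg (a := b^n) (b := v^n) (by positivity) (by positivity) hc
    have e1 : (b^n)^(q/n) = b^q := by
      rw [← Real.rpow_natCast, ← Real.rpow_mul hb]; congr 1; field_simp
    have e2 : (v^n)^(q/(q-n)) = v^(n * q/(q-n)) := by
      rw [← Real.rpow_natCast, ← Real.rpow_mul hv.le]; congr 1; ring
    rw [e1, e2, ← mul_pow] at hy
    have hq0 : 0 < q := by linarith
    have h3 : v^(n * q/(q-n)) ≤ 1 + X := rpow_le_one_add hv (by positivity) (by linarith)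
    have h4 : b^q / (q/n) ≤ b^q := div_le_self (by positivity) (by rw [le_div_iff₀ hn0]; linarith)
    have h5 : v^(n * q/(q-n)) / (q/(q-n)) ≤ v^(n * q/(q-n)) := div_le_self (by positivity) (by rw [le_div_iff₀ hqn]; linarith)
    linarith
  have hbq : 0 ≤ b^q := by positivity
  set mx := max f (max (b*v) (v^2)) with hmx
  have hmx0 : 0 ≤ mx := hf.trans (le_max_left _ _)
  have h6 : f + b * v + v^2 ≤ 3 * mx := by
    have a1 : f ≤ mx := le_max_left _ _
    have a2 : b * v ≤ mx := (le_max_left _ _).trans (le_max_right _ _)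
    have a3 : v^2 ≤ mx := (le_max_right _ _).trans (le_max_right _ _)
    linarith
  have hfn : 0 ≤ f^n := by positivity
  have hbv : 0 ≤ (b*v)^n := by positivity
  have hvv : 0 ≤ (v^2)^n := by positivity
  calc (f + b * v + v^2)^n ≤ (3 * mx)^n := by gcongr
    _ = 3^n * mx^n := mul_pow _ _ _
    _ ≤ 3^n * (f^n + b^q + 2 * (1 + X)) := by
      gcongr
      rcases max_choice f (max (b*v) (v^2)) with h | h
      · rw [hmx, h]; linarith
      · rcases max_choice (b*v) (v^2) with h' | h'
        · rw [hmx, h, h']; linarith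
        · rw [hmx, h, h']; linarith

noncomputable def proj (e x : E n) : E n := x + (max (-inner ℝ e x) 0) • e

lemma proj_pos (e x : E n) (h : 0 ≤ inner ℝ e x) : proj e x = x := by
  rw [proj, max_eq_right (by linarith)]; simp

lemma proj_neg (e x : E n) (he : ‖e‖ = 1) (h : inner ℝ e x ≤ 0) : inner ℝ e (proj e x) = 0 := by
  rw [proj, max_eq_left (by linarith), inner_add_right, inner_smul_right, real_inner_self_eq_norm_sq, he]; ring

lemma proj_norm (e x : E n) (he : ‖e‖ = 1) : ‖proj e x‖ ≤ ‖x‖ := by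
  rcases le_total 0 (inner ℝ e x) with h | h
  · rw [proj_pos e x h]
  · have h1 := norm_add_sq_real x ((max (-inner ℝ e x) 0) • e)
    rw [inner_smul_right, norm_smul, he, max_eq_left (by linarith), real_inner_comm e x] at h1
    rw [← sq_le_sq₀ (norm_nonneg _) (norm_nonneg _), proj, max_eq_left (by linarith), h1]
    rw [Real.norm_of_nonneg (by linarith)]
    nlinarith [sq_nonneg (inner ℝ e x)]

lemma proj_inner (e x : E n) (he : ‖e‖ = 1) : 0 ≤ inner ℝ e (proj e x) := by
  rcases le_total 0 (inner ℝ e x) with h | h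
  · rw [proj_pos e x h]; exact h
  · rw [proj_neg e x he h]

open Metric in
set_option maxHeartbeats 1000000 in
lemma lmp (n : ℕ) (hn : 1 ≤ n) (lam Lam α B q Kq d0 : ℝ) (hlam : 0 < lam) (hL : lam ≤ Lam)
    (hq : (n:ℝ) < q) (ε C0 : ℝ) (hε : 0 < ε) (hC0 : 0 ≤ C0) :
    ∃ C : ℝ, 0 < C ∧ ∀ (e : E n) (u b f : E n → ℝ) (F : ℝ), Data lam Lam α B q Kq d0 e u b f F → F ≤ 1 →
      ∫⁻ x in Om e, ENNReal.ofReal (u x) ^ ε ≤ ENNReal.ofReal C0 →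
      ∀ x, ‖x‖ ≤ 9/5 → 0 ≤ inner ℝ e x → u x ≤ C := by
  haveI : Nonempty (Fin n) := ⟨⟨0, hn⟩⟩
  obtain ⟨j, hj⟩ := pt_bound n hn q ε hq hε
  have hLam : 0 < Lam := by linarith
  set V := (volume (ball (0 : E n) 2)).toReal with hV
  have hV0 : 0 ≤ V := ENNReal.toReal_nonneg
  set ω := (volume (ball (0 : E n) 1)).toReal with hω
  have hω0 : 0 < ω := ENNReal.toReal_pos (measure_ball_pos _ _ (by norm_num)).ne' measure_ball_lt_top.ne
  set A : ℝ := 4^(j+2) + 8 * (j+2) + n * Lam * (72 * (j+2)^2) with hA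
  have hA0 : 0 < A := by positivity
  set I : ℝ := 1 + |Kq| + 2 * V + 2 * C0 with hI
  have hI0 : 0 < I := by positivity
  set C2 : ℝ := (2 * (19/10) * (3 * (A / lam)))^n * I / ω with hC2
  have hC20 : 0 < C2 := by positivity
  refine ⟨4^(j+2) * (1 + C2^(j+2)), by positivity, ?_⟩
  intro e u b f F D hF hint x hx hxi
  set W : E n → ℝ := fun y => phi j y * u (proj e y) with hWd
  have hprojc : Continuous (proj e : E n → E n) := by unfold proj; fun_prop
  have hWc : ContinuousOn W (closedBall 0 (19/10)) := by
    apply (phi_smooth j).continuous.continuousOn.mul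
    apply D.cont.comp hprojc.continuousOn
    intro y hy
    rw [mem_closedBall_zero_iff] at hy
    exact ⟨(proj_norm e y D.he).trans_lt (by linarith), proj_inner e y D.he⟩
  have hzs : ∀ y : E n, zet y = (19/10 - ‖y‖) * (19/10 + ‖y‖) := by
    intro y; rw [zet, sub_zero]; ring
  have hWs : ∀ y ∈ sphere (0 : E n) (19/10), W y = 0 := by
    intro y hy
    rw [mem_sphere_zero_iff_norm] at hy
    simp only [hWd, phi, hzs, hy]; norm_num
  have hun : ∀ y ∈ closedBall (0 : E n) (19/10), 0 ≤ u (proj e y) := by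
    intro y hy
    rw [mem_closedBall_zero_iff] at hy
    exact D.nonneg _ ((proj_norm e y D.he).trans_lt (by linarith)) (proj_inner e y D.he)
  have hzn : ∀ y ∈ closedBall (0 : E n) (19/10), 0 ≤ zet y := by
    intro y hy
    rw [mem_closedBall_zero_iff] at hy
    rw [hzs]; have := norm_nonneg y
    apply mul_nonneg <;> linarith
  have hWn : ∀ y ∈ closedBall (0 : E n) (19/10), 0 ≤ W y := by
    intro y hy
    have := hzn y hy
    have h2 := hun y hy
    simp only [hWd, phi]; positivity
  obtain ⟨x0, hx0, hmax⟩ := (isCompact_closedBall (0 : E n) (19/10)).exists_isMaxOn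
    ⟨0, mem_closedBall_self (by norm_num)⟩ hWc
  set m := W x0 with hm
  have hmax' : ∀ y ∈ closedBall (0 : E n) (19/10), W y ≤ m := fun y hy => hmax hy
  suffices hmb : m ≤ 1 + C2^(j+2) by
    have hxb : x ∈ closedBall (0 : E n) (19/10) := by rw [mem_closedBall_zero_iff]; linarith
    have h1 := (hmax' x hxb).trans hmb
    simp only [hWd, phi] at h1
    rw [proj_pos e x hxi] at h1
    have hux := D.nonneg x (by linarith) hxi
    have hz : 1/4 ≤ zet x := by
      rw [hzs]; nlinarith [norm_nonneg x]
    have h2 : (1/4:ℝ)^(j+2) * u x ≤ (zet x)^(j+2) * u x := by gcongr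
    have h3 : u x = 4^(j+2) * ((1/4:ℝ)^(j+2) * u x) := by
      rw [← mul_assoc, ← mul_pow]; norm_num
    rw [h3]
    gcongr
    linarith
  rcases le_or_gt m 1 with hm1 | hm1
  · have : 0 < C2^(j+2) := by positivity
    linarith
  have hm0 : 0 < m := by linarith
  set t := m^(1/((j+2 : ℕ):ℝ)) with ht
  have htm : t^(j+2) = m := by
    rw [ht, ← Real.rpow_natCast, ← Real.rpow_mul hm0.le, one_div, inv_mul_cancel₀ (by positivity), Real.rpow_one]
  have ht1 : 1 ≤ t := Real.one_le_rpow hm1.le (by positivity)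
  have ht0 : 0 < t := by linarith
  have hin : ∀ y ∈ ball (0 : E n) (19/10), 0 < W y → y ∈ Om e := by
    intro y hy hWy
    rw [mem_ball_zero_iff] at hy
    refine ⟨by linarith, ?_⟩
    by_contra hcon
    have h0 := D.flat (proj e y) ((proj_norm e y D.he).trans_lt (by linarith)) (proj_neg e y D.he (not_lt.1 hcon))
    simp only [hWd, h0, mul_zero, lt_irrefl] at hWy
  have hWev : ∀ y ∈ Om e, W =ᶠ[nhds y] fun y => phi j y * u y := by
    intro y hy
    filter_upwards [(isOpen_Om e).mem_nhds hy] with y' hy'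
    simp only [hWd]
    rw [proj_pos e y' hy'.2.le]
  obtain ⟨Γ, hΓm, hΓ, hvol⟩ := abp_core 0 (19/10) (by norm_num) W hWc (fun y hy => (hWs y hy).le)
    (fun y hy hWy => ((phi_smooth j).contDiffAt.mul (D.C2 y (hin y hy hWy))).congr_of_eventuallyEq (hWev y (hin y hy hWy)))
    x0 hx0 m hm0 le_rfl
  set P : ℝ := (3 * (A / lam) * t^(j+1))^n with hP
  have hP0 : 0 < P := by positivity
  have hΓO : Γ ⊆ Om e := fun y hy => hin y (hΓ y hy).1 (hΓ y hy).2.1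
  have hpt : ∀ y ∈ Γ, ENNReal.ofReal (-lap W y)^n ≤ ENNReal.ofReal P *
      (ENNReal.ofReal (f y)^n + (ENNReal.ofReal (b y)^q + (2 + 2 * ENNReal.ofReal (u y)^ε))) := by
    intro y hy
    obtain ⟨h1, h2, h3, -, h5⟩ := hΓ y hy
    have hyO := hΓO hy
    have hyn := mem_ball_zero_iff.1 h1
    have hu0 := D.pos y hyO
    have hycb := ball_subset_closedBall h1
    have hz0 := hzn y hycb
    have hDW : ‖fderiv ℝ W y‖ * (19/10 - ‖y‖) ≤ W y := by
      have hd0 : 0 < 19/10 - ‖y‖ := by linarith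
      rw [← le_div_iff₀ hd0]
      apply ContinuousLinearMap.opNorm_le_of_unit_norm (by positivity)
      intro v hv
      have hkey : ∀ v : E n, ‖v‖ = 1 → fderiv ℝ W y v ≤ W y / (19/10 - ‖y‖) := by
        intro v hv
        have hmem : y - (19/10 - ‖y‖) • v ∈ closedBall (0 : E n) (19/10) := by
          rw [mem_closedBall_zero_iff]
          refine (norm_sub_le _ _).trans ?_
          rw [norm_smul, hv, Real.norm_of_nonneg hd0.le]; linarith
        have h6 := h3 _ hmem
        have h7 := hWn _ hmem
        rw [sub_sub_cancel_left, map_neg, map_smul, smul_eq_mul] at h6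
        rw [le_div_iff₀ hd0]; linarith
      rw [Real.norm_eq_abs, abs_le]
      refine ⟨?_, hkey v hv⟩
      have := hkey (-v) (by rw [norm_neg, hv])
      rw [map_neg] at this; linarith
    have hell := lmp_pt hlam hL j u W y (b y) (f y) (D.b0 y) (D.f0 y) (D.C2 y hyO) hu0 hyn (D.Ep y hyO) (hWev y hyO) hDW
    have hlap := lap_le_of_ell hell h5
    have hlap0 : 0 ≤ -lap W y := lap_nonpos h5
    set z := zet y with hz
    set v := (u y)^(1/((j+2 : ℕ):ℝ)) with hv
    have hv0 : 0 < v := Real.rpow_pos_of_pos hu0 _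
    have hvu : v^(j+2) = u y := by
      rw [hv, ← Real.rpow_natCast, ← Real.rpow_mul hu0.le, one_div, inv_mul_cancel₀ (by positivity), Real.rpow_one]
    have hWy : W y = (v * z)^(j+2) := by
      have := (hWev y hyO).eq_of_nhds
      rw [this, mul_pow, hvu]; simp only [phi]; ring
    have hvz : v * z ≤ t := by
      have h6 := hmax' y hycb
      rw [hWy, ← htm] at h6
      exact le_of_pow_le_pow_left₀ (by omega) ht0.le h6
    have hvz0 : 0 ≤ v * z := by positivity
    have hb0 := D.b0 y
    have hf0 := D.f0 y
    have e1 : u y * z^(j+1) ≤ v * t^(j+1) := by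
      calc u y * z^(j+1) = v * (v * z)^(j+1) := by rw [← hvu]; ring
        _ ≤ _ := by gcongr
    have e2 : u y * z^j ≤ v^2 * t^(j+1) := by
      calc u y * z^j = v^2 * (v * z)^j := by rw [← hvu]; ring
        _ ≤ v^2 * t^j := by gcongr
        _ ≤ _ := by
          have := pow_le_pow_right₀ ht1 (Nat.le_succ j)
          gcongr
    have ht1' : 1 ≤ t^(j+1) := one_le_pow₀ ht1
    have hz4 : z ≤ 4 := by rw [hz, zet]; nlinarith [sq_nonneg ‖y - 0‖]
    have e3 : z^(j+2) * f y ≤ 4^(j+2) * (f y * t^(j+1)) := by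
      gcongr
      exact le_mul_of_one_le_right hf0 ht1'
    set Y := f y + b y * v + v^2 with hY
    have hY0 : 0 ≤ Y := by positivity
    have e4 : -lap W y ≤ A / lam * t^(j+1) * Y := by
      have g1 : 8 * ((j:ℝ)+2) * (b y * (u y * z^(j+1))) ≤ 8 * ((j:ℝ)+2) * (b y * (v * t^(j+1))) := by gcongr
      have g2 : n * Lam * (72 * ((j:ℝ)+2)^2) * (u y * z^j) ≤ n * Lam * (72 * ((j:ℝ)+2)^2) * (v^2 * t^(j+1)) := by gcongr
      have g3 : lam * (-lap W y) ≤ A * (t^(j+1) * Y) := by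
        have k1 : 0 ≤ t^(j+1) * f y := by positivity
        have k2 : 0 ≤ t^(j+1) * (b y * v) := by positivity
        have k3 : 0 ≤ t^(j+1) * v^2 := by positivity
        set a1 : ℝ := 4^(j+2) with ha1
        set a2 : ℝ := 8 * ((j:ℝ)+2) with ha2
        set a3 : ℝ := n * Lam * (72 * ((j:ℝ)+2)^2) with ha3
        have p1 : 0 ≤ a1 := by positivity
        have p2 : 0 ≤ a2 := by positivity
        have p3 : 0 ≤ a3 := by positivity
        have : A * (t^(j+1) * Y) = a1 * (f y * t^(j+1)) + a2 * (b y * (v * t^(j+1))) + a3 * (v^2 * t^(j+1))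
          + ((a2 + a3) * (t^(j+1) * f y) + (a1 + a3) * (t^(j+1) * (b y * v)) + (a1 + a2) * (t^(j+1) * v^2)) := by
          rw [hA, hY]; ring
        have p4 : 0 ≤ ((a2 + a3) * (t^(j+1) * f y) + (a1 + a3) * (t^(j+1) * (b y * v)) + (a1 + a2) * (t^(j+1) * v^2)) := by positivity
        linarith
      calc -lap W y = (lam * (-lap W y)) / lam := by field_simp
        _ ≤ (A * (t^(j+1) * Y)) / lam := by gcongr
        _ = _ := by ring
    have e5 := hj (f y) (b y) v hf0 hb0 hv0
    rw [hvu] at e5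
    have e6 : (-lap W y)^n ≤ P * ((f y)^n + (b y)^q + 2 * (1 + (u y)^ε)) := by
      calc (-lap W y)^n ≤ (A / lam * t^(j+1) * Y)^n := by gcongr
        _ = (A / lam * t^(j+1))^n * Y^n := mul_pow _ _ _
        _ ≤ (A / lam * t^(j+1))^n * (3^n * ((f y)^n + (b y)^q + 2 * (1 + (u y)^ε))) := by gcongr
        _ = _ := by rw [hP, mul_assoc 3, mul_pow 3]; ring
    rw [← ENNReal.ofReal_pow hlap0]
    refine (ENNReal.ofReal_le_ofReal e6).trans (le_of_eq ?_)
    rw [ENNReal.ofReal_mul hP0.le, ENNReal.ofReal_add (by positivity) (by positivity), ENNReal.ofReal_add (by positivity) (by positivity),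
      ENNReal.ofReal_mul (by norm_num), ENNReal.ofReal_add (by norm_num) (by positivity), ENNReal.ofReal_pow hf0,
      ENNReal.ofReal_rpow_of_nonneg hb0 (by linarith [(Nat.cast_nonneg n : (0:ℝ) ≤ n)]), ENNReal.ofReal_rpow_of_nonneg hu0.le hε.le]
    simp only [ENNReal.ofReal_one, ENNReal.ofReal_ofNat]
    ring
  have hbig : volume (ball (0 : E n) (m / (2 * (19/10)))) ≤ ENNReal.ofReal (P * I) := by
    refine hvol.trans ((setLIntegral_mono' hΓm hpt).trans ?_)
    refine (lintegral_mono_set hΓO).trans ?_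
    rw [lintegral_const_mul' _ _ ENNReal.ofReal_ne_top, lintegral_add_left (D.fm.ennreal_ofReal.pow_const n),
      lintegral_add_left (D.bm.ennreal_ofReal.pow_const q), lintegral_add_left measurable_const,
      lintegral_const_mul' _ _ (by norm_num), setLIntegral_const, ENNReal.ofReal_mul hP0.le]
    gcongr
    have hh1 : ∫⁻ y in Om e, ENNReal.ofReal (f y)^n ≤ ENNReal.ofReal 1 := by
      refine (lintegral_mono_set (Set.subset_univ _)).trans (D.hfn.trans ?_)
      rw [← ENNReal.ofReal_pow D.F0]
      exact ENNReal.ofReal_le_ofReal (pow_le_one₀ D.F0 hF)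
    have hh2 : ∫⁻ y in Om e, ENNReal.ofReal (b y)^q ≤ ENNReal.ofReal |Kq| := by
      refine (setLIntegral_le_lintegral _ _).trans (D.hbq.trans ?_)
      exact ENNReal.ofReal_le_ofReal (le_abs_self _)
    have hh3 : (2:ℝ≥0∞) * volume (Om e) ≤ ENNReal.ofReal (2 * V) := by
      rw [ENNReal.ofReal_mul (by norm_num), hV, ENNReal.ofReal_toReal measure_ball_lt_top.ne]
      simp only [ENNReal.ofReal_ofNat]
      gcongr
      exact Om_sub_ball e
    have hh4 : (2:ℝ≥0∞) * ∫⁻ y in Om e, ENNReal.ofReal (u y)^ε ≤ ENNReal.ofReal (2 * C0) := by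
      rw [ENNReal.ofReal_mul (by norm_num)]
      simp only [ENNReal.ofReal_ofNat]
      gcongr
    rw [hI, ENNReal.ofReal_add (by positivity) (by positivity), ENNReal.ofReal_add (by positivity) (by positivity),
      ENNReal.ofReal_add (by positivity) (by positivity), add_assoc, add_assoc]
    gcongr
  rw [Measure.addHaar_ball volume _ (by positivity), finrank_euclideanSpace, Fintype.card_fin,
    ← ENNReal.ofReal_toReal (measure_ball_lt_top (μ := volume) (x := (0 : E n)) (r := 1)).ne,
    ← ENNReal.ofReal_mul (by positivity), ENNReal.ofReal_le_ofReal_iff (by positivity)] at hbig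
  rw [← hω] at hbig
  have hfin : t^n ≤ C2 := by
    rw [hC2, le_div_iff₀ hω0]
    have h1 : t^((j+1)*n) * (t^n * ω) ≤ t^((j+1)*n) * ((2 * (19/10) * (3 * (A / lam)))^n * I) := by
      calc t^((j+1)*n) * (t^n * ω) = (2 * (19/10))^n * ((m / (2 * (19/10)))^n * ω) := by
            rw [← htm]; rw [div_pow, ← pow_mul]
            have : (j+2) * n = (j+1)*n + n := by ring
            rw [this, pow_add]
            field_simp
        _ ≤ (2 * (19/10))^n * (P * I) := by gcongr
        _ = _ := by rw [hP, mul_pow (3 * (A/lam)), mul_pow (2 * (19/10 : ℝ)) (3 * (A/lam)), ← pow_mul]; ring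
    exact le_of_mul_le_mul_left h1 (by positivity)
  have htC : t ≤ C2 := (le_self_pow₀ ht1 (by omega)).trans hfin
  rw [← htm]
  have : t^(j+2) ≤ C2^(j+2) := by gcongr
  linarith

end BH


namespace BH
variable {n : ℕ}

lemma ell_scale {lam Lam : ℝ} {w : E n → ℝ} {x : E n} {h : ℝ} (hw : ContDiffAt ℝ 2 w x)
    (hE : Ell lam Lam w x h) {c : ℝ} (hc : 0 < c) : Ell lam Lam (fun y => c * w y) x (c * h) := by
  intro ε hε
  obtain ⟨ξ, a, ha, hs⟩ := hE (ε / c) (by positivity)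
  refine ⟨ξ, a, ha, ?_⟩
  have h1 : ∑ k, a k * D2 (fun y => c * w y) x (ξ k) = c * ∑ k, a k * D2 w x (ξ k) := by
    rw [Finset.mul_sum]
    apply Finset.sum_congr rfl
    intro k _
    rw [D2_const_mul hw]; ring
  rw [h1]
  have h2 : c * (-h - ε / c) ≤ c * ∑ k, a k * D2 w x (ξ k) := by gcongr
  have h3 : c * (-h - ε / c) = -(c * h) - ε := by field_simp
  linarith

lemma Data.scale {lam Lam α B q Kq d0 : ℝ} {e : E n} {u b f : E n → ℝ} {F : ℝ}
    (D : Data lam Lam α B q Kq d0 e u b f F) {c : ℝ} (hc : 0 < c) :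
    Data lam Lam α B q Kq d0 e (fun y => c * u y) b (fun y => c * f y) (c * F) where
  he := D.he
  cont := continuousOn_const.mul D.cont
  flat := fun x h1 h2 => by rw [D.flat x h1 h2, mul_zero]
  pos := fun x hx => mul_pos hc (D.pos x hx)
  C2 := fun x hx => contDiffAt_const.mul (D.C2 x hx)
  bm := D.bm
  fm := D.fm.const_mul c
  b0 := D.b0
  f0 := fun x => mul_nonneg hc.le (D.f0 x)
  Ep := fun x hx => by
    refine (ell_scale (D.C2 x hx) (D.Ep x hx) hc).mono (le_of_eq ?_)
    rw [fderiv_const_mul ((D.C2 x hx).differentiableAt (by norm_num)), norm_smul, Real.norm_of_nonneg hc.le]; ring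
  Em := fun x hx => by
    have h1 := ell_scale (D.C2 x hx).neg (D.Em x hx) hc
    have h2 : (fun y => -(c * u y)) = fun y => c * (-u) y := by ext y; simp
    rw [h2]
    refine h1.mono (le_of_eq ?_)
    rw [fderiv_const_mul ((D.C2 x hx).differentiableAt (by norm_num)), norm_smul, Real.norm_of_nonneg hc.le]; ring
  B0 := D.B0
  F0 := mul_nonneg hc.le D.F0
  hb := D.hb
  hbq := D.hbq
  hfn := D.hfn.const_mul hc.le
  hf := fun x hx ρ h1 h2 => by
    have := (D.hf x hx ρ h1 h2).const_mul hc.le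
    rwa [show ρ^α * (c * F) = c * (ρ^α * F) by ring]

lemma foot_inner (e x : E n) (he : ‖e‖ = 1) : inner ℝ e (x - (inner ℝ e x) • e) = 0 := by
  rw [inner_sub_right, inner_smul_right, real_inner_self_eq_norm_sq, he]; ring

lemma foot_norm (e x : E n) (he : ‖e‖ = 1) : ‖x - (inner ℝ e x) • e‖ ≤ ‖x‖ := by
  have h1 := norm_sub_sq_real x ((inner ℝ e x) • e)
  rw [inner_smul_right, norm_smul, he, real_inner_comm e x, mul_one, Real.norm_eq_abs, sq_abs] at h1
  rw [← sq_le_sq₀ (norm_nonneg _) (norm_nonneg _), h1]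
  nlinarith [sq_nonneg (inner ℝ e x)]

open Metric in
lemma touch (n : ℕ) (hn : 1 ≤ n) (lam Lam α B q Kq d0 : ℝ) (hlam : 0 < lam) (hL : lam ≤ Lam)
    (hα : 0 < α) (hd0 : 0 < d0) (hd1 : d0 ≤ 1/4) : ∃ δ0 C : ℝ, 0 < δ0 ∧ δ0 ≤ 1 ∧ 0 < C ∧
    ∀ (e : E n) (u b f : E n → ℝ) (F : ℝ), Data lam Lam α B q Kq d0 e u b f F →
    ∀ y, ‖y‖ < 3/2 → 0 < inner ℝ e y → ∃ z, δ0 ≤ dd e z ∧ u z ≤ C * (u y / inner ℝ e y + F) := by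
  obtain ⟨h, θ, c, C, hh, hh8, hθ, hc, hC, H⟩ := hopf n hn lam Lam α B q Kq d0 hlam hL hα hd0 hd1
  refine ⟨min (h/2) θ, (2 + C) / c + 2, by positivity, (min_le_left _ _).trans (by linarith), by positivity, ?_⟩
  intro e u b f F D y hy hyi
  set s := inner ℝ e y with hs
  have hF := D.F0
  have huy : 0 < u y := D.pos y ⟨by linarith, hyi⟩
  have hX : 0 < u y / s := by positivity
  have hP : 0 < (2 + C) / c := by positivity
  rcases le_or_gt s θ with h1 | h1
  · set x0 := y - s • e with hx0
    have hyx : x0 + s • e = y := by rw [hx0]; abel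
    have hx0i : inner ℝ e x0 = 0 := foot_inner e y D.he
    have hx0n : ‖x0‖ < 3/2 := (foot_norm e y D.he).trans_lt hy
    set t := (2 * (u y / s) + C * F) / c with ht
    have ht0 : 0 ≤ t := by positivity
    by_cases hall : ∀ y ∈ closedBall (x0 + h • e) (h/2), t ≤ u y
    · exfalso
      have h2 := H e u b f F D x0 t hx0i hx0n ht0 hall s hyi h1
      rw [hyx] at h2
      have h3 : c * t - C * F = 2 * (u y / s) := by rw [ht]; field_simp; ring
      rw [h3] at h2
      have h4 : 2 * (u y / s) * s = 2 * u y := by field_simp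
      linarith
    · push Not at hall
      obtain ⟨z, hz, hzt⟩ := hall
      refine ⟨z, ?_, ?_⟩
      · rw [mem_closedBall, dist_eq_norm] at hz
        refine (min_le_left _ _).trans (le_min ?_ ?_)
        · have h5 : ‖z‖ ≤ ‖x0‖ + h + h/2 := by
            have : z = x0 + h • e + (z - (x0 + h • e)) := by abel
            rw [this]
            refine (norm_add_le _ _).trans (add_le_add ((norm_add_le _ _).trans ?_) hz)
            rw [norm_smul, D.he, Real.norm_of_nonneg hh.le, mul_one]
          linarith
        · have h6 : inner ℝ e z = h + inner ℝ e (z - (x0 + h • e)) := by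
            rw [inner_sub_right, inner_add_right, inner_smul_right, hx0i, real_inner_self_eq_norm_sq, D.he]; ring
          have h7 := abs_real_inner_le_norm e (z - (x0 + h • e))
          rw [D.he, one_mul] at h7
          have := (abs_le.1 h7).1
          linarith
      · refine hzt.le.trans ?_
        have h8 : t ≤ (2 + C) / c * (u y / s + F) := by
          rw [ht, div_mul_eq_mul_div]
          gcongr
          nlinarith
        nlinarith
  · refine ⟨y, le_min ((min_le_left _ _).trans (by linarith)) ((min_le_right _ _).trans h1.le), ?_⟩
    have hs2 : s ≤ 2 := by
      have := real_inner_le_norm e y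
      rw [D.he, one_mul] at this; linarith
    have h3 : u y = (u y / s) * s := by field_simp
    have h4 : (u y / s) * s ≤ (u y / s) * 2 := by gcongr
    nlinarith

open Metric in
lemma harnack_data (n : ℕ) (hn : 1 ≤ n) (lam Lam α B q Kq d0 : ℝ) (hlam : 0 < lam) (hL : lam ≤ Lam)
    (hα : 0 < α) (hq : (n:ℝ) < q) (hd0 : 0 < d0) (hd1 : d0 ≤ 1/4) : ∃ C : ℝ, 0 < C ∧
    ∀ (e : E n) (u b f : E n → ℝ) (F : ℝ), Data lam Lam α B q Kq d0 e u b f F →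
    ∀ x y, ‖x‖ < 1 → 0 < inner ℝ e x → ‖y‖ < 3/2 → 0 < inner ℝ e y →
      u x / inner ℝ e x ≤ C * (u y / inner ℝ e y + F) := by
  obtain ⟨δ0, C3, hδ0, hδ1, hC3, H1⟩ := touch n hn lam Lam α B q Kq d0 hlam hL hα hd0 hd1
  obtain ⟨ε0', ε, C0, hε0', hε, hC0, H2⟩ := l_eps n hn lam Lam α B q Kq d0 hlam hL hα δ0 hδ0 hδ1
  obtain ⟨C4, hC4, H3⟩ := lmp n hn lam Lam α B q Kq d0 hlam hL hq ε C0 hε hC0.le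
  obtain ⟨κ, C5, hκ, hC5, H4⟩ := BL n hn lam Lam α hlam hL hα
  obtain ⟨r0, hr0, hr01, hr0s⟩ := exists_small hα B κ hκ
  set ε0 := min ε0' 1 with hε0d
  have hε0 : 0 < ε0 := by positivity
  have hε01 : ε0 ≤ 1 := min_le_right _ _
  set r := min r0 d0 with hr
  have hrp : 0 < r := by positivity
  have hrd : r ≤ d0 := min_le_right _ _
  refine ⟨(C5 * (C4/r + 1) + C4/r) * (C3 + 1/ε0), by positivity, ?_⟩
  intro e u b f F D x y hx hxi hy hyi
  obtain ⟨z, hz, hzu⟩ := H1 e u b f F D y hy hyi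
  have hzO : z ∈ Om e := (mem_Om_iff e z).2 (hδ0.trans_le hz)
  have huz := D.pos z hzO
  have hF := D.F0
  set m := u z + F / ε0 with hm
  have hm0 : 0 < m := by positivity
  have hFm : F ≤ ε0 * m := by
    rw [hm, mul_add, mul_div_cancel₀ _ hε0.ne']
    have : 0 < ε0 * u z := by positivity
    linarith
  have hFm' : F ≤ m := by nlinarith
  have D' := D.scale (inv_pos.2 hm0)
  have hF' : m⁻¹ * F ≤ ε0 := by rw [inv_mul_le_iff₀ hm0]; linarith
  have h1 := H2 e _ b _ _ D' (hF'.trans (min_le_left _ _)) z hz (by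
    rw [inv_mul_le_iff₀ hm0, mul_one, hm]
    have : 0 ≤ F / ε0 := by positivity
    linarith)
  have h2 := H3 e _ b _ _ D' (hF'.trans hε01) h1
  have hub : ∀ w, ‖w‖ ≤ 9/5 → 0 ≤ inner ℝ e w → u w ≤ C4 * m := by
    intro w hw hwi
    have := h2 w hw hwi
    rw [inv_mul_le_iff₀ hm0] at this
    linarith
  set s := inner ℝ e x with hs
  have hmain : u x ≤ (C5 * (C4/r + 1) + C4/r) * m * s := by
    rcases le_or_gt s r with h | h
    · set x0 := x - s • e with hx0
      have hxx : x0 + s • e = x := by rw [hx0]; abel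
      have hx0i : inner ℝ e x0 = 0 := foot_inner e x D.he
      have hx0n : ‖x0‖ < 1 := (foot_norm e x D.he).trans_lt hx
      have hcb : ∀ w ∈ closedBall x0 r, ‖w‖ ≤ 5/4 := by
        intro w hw
        rw [mem_closedBall, dist_eq_norm] at hw
        have := norm_le_norm_add_norm_sub' w x0
        linarith
      have hbl := H4 e x0 r u b f (C4 * m / r) B F D.he hx0i hrp (by positivity) D.B0 hF
        (D.cont.mono fun w hw => ⟨by linarith [hcb w hw.1], hw.2⟩)
        (fun w hw hwi => (D.flat w (by linarith [hcb w hw]) hwi).le)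
        (fun w hw hwi => by rw [div_mul_cancel₀ _ hrp.ne']; exact hub w (by linarith [hcb w hw]) hwi)
        (fun w hw hwi => D.C2 w ⟨by linarith [hcb w (ball_subset_closedBall hw)], hwi⟩)
        D.bm D.fm D.b0 D.f0
        (fun w hw hwi => D.Ep w ⟨by linarith [hcb w (ball_subset_closedBall hw)], hwi⟩)
        (fun ρ hρ _ => D.hb x0 ρ hρ) (hr0s r hrp.le (min_le_left _ _))
        (fun ρ hρ hρr => D.hf x0 hx0i ρ hρ (hρr.trans hrd)) s hxi h
      rw [hxx] at hbl
      refine hbl.trans (mul_le_mul_of_nonneg_right ?_ hxi.le)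
      have hra : r^α ≤ 1 := Real.rpow_le_one hrp.le ((min_le_left _ _).trans hr01) hα.le
      have h5 : r^α * F ≤ 1 * m := by gcongr
      have h6 : C5 * (C4 * m / r + r^α * F) ≤ C5 * (C4 * m / r + 1 * m) := by gcongr
      have h7 : 0 < C4 / r * m := by positivity
      have h8 : C5 * (C4 * m / r + 1 * m) = C5 * (C4/r + 1) * m := by ring
      linarith
    · have h5 := hub x (by linarith) hxi.le
      have h6 : C4 * m ≤ C4/r * m * s := by
        have : C4/r * m * r ≤ C4/r * m * s := by gcongr
        have e : C4/r * m * r = C4 * m := by field_simp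
        linarith
      have h7 : 0 < C5 * (C4/r + 1) * m * s := by positivity
      linarith
  rw [div_le_iff₀ hxi]
  refine hmain.trans (mul_le_mul_of_nonneg_right ?_ hxi.le)
  rw [mul_assoc]
  refine mul_le_mul_of_nonneg_left ?_ (by positivity)
  have hX : 0 < u y / inner ℝ e y := div_pos (D.pos y ⟨by linarith, hyi⟩) hyi
  have h9 : F / ε0 ≤ 1/ε0 * (u y / inner ℝ e y + F) := by
    rw [div_mul_eq_mul_div, one_mul]; gcongr; linarith
  rw [hm]; linarith

end BH


namespace BH
variable {n : ℕ}

lemma holder_n (hn : 1 ≤ n) (g : E n → ℝ) (hg : Measurable g) (hg0 : ∀ x, 0 ≤ g x) (S : Set (E n)) (s : ℝ)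
    (hs : (n:ℝ) ≤ s) (N Vs : ℝ) (hN : 0 ≤ N) (hVs : 0 ≤ Vs)
    (h1 : (∫⁻ x in S, ENNReal.ofReal (g x)^s)^(1/s) ≤ ENNReal.ofReal N) (h2 : volume S ≤ ENNReal.ofReal Vs) :
    Lnle g S (N * Vs^(1/(n:ℝ) - 1/s)) := by
  have hn0 : (0:ℝ) < n := by exact_mod_cast hn
  have key := eLpNorm'_le_eLpNorm'_mul_rpow_measure_univ hn0 hs (μ := volume.restrict S) (f := g) hg.aestronglyMeasurable
  rw [eLpNorm'_eq_lintegral_enorm, eLpNorm'_eq_lintegral_enorm, Measure.restrict_apply_univ] at key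
  have he : ∀ x, ‖g x‖ₑ = ENNReal.ofReal (g x) := fun x => Real.enorm_of_nonneg (hg0 x)
  simp only [he] at key
  have hexp : 0 ≤ 1/(n:ℝ) - 1/s := by
    have := one_div_le_one_div_of_le hn0 hs
    linarith
  have h3 : (∫⁻ x in S, ENNReal.ofReal (g x)^(n:ℝ))^(1/(n:ℝ)) ≤ ENNReal.ofReal (N * Vs^(1/(n:ℝ) - 1/s)) := by
    refine key.trans ?_
    rw [ENNReal.ofReal_mul hN, ← ENNReal.ofReal_rpow_of_nonneg hVs hexp]
    gcongr
  unfold Lnle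
  have h4 := ENNReal.rpow_le_rpow h3 hn0.le
  rw [← ENNReal.rpow_mul, one_div_mul_cancel hn0.ne', ENNReal.rpow_one] at h4
  simpa only [ENNReal.rpow_natCast] using h4

lemma vol_ball_eq (hn : 1 ≤ n) (x : E n) (ρ : ℝ) (hρ : 0 ≤ ρ) :
    volume (Metric.ball x ρ) = ENNReal.ofReal (ρ^n * (volume (Metric.ball (0 : E n) 1)).toReal) := by
  have : Nonempty (Fin n) := ⟨⟨0, hn⟩⟩
  rw [Measure.addHaar_ball volume _ hρ, finrank_euclideanSpace, Fintype.card_fin,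
    ENNReal.ofReal_mul (by positivity), ENNReal.ofReal_toReal measure_ball_lt_top.ne]

lemma meas_ind (S : Set (E n)) (hS : IsOpen S) (g : E n → ℝ) (hg : ContinuousOn g S) :
    Measurable (S.indicator g) := by
  classical
  have : S.indicator g = S.piecewise g (fun _ => 0) := by
    ext x; simp [Set.indicator, Set.piecewise]
  rw [this]
  exact hg.measurable_piecewise continuousOn_const hS.measurableSet

lemma int_ind_rpow (S T : Set (E n)) (hS : MeasurableSet S) (hT : MeasurableSet T) (g : E n → ℝ) (s : ℝ) (hs : 0 < s)
    (T' : Set (E n)) (hTT : ∀ x ∈ T, x ∈ S → x ∈ T') :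
    ∫⁻ x in T, ENNReal.ofReal (S.indicator (fun y => |g y|) x)^s ≤ ∫⁻ x in T', ENNReal.ofReal (|g x|^s) := by
  have h : ∀ x, ENNReal.ofReal (S.indicator (fun y => |g y|) x)^s = S.indicator (fun y => ENNReal.ofReal (|g y|^s)) x := by
    intro x
    by_cases hx : x ∈ S
    · rw [Set.indicator_of_mem hx, Set.indicator_of_mem hx, ENNReal.ofReal_rpow_of_nonneg (abs_nonneg _) hs.le]
    · rw [Set.indicator_of_notMem hx, Set.indicator_of_notMem hx]; simp [hs]
  simp only [h]
  rw [lintegral_indicator hS, Measure.restrict_restrict hS]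
  exact lintegral_mono_set fun x hx => hTT x hx.2 hx.1

lemma inner_last (n : ℕ) (hn : 1 ≤ n) (x : E n) :
    inner ℝ (EuclideanSpace.single (⟨n-1, by omega⟩ : Fin n) (1:ℝ)) x = lastC n hn x := by
  rw [EuclideanSpace.inner_single_left]; simp [lastC]

open Metric in
lemma final (n : ℕ) (hn : 1 ≤ n) (lam Lam : ℝ) (hlam : 0 < lam) (hLam : lam ≤ Lam)
    (p q d0 K : ℝ) (hq : (n : ℝ) < q) (hp : (n : ℝ) ≤ p) 
    (hd0 : 0 < d0) (hd0' : d0 ≤ 1 / 4) (hK : 0 < K) :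
    ∃ C : ℝ, 0 < C ∧
      ∀ b f u : E n → ℝ,
        ContinuousOn b (halfBall n hn 2) →
        ContinuousOn f (halfBall n hn 2) →
        (∀ x ∈ halfBall n hn 2, 0 ≤ b x) →
        LpNormE n q b (halfBall n hn 2) ≤ ENNReal.ofReal K →
        ContinuousOn u (halfBall n hn 2 ∪ flatB n hn 2) →
        ContDiffOn ℝ 2 u (halfBall n hn 2) →
        (∀ x ∈ halfBall n hn 2,
          pucciMinus n lam Lam (hess n u x) - b x * gradNorm n u x ≤ max (f x) 0) →
        (∀ x ∈ halfBall n hn 2,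
          -(max (-f x) 0) ≤ pucciPlus n lam Lam (hess n u x) + b x * gradNorm n u x) →
        (∀ x ∈ halfBall n hn 2, 0 < u x) →
        (∀ x ∈ flatB n hn 2, u x = 0) →
        ∀ x ∈ halfBall n hn 1,
          ENNReal.ofReal (u x / lastC n hn x)
            ≤ ENNReal.ofReal C *
              (ENNReal.ofReal (⨅ y : halfBall n hn (3 / 2), u y.1 / lastC n hn y.1)
                + LpqNormHB n hn p q d0 2 f) := by
  have hn0 : (0:ℝ) < n := by exact_mod_cast hn
  have hq0 : 0 < q := by linarith
  have hp0 : 0 < p := by linarith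
  set ω := (volume (ball (0 : E n) 1)).toReal with hω
  have hω0 : 0 ≤ ω := ENNReal.toReal_nonneg
  set α : ℝ := 1 - n/q with hα
  have hα0 : 0 < α := by rw [hα, sub_pos, div_lt_one hq0]; exact hq
  set w : ℝ := ω^(1/(n:ℝ) - 1/q) with hw
  have hw0 : 0 ≤ w := by positivity
  set w2 : ℝ := (2^n * ω)^(1/(n:ℝ) - 1/p) with hw2
  have hw20 : 0 ≤ w2 := by positivity
  obtain ⟨C, hC, H⟩ := harnack_data n hn lam Lam α (K * w) q (K^q) d0 hlam hLam hα0 hq hd0 hd0'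
  set c1 : ℝ := 1 + w2 + w with hc1
  have hc11 : 1 ≤ c1 := by linarith
  refine ⟨C * c1, by positivity, ?_⟩
  intro b f u hbc hfc hb0 hbK huc hu2 hLm hLp hup hu0 x hx
  by_cases htop : LpqNormHB n hn p q d0 2 f = ⊤
  · rw [htop, add_top, ENNReal.mul_top]
    · exact le_top
    · exact (ENNReal.ofReal_pos.2 (by positivity)).ne'
  set e : E n := EuclideanSpace.single (⟨n-1, by omega⟩ : Fin n) (1:ℝ) with he
  have hei : ∀ y : E n, inner ℝ e y = lastC n hn y := fun y => inner_last n hn y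
  have heOm : Om e = halfBall n hn 2 := by
    ext y; simp only [Om, halfBall, Set.mem_setOf_eq, hei]
  set S := halfBall n hn 2 with hS
  have hSo : IsOpen S := by rw [← heOm]; exact isOpen_Om e
  set F0 := (LpqNormHB n hn p q d0 2 f).toReal with hF0
  have hF00 : 0 ≤ F0 := ENNReal.toReal_nonneg
  have hF0e : ENNReal.ofReal F0 = LpqNormHB n hn p q d0 2 f := ENNReal.ofReal_toReal htop
  set b' := S.indicator (fun y => |b y|) with hb'
  set f' := S.indicator (fun y => |f y|) with hf'
  have hb'm : Measurable b' := meas_ind S hSo _ hbc.abs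
  have hf'm : Measurable f' := meas_ind S hSo _ hfc.abs
  have hb'0 : ∀ y, 0 ≤ b' y := fun y => Set.indicator_nonneg (fun _ _ => abs_nonneg _) y
  have hf'0 : ∀ y, 0 ≤ f' y := fun y => Set.indicator_nonneg (fun _ _ => abs_nonneg _) y
  have hvb : ∀ (y : E n) (ρ : ℝ), 0 < ρ → (ρ^n * ω)^(1/(n:ℝ) - 1/q) = ρ^α * w := by
    intro y ρ hρ
    rw [Real.mul_rpow (by positivity) hω0, ← Real.rpow_natCast, ← Real.rpow_mul hρ.le, hw, hα]
    congr 2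
    field_simp
  have hball : ∀ (y : E n) (ρ : ℝ) (g : E n → ℝ) (N : ℝ), 0 < ρ → 0 ≤ N → Measurable g → (∀ x, 0 ≤ g x) →
      (∫⁻ x in ball y ρ, ENNReal.ofReal (g x)^q)^(1/q) ≤ ENNReal.ofReal N → Lnle g (ball y ρ) (ρ^α * (N * w)) := by
    intro y ρ g N hρ hN hgm hg0 hg
    have := holder_n hn g hgm hg0 (ball y ρ) q hq.le N (ρ^n * ω) hN (by positivity) hg (vol_ball_eq hn y ρ hρ.le).le
    rw [hvb y ρ hρ] at this
    rwa [show ρ^α * (N * w) = N * (ρ^α * w) by ring]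
  have hNp : LpNormE n p f S ≤ ENNReal.ofReal F0 := by
    rw [hF0e]; exact le_self_add
  have hNq : LpNormE n q f {x ∈ S | lastC n hn x < d0} ≤ ENNReal.ofReal F0 := by
    rw [hF0e]; exact le_add_self
  have D : Data lam Lam α (K * w) q (K^q) d0 e u b' f' (F0 * c1) := by
    refine ⟨by rw [he]; simp, ?_, ?_, ?_, ?_, hb'm, hf'm, hb'0, hf'0, ?_, ?_, by positivity, by positivity, ?_, ?_, ?_, ?_⟩
    · refine huc.mono ?_
      rintro y ⟨h1, h2⟩
      rw [hei] at h2
      rcases h2.eq_or_lt with h | h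
      · right; exact ⟨h1.le, h.symm⟩
      · left; exact ⟨h1, h⟩
    · intro y h1 h2
      rw [hei] at h2
      exact hu0 y ⟨h1.le, h2⟩
    · rw [heOm]; exact hup
    · rw [heOm]; intro y hy; exact hu2.contDiffAt (hSo.mem_nhds hy)
    · rw [heOm]
      intro y hy
      have h1 := hLp y hy
      apply ell_of_pucciPlus hLam (hu2.contDiffAt (hSo.mem_nhds hy))
      rw [hb', hf', Set.indicator_of_mem hy, Set.indicator_of_mem hy, abs_of_nonneg (hb0 y hy)]
      have h2 : max (-f y) 0 ≤ |f y| := max_le (neg_le_abs _) (abs_nonneg _)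
      simp only [gradNorm] at h1
      linarith
    · rw [heOm]
      intro y hy
      have h1 := hLm y hy
      apply ell_of_pucciMinus hLam (hu2.contDiffAt (hSo.mem_nhds hy))
      rw [hb', hf', Set.indicator_of_mem hy, Set.indicator_of_mem hy, abs_of_nonneg (hb0 y hy)]
      have h2 : max (f y) 0 ≤ |f y| := max_le (le_abs_self _) (abs_nonneg _)
      simp only [gradNorm] at h1
      linarith
    · intro y ρ hρ
      apply hball y ρ b' K hρ hK.le hb'm hb'0
      refine le_trans ?_ hbK
      unfold LpNormE
      refine ENNReal.rpow_le_rpow ?_ (by positivity)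
      exact int_ind_rpow S _ hSo.measurableSet measurableSet_ball b q hq0 S (fun _ _ h => h)
    · have h1 := int_ind_rpow S Set.univ hSo.measurableSet MeasurableSet.univ b q hq0 S (fun _ _ h => h)
      rw [Measure.restrict_univ] at h1
      refine h1.trans ?_
      have h2 := ENNReal.rpow_le_rpow hbK hq0.le
      unfold LpNormE at h2
      rwa [← ENNReal.rpow_mul, one_div, inv_mul_cancel₀ hq0.ne', ENNReal.rpow_one, ENNReal.ofReal_rpow_of_pos hK] at h2
    · have h1 := holder_n hn f' hf'm hf'0 (ball 0 2) p hp F0 (2^n * ω) hF00 (by positivity) (by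
        refine le_trans ?_ hNp
        unfold LpNormE
        refine ENNReal.rpow_le_rpow ?_ (by positivity)
        exact int_ind_rpow S _ hSo.measurableSet measurableSet_ball f p hp0 S (fun _ _ h => h))
        (vol_ball_eq hn 0 2 (by norm_num)).le
      have h2 : Lnle f' (ball 0 2) (F0 * c1) := h1.mono (by
        rw [← hw2]; gcongr; linarith)
      unfold Lnle at h2 ⊢
      rw [Measure.restrict_univ]
      rw [setLIntegral_eq_of_support_subset] at h2
      · exact h2
      · intro y hy
        by_contra hcon
        apply hy
        have : y ∉ S := fun h => hcon (by rw [mem_ball_zero_iff]; exact h.1)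
        show ENNReal.ofReal (f' y)^n = 0
        rw [hf', Set.indicator_of_notMem this]
        simp; omega
    · intro y hyi ρ hρ hρd
      have h1 := hball y ρ f' F0 hρ hF00 hf'm hf'0 (by
        refine le_trans ?_ hNq
        unfold LpNormE
        refine ENNReal.rpow_le_rpow ?_ (by positivity)
        apply int_ind_rpow S _ hSo.measurableSet measurableSet_ball f q hq0
        intro z hz hzS
        refine ⟨hzS, ?_⟩
        rw [mem_ball, dist_eq_norm] at hz
        rw [← hei]
        have h3 := real_inner_le_norm e (z - y)
        rw [inner_sub_right, hyi] at h3
        have h4 : ‖e‖ = 1 := by rw [he]; simp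
        rw [h4] at h3
        linarith)
      refine h1.mono ?_
      gcongr
      linarith
  have hH := H e u b' f' _ D x
  simp only [hei] at hH
  have hne : Nonempty (halfBall n hn (3/2)) := ⟨⟨x, ⟨by have := hx.1; linarith, hx.2⟩⟩⟩
  set iv := ⨅ y : halfBall n hn (3 / 2), u y.1 / lastC n hn y.1 with hiv
  have hiv0 : 0 ≤ iv := by
    apply Real.iInf_nonneg
    intro y
    have h1 := y.2.1
    exact div_nonneg (hup y.1 ⟨by linarith, y.2.2⟩).le y.2.2.le
  have h1 : u x / lastC n hn x / C - F0 * c1 ≤ iv := by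
    apply le_ciInf
    intro y
    have h2 := hH y.1 hx.1 hx.2 y.2.1 y.2.2
    rw [sub_le_iff_le_add, div_le_iff₀ hC]
    linarith
  have h2 : u x / lastC n hn x ≤ C * c1 * (iv + F0) := by
    rw [sub_le_iff_le_add, div_le_iff₀ hC] at h1
    have h3 : iv ≤ c1 * iv := le_mul_of_one_le_left hiv0 hc11
    have h4 : C * iv ≤ C * (c1 * iv) := by gcongr
    nlinarith
  refine (ENNReal.ofReal_le_ofReal h2).trans (le_of_eq ?_)
  rw [ENNReal.ofReal_mul (by positivity), ENNReal.ofReal_add hiv0 hF00, hF0e]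

end BH

end


/-- Inhomogeneous boundary Harnack inequality in half-balls. -/
theorem inhomogeneous_boundary_harnack_inequality
    (n : ℕ) (hn : 2 ≤ n) (lam Lam : ℝ) (hlam : 0 < lam) (hLam : lam ≤ Lam)
    (p q d0 K : ℝ) (hq : (n : ℝ) < q) (hp : (n : ℝ) ≤ p) (hpq : p ≤ q)
    (hd0 : 0 < d0) (hd0' : d0 ≤ 1 / 4) (hK : 0 < K) :
    ∃ C : ℝ, 0 < C ∧
      ∀ b f u : EuclideanSpace ℝ (Fin n) → ℝ,
        ContinuousOn b (halfBall n (by omega) 2) →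
        ContinuousOn f (halfBall n (by omega) 2) →
        (∀ x ∈ halfBall n (by omega) 2, 0 ≤ b x) →
        LpNormE n q b (halfBall n (by omega) 2) ≤ ENNReal.ofReal K →
        ContinuousOn u (halfBall n (by omega) 2 ∪ flatB n (by omega) 2) →
        ContDiffOn ℝ 2 u (halfBall n (by omega) 2) →
        (∀ x ∈ halfBall n (by omega) 2,
          pucciMinus n lam Lam (hess n u x) - b x * gradNorm n u x ≤ max (f x) 0) →
        (∀ x ∈ halfBall n (by omega) 2,
          -(max (-f x) 0) ≤ pucciPlus n lam Lam (hess n u x) + b x * gradNorm n u x) →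
        (∀ x ∈ halfBall n (by omega) 2, 0 < u x) →
        (∀ x ∈ flatB n (by omega : 1 ≤ n) 2, u x = 0) →
        ∀ x ∈ halfBall n (by omega : 1 ≤ n) 1,
          ENNReal.ofReal (u x / lastC n (by omega) x)
            ≤ ENNReal.ofReal C *
              (ENNReal.ofReal (⨅ y : halfBall n (by omega : 1 ≤ n) (3 / 2),
                  u y.1 / lastC n (by omega) y.1)
                + LpqNormHB n (by omega) p q d0 2 f) := by
  exact BH.final n _ lam Lam hlam hLam p q d0 K hq hp hd0 hd0' hK
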